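/- arXiv:1901.05037 — 2 statements merged into one kernel-verified Lean document; each statement's English description precedes it below -/
import Mathlib

section
/- Uniqueness of bounded viscosity solutions: Assume (H1)–(H3). If W₁ and W₂ are two bounded viscosity solutions of equation (HJB) (i.e. the usc envelope of each is a viscosity subsolution and the lsc envelope of each is a viscosity supersolution, including the terminal conditions), then W₁* = (W₁)_* = W₂* = (W₂)_* on [0,T]×ℝⁿ; in particular W₁ = W₂ on [0,T)×ℝⁿ and this common function is continuous on [0,T)×ℝⁿ. -/
open scoped BigOperators RealInnerProductSpace
open Filter Matrix Set Topology

noncomputable section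

/-- Euclidean state space ℝⁿ. -/
abbrev EucSp (n : ℕ) := EuclideanSpace ℝ (Fin n)

variable {n d : ℕ}

/-- The parabolic domain `[0, T) × ℝⁿ`. -/
def pdom (T : ℝ) (n : ℕ) : Set (ℝ × EucSp n) := Set.Ico (0 : ℝ) T ×ˢ (Set.univ : Set (EucSp n))

/-- Time derivative `∂ₜφ(t,x)`. -/
def tderiv (φ : ℝ → EucSp n → ℝ) (t : ℝ) (x : EucSp n) : ℝ :=
  deriv (fun s => φ s x) t

/-- Spatial gradient `∇ₓφ(t,x)`. -/
def xgrad (φ : ℝ → EucSp n → ℝ) (t : ℝ) (x : EucSp n) : EucSp n :=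
  gradient (fun y => φ t y) x

/-- Spatial Hessian matrix `∇ₓ²φ(t,x)`. -/
def xhess (φ : ℝ → EucSp n → ℝ) (t : ℝ) (x : EucSp n) : Matrix (Fin n) (Fin n) ℝ :=
  fun i j => fderiv ℝ (fun y => xgrad φ t y) x (EuclideanSpace.single j 1) i

/-- The second order operator `Lφ(t,x) = ⟨b, ∇ₓφ⟩ + ½ tr[σσᵀ ∇ₓ²φ]`. -/
def Lop (b : ℝ → EucSp n → EucSp n) (σ : ℝ → EucSp n → Matrix (Fin n) (Fin d) ℝ)
    (φ : ℝ → EucSp n → ℝ) (t : ℝ) (x : EucSp n) : ℝ :=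
  ⟪b t x, xgrad φ t x⟫ + (1 / 2) * (σ t x * (σ t x)ᵀ * xhess φ t x).trace

/-- `φ` is of class `C^{1,2}` on the set `s`. -/
structure IsC12On (φ : ℝ → EucSp n → ℝ) (s : Set (ℝ × EucSp n)) : Prop where
  cont : ContinuousOn (fun p : ℝ × EucSp n => φ p.1 p.2) s
  diff_t : ∀ p ∈ s, DifferentiableAt ℝ (fun t => φ t p.2) p.1
  cont_t : ContinuousOn (fun p : ℝ × EucSp n => tderiv φ p.1 p.2) s
  diff_x : ∀ p ∈ s, DifferentiableAt ℝ (fun y => φ p.1 y) p.2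
  diff_grad : ∀ p ∈ s, DifferentiableAt ℝ (fun y => xgrad φ p.1 y) p.2
  cont_grad : ContinuousOn (fun p : ℝ × EucSp n => xgrad φ p.1 p.2) s
  cont_hess : ContinuousOn (fun p : ℝ × EucSp n => xhess φ p.1 p.2) s

/-- The intervention operator `(MW)(t,x) = sup_{ξ∈K} [W(t,x+ξ) − c(t,x,ξ)]`. -/
def Mop (K : Set (EucSp n)) (c : ℝ → EucSp n → EucSp n → ℝ) (W : ℝ → EucSp n → ℝ)
    (t : ℝ) (x : EucSp n) : ℝ :=
  sSup ((fun ξ => W t (x + ξ) - c t x ξ) '' K)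

/-- The intervention operator `(M̃W)(t,x) = sup_{ξ∈K} [W(t,x+ξ) − e^t c(t,x,ξ)]`. -/
def Mtop (K : Set (EucSp n)) (c : ℝ → EucSp n → EucSp n → ℝ) (W : ℝ → EucSp n → ℝ)
    (t : ℝ) (x : EucSp n) : ℝ :=
  sSup ((fun ξ => W t (x + ξ) - Real.exp t * c t x ξ) '' K)

/-- Upper semicontinuous envelope, limits taken with `s < T`. -/
def uscEnvT (T : ℝ) (W : ℝ → EucSp n → ℝ) (t : ℝ) (x : EucSp n) : ℝ :=
  limsup (fun p : ℝ × EucSp n => W p.1 p.2) (𝓝[{p : ℝ × EucSp n | p.1 < T}] (t, x))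

/-- Lower semicontinuous envelope, limits taken with `s < T`. -/
def lscEnvT (T : ℝ) (W : ℝ → EucSp n → ℝ) (t : ℝ) (x : EucSp n) : ℝ :=
  liminf (fun p : ℝ × EucSp n => W p.1 p.2) (𝓝[{p : ℝ × EucSp n | p.1 < T}] (t, x))

/-- Quadratic form `⟨Xv, v⟩` of a matrix. -/
def qform (X : Matrix (Fin n) (Fin n) ℝ) (v : EucSp n) : ℝ :=
  ∑ i, ∑ j, X i j * v j * v i

/-- Parabolic subjet membership: `(p,q,X) ∈ J^{2,−}V(t,x)`. -/
def InSubjet (V : ℝ → EucSp n → ℝ) (t : ℝ) (x : EucSp n)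
    (p : ℝ) (q : EucSp n) (X : Matrix (Fin n) (Fin n) ℝ) : Prop :=
  X.IsSymm ∧
  ∀ ε > (0 : ℝ), ∀ᶠ sy : ℝ × EucSp n in 𝓝 (t, x),
    V sy.1 sy.2 ≥ V t x + p * (sy.1 - t) + ⟪q, sy.2 - x⟫
      + (1 / 2) * qform X (sy.2 - x) - ε * (|sy.1 - t| + ‖sy.2 - x‖ ^ 2)

/-- Parabolic superjet membership: `(p,q,X) ∈ J^{2,+}V(t,x)`. -/
def InSuperjet (V : ℝ → EucSp n → ℝ) (t : ℝ) (x : EucSp n)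
    (p : ℝ) (q : EucSp n) (X : Matrix (Fin n) (Fin n) ℝ) : Prop :=
  X.IsSymm ∧
  ∀ ε > (0 : ℝ), ∀ᶠ sy : ℝ × EucSp n in 𝓝 (t, x),
    V sy.1 sy.2 ≤ V t x + p * (sy.1 - t) + ⟪q, sy.2 - x⟫
      + (1 / 2) * qform X (sy.2 - x) + ε * (|sy.1 - t| + ‖sy.2 - x‖ ^ 2)

/-- Viscosity subsolution of equation (HJB). -/
def IsSubHJB (T : ℝ) (b : ℝ → EucSp n → EucSp n) (σ : ℝ → EucSp n → Matrix (Fin n) (Fin d) ℝ)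
    (f : ℝ → EucSp n → ℝ) (g : EucSp n → ℝ) (K : Set (EucSp n))
    (c : ℝ → EucSp n → EucSp n → ℝ) (U : ℝ → EucSp n → ℝ) : Prop :=
  (∀ t₀ x₀, (t₀, x₀) ∈ pdom T n → ∀ φ : ℝ → EucSp n → ℝ, IsC12On φ (pdom T n) →
    IsLocalMaxOn (fun p : ℝ × EucSp n => U p.1 p.2 - φ p.1 p.2) (pdom T n) (t₀, x₀) →
    min (-(tderiv φ t₀ x₀) - Lop b σ φ t₀ x₀ - f t₀ x₀)
        (U t₀ x₀ - Mop K c U t₀ x₀) ≤ 0) ∧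
  (∀ x, U T x ≤ g x)

/-- Viscosity supersolution of equation (HJB). -/
def IsSuperHJB (T : ℝ) (b : ℝ → EucSp n → EucSp n) (σ : ℝ → EucSp n → Matrix (Fin n) (Fin d) ℝ)
    (f : ℝ → EucSp n → ℝ) (g : EucSp n → ℝ) (K : Set (EucSp n))
    (c : ℝ → EucSp n → EucSp n → ℝ) (V : ℝ → EucSp n → ℝ) : Prop :=
  (∀ t₀ x₀, (t₀, x₀) ∈ pdom T n → ∀ φ : ℝ → EucSp n → ℝ, IsC12On φ (pdom T n) →
    IsLocalMinOn (fun p : ℝ × EucSp n => V p.1 p.2 - φ p.1 p.2) (pdom T n) (t₀, x₀) →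
    0 ≤ min (-(tderiv φ t₀ x₀) - Lop b σ φ t₀ x₀ - f t₀ x₀)
        (V t₀ x₀ - Mop K c V t₀ x₀)) ∧
  (∀ x, g x ≤ V T x)

/-- A bounded `W` is a viscosity solution of (HJB) when its usc envelope is a subsolution
and its lsc envelope is a supersolution. -/
def IsViscSolHJB (T : ℝ) (b : ℝ → EucSp n → EucSp n)
    (σ : ℝ → EucSp n → Matrix (Fin n) (Fin d) ℝ)
    (f : ℝ → EucSp n → ℝ) (g : EucSp n → ℝ) (K : Set (EucSp n))
    (c : ℝ → EucSp n → EucSp n → ℝ) (W : ℝ → EucSp n → ℝ) : Prop :=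
  IsSubHJB T b σ f g K c (uscEnvT T W) ∧ IsSuperHJB T b σ f g K c (lscEnvT T W)

section ProxSection

variable {F : Type*} [NormedAddCommGroup F] [InnerProductSpace ℝ F] [FiniteDimensional ℝ F]

/-- `g` is a (convex) subgradient of `f` at `z`. -/
def SubG (f : F → ℝ) (z g : F) : Prop := ∀ z', f z + ⟪g, z' - z⟫ ≤ f z'

lemma SubG_lsc {f : F → ℝ} (hf : ∀ z, ∃ g, SubG f z g) : LowerSemicontinuous f := by
  intro z a ha
  obtain ⟨g, hg⟩ := hf z
  have hc : Continuous fun z' : F => f z + ⟪g, z' - z⟫ := by fun_prop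
  have : ∀ᶠ z' in 𝓝 z, a < f z + ⟪g, z' - z⟫ := by
    apply (hc.tendsto z).eventually_const_lt
    simpa using ha
  filter_upwards [this] with z' hz'
  exact lt_of_lt_of_le hz' (hg z')

lemma prox_exists {f : F → ℝ} (hf : ∀ z, ∃ g, SubG f z g) (x : F) : ∃ z, SubG f z (x - z) := by
  obtain ⟨g, hg⟩ := hf x
  have hlsc : LowerSemicontinuous fun z => f z + (1/2) * ‖z - x‖ ^ 2 :=
    (SubG_lsc hf).add (Continuous.lowerSemicontinuous (by fun_prop))
  obtain ⟨z, hz, hmin⟩ := LowerSemicontinuousOn.exists_isMinOn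
    (s := Metric.closedBall x (2 * ‖g‖)) ⟨x, by simp⟩ (isCompact_closedBall _ _)
    (hlsc.lowerSemicontinuousOn _)
  have hglob : ∀ z', f z + (1/2) * ‖z - x‖ ^ 2 ≤ f z' + (1/2) * ‖z' - x‖ ^ 2 := by
    intro z'
    by_cases h : z' ∈ Metric.closedBall x (2 * ‖g‖)
    · exact hmin h
    · have h1 := hmin (show x ∈ Metric.closedBall x (2 * ‖g‖) by simp)
      simp only [mem_setOf_eq, sub_self, norm_zero] at h1
      have h2 : 2 * ‖g‖ < ‖z' - x‖ := by
        simpa [Metric.mem_closedBall, dist_eq_norm] using h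
      have h3 := hg z'
      have h4 := (abs_le.1 (abs_real_inner_le_norm g (z' - x))).1
      nlinarith [norm_nonneg (z' - x), norm_nonneg g]
  refine ⟨z, fun z' => ?_⟩
  have key : ∀ t : ℝ, 0 < t → t ≤ 1 →
      f z - f z' ≤ ⟪z - x, z' - z⟫ + (1/2) * t * ‖z' - z‖ ^ 2 := by
    intro t ht ht1
    obtain ⟨gw, hgw⟩ := hf (z + t • (z' - z))
    have a1 := hgw z
    have a2 := hgw z'
    have e1 : z - (z + t • (z' - z)) = (-t) • (z' - z) := by module
    have e2 : z' - (z + t • (z' - z)) = (1 - t) • (z' - z) := by module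
    rw [e1, inner_smul_right] at a1
    rw [e2, inner_smul_right] at a2
    have a3 := hglob (z + t • (z' - z))
    have e3 : z + t • (z' - z) - x = (z - x) + t • (z' - z) := by module
    rw [e3, norm_add_sq_real, inner_smul_right, norm_smul, mul_pow, Real.norm_eq_abs, sq_abs] at a3
    have a4 : t * (f z - f z') ≤ t * (⟪z - x, z' - z⟫ + (1/2) * t * ‖z' - z‖ ^ 2) := by
      nlinarith [mul_le_mul_of_nonneg_left a1 (by linarith : (0:ℝ) ≤ 1 - t),
        mul_le_mul_of_nonneg_left a2 ht.le]
    exact le_of_mul_le_mul_left a4 ht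
  have lim : Tendsto (fun t : ℝ => ⟪z - x, z' - z⟫ + (1/2) * t * ‖z' - z‖ ^ 2) (𝓝[>] 0)
      (𝓝 (⟪z - x, z' - z⟫ + (1/2) * 0 * ‖z' - z‖ ^ 2)) := by
    apply Tendsto.mono_left _ nhdsWithin_le_nhds
    exact Continuous.tendsto (by fun_prop) 0
  have := ge_of_tendsto lim (b := f z - f z') (by
    filter_upwards [Ioc_mem_nhdsGT (show (0:ℝ) < 1 by norm_num)] with t ht
    exact key t ht.1 ht.2)
  have e : x - z = -(z - x) := by abel
  rw [e, inner_neg_left]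
  linarith

/-- Monotonicity (firm nonexpansiveness) of the resolvent. -/
lemma prox_mono {f : F → ℝ} {x₁ x₂ z₁ z₂ : F} (h₁ : SubG f z₁ (x₁ - z₁))
    (h₂ : SubG f z₂ (x₂ - z₂)) : ‖z₁ - z₂‖ ^ 2 ≤ ⟪x₁ - x₂, z₁ - z₂⟫ := by
  have a := h₁ z₂
  have b := h₂ z₁
  have e : z₂ - z₁ = -(z₁ - z₂) := by abel
  rw [e, inner_neg_right] at a
  have : ⟪x₁ - x₂, z₁ - z₂⟫ - ‖z₁ - z₂‖ ^ 2 =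
      ⟪x₁ - z₁, z₁ - z₂⟫ - ⟪x₂ - z₂, z₁ - z₂⟫ := by
    rw [← real_inner_self_eq_norm_sq, ← inner_sub_left, ← inner_sub_left]
    congr 1; abel
  linarith

lemma prox_lip {f : F → ℝ} {x₁ x₂ z₁ z₂ : F} (h₁ : SubG f z₁ (x₁ - z₁))
    (h₂ : SubG f z₂ (x₂ - z₂)) : ‖z₁ - z₂‖ ≤ ‖x₁ - x₂‖ := by
  have := prox_mono h₁ h₂
  have h := real_inner_le_norm (x₁ - x₂) (z₁ - z₂)
  by_contra hc
  push Not at hc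
  nlinarith [norm_nonneg (x₁ - x₂), norm_nonneg (z₁ - z₂)]

/-- Lipschitz bound for the inverse of the resolvent at a point touched from above. -/
lemma prox_inv_bound {f : F → ℝ} {x y x' z : F} {C : ℝ} (hC : 0 ≤ C)
    (hy : SubG f y (x - y)) (hup : ∀ z, f z ≤ f y + ⟪x - y, z - y⟫ + C * ‖z - y‖ ^ 2)
    (hz : SubG f z (x' - z)) : ‖x' - x‖ ≤ (1 + 4 * C) * ‖z - y‖ := by
  set h := z - y with hh
  set v := (x' - z) - (x - y) with hv
  have hvb : ‖v‖ ≤ 4 * C * ‖h‖ := by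
    by_cases hv0 : ‖v‖ = 0
    · rw [hv0]; positivity
    have hvpos : 0 < ‖v‖ := lt_of_le_of_ne (norm_nonneg _) (Ne.symm hv0)
    have key : ∀ u : F, ⟪v, u⟫ ≤ C * ‖h + u‖ ^ 2 := by
      intro u
      have a1 := hz (z + u)
      have a2 := hup (z + u)
      have a3 := hy z
      have e1 : z + u - z = u := by abel
      have e2 : z + u - y = h + u := by rw [hh]; abel
      rw [e1] at a1
      rw [e2, inner_add_right] at a2
      rw [← hh] at a3
      have e3 : ⟪v, u⟫ = ⟪x' - z, u⟫ - ⟪x - y, u⟫ := by rw [hv, inner_sub_left]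
      linarith
    rcases eq_or_ne h 0 with h0 | h0
    · -- then v must vanish
      have kk : ∀ t : ℝ, 0 < t → ‖v‖ ^ 2 ≤ C * t * ‖v‖ ^ 2 := by
        intro t ht
        have := key (t • v)
        rw [h0, zero_add, inner_smul_right, real_inner_self_eq_norm_sq, norm_smul, mul_pow,
          Real.norm_eq_abs, sq_abs] at this
        have : t * ‖v‖ ^ 2 ≤ t * (C * t * ‖v‖ ^ 2) := by linarith
        exact le_of_mul_le_mul_left this ht
      have h1 := kk (1 / (2 * (C + 1))) (by positivity)
      have h2 : C * (1 / (2 * (C + 1))) ≤ 1 / 2 := by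
        rw [mul_one_div, div_le_div_iff₀ (by positivity) (by norm_num)]; linarith
      nlinarith [sq_nonneg ‖v‖, pow_pos hvpos 2]
    · have hpos : 0 < ‖h‖ := norm_pos_iff.2 h0
      have k1 := key ((‖h‖ / ‖v‖) • v)
      rw [inner_smul_right, real_inner_self_eq_norm_sq] at k1
      have k2 : ‖h + (‖h‖ / ‖v‖) • v‖ ≤ 2 * ‖h‖ := by
        refine (norm_add_le _ _).trans ?_
        rw [norm_smul, Real.norm_eq_abs, abs_of_nonneg (by positivity), div_mul_cancel₀ _ hv0]
        linarith
      have k3 : ‖h + (‖h‖ / ‖v‖) • v‖ ^ 2 ≤ (2 * ‖h‖) ^ 2 := by gcongr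
      have k4 : ‖h‖ / ‖v‖ * ‖v‖ ^ 2 = ‖h‖ * ‖v‖ := by field_simp
      rw [k4] at k1
      have k5 : ‖h‖ * ‖v‖ ≤ ‖h‖ * (4 * C * ‖h‖) := by
        nlinarith [mul_le_mul_of_nonneg_left k3 hC]
      exact le_of_mul_le_mul_left k5 hpos
  have e : x' - x = h + v := by rw [hh, hv]; abel
  rw [e]
  refine (norm_add_le _ _).trans ?_
  linarith

end ProxSection

section ProxSection2

variable {F : Type*} [NormedAddCommGroup F] [InnerProductSpace ℝ F] [FiniteDimensional ℝ F]

/-- Moreau envelope along a resolvent `P`. -/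
def moreauE (f : F → ℝ) (P : F → F) (x : F) : ℝ := f (P x) + (1/2) * ‖x - P x‖ ^ 2

lemma moreauE_le {f : F → ℝ} {P : F → F} (hP : ∀ x, SubG f (P x) (x - P x)) (x z : F) :
    moreauE f P x ≤ f z + (1/2) * ‖x - z‖ ^ 2 := by
  have a := hP x z
  have e : x - z = (x - P x) - (z - P x) := by abel
  rw [e, norm_sub_sq_real]
  unfold moreauE
  nlinarith [sq_nonneg ‖z - P x‖]

lemma moreauE_upper {f : F → ℝ} {P : F → F} (hP : ∀ x, SubG f (P x) (x - P x)) (x x' : F) :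
    moreauE f P x' ≤ moreauE f P x + ⟪x - P x, x' - x⟫ + (1/2) * ‖x' - x‖ ^ 2 := by
  have a := moreauE_le hP x' (P x)
  have e : x' - P x = (x - P x) + (x' - x) := by abel
  rw [e, norm_add_sq_real] at a
  unfold moreauE at a ⊢
  linarith

lemma moreauE_lower {f : F → ℝ} {P : F → F} (hP : ∀ x, SubG f (P x) (x - P x)) (x x' : F) :
    moreauE f P x + ⟪x - P x, x' - x⟫ - (1/2) * ‖x' - x‖ ^ 2 ≤ moreauE f P x' := by
  have a := moreauE_upper hP x' x
  have e : x - x' = -(x' - x) := by abel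
  rw [e, inner_neg_right, norm_neg] at a
  have l := prox_lip (hP x') (hP x)
  have e2 : ⟪x' - P x', x' - x⟫ - ⟪x - P x, x' - x⟫ = ‖x' - x‖ ^ 2 - ⟪P x' - P x, x' - x⟫ := by
    rw [← real_inner_self_eq_norm_sq, ← inner_sub_left, ← inner_sub_left]
    congr 1; abel
  have b := real_inner_le_norm (P x' - P x) (x' - x)
  nlinarith [norm_nonneg (x' - x)]

lemma moreauE_hasFDerivAt {f : F → ℝ} {P : F → F} (hP : ∀ x, SubG f (P x) (x - P x)) (x : F) :
    HasFDerivAt (moreauE f P) (innerSL ℝ (x - P x)) x := by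
  rw [hasFDerivAt_iff_isLittleO]
  refine Asymptotics.IsLittleO.of_bound ?_
  intro c hc
  filter_upwards [Metric.ball_mem_nhds x hc] with x' hx'
  have h1 : ‖x' - x‖ < c := by simpa [dist_eq_norm] using hx'
  have u := moreauE_upper hP x x'
  have l := moreauE_lower hP x x'
  rw [innerSL_apply_apply, Real.norm_eq_abs, abs_le]
  constructor <;> nlinarith [norm_nonneg (x' - x)]

lemma moreauE_expansion {f : F → ℝ} {P : F → F} (hP : ∀ x, SubG f (P x) (x - P x)) {x : F}
    {D : F →L[ℝ] F} (hD : HasFDerivAt P D x) (ε : ℝ) (hε : 0 < ε) :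
    ∃ ρ > 0, ∀ k : F, ‖k‖ ≤ ρ →
      ‖P (x + k) - P x - D k‖ ≤ ε * ‖k‖ ∧
      |moreauE f P (x + k) - moreauE f P x - ⟪x - P x, k⟫ - (1/2) * ⟪k - D k, k⟫|
        ≤ ε * ‖k‖ ^ 2 := by
  have h := hD.isLittleO.def hε
  obtain ⟨ρ, hρ, hb⟩ := Metric.eventually_nhds_iff_ball.1 h
  refine ⟨ρ / 2, by positivity, ?_⟩
  have hb' : ∀ k : F, ‖k‖ ≤ ρ / 2 → ‖P (x + k) - P x - D k‖ ≤ ε * ‖k‖ := by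
    intro k hk
    have := hb (x + k) (by simp [dist_eq_norm]; linarith)
    simpa using this
  intro k hk
  refine ⟨hb' k hk, ?_⟩
  set φ : ℝ → ℝ := fun t => moreauE f P (x + t • k) - t * ⟪x - P x, k⟫ - (1/2) * t ^ 2 * ⟪k - D k, k⟫
  have hder : ∀ t : ℝ, HasDerivAt φ (⟪x + t • k - P (x + t • k), k⟫ - ⟪x - P x, k⟫
      - t * ⟪k - D k, k⟫) t := by
    intro t
    have h1 : HasDerivAt (fun t : ℝ => x + t • k) k t := by
      simpa using ((hasDerivAt_id t).smul_const k).const_add x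
    have h2 := (moreauE_hasFDerivAt hP (x + t • k)).comp_hasDerivAt t h1
    have h3 : HasDerivAt (fun t : ℝ => t * ⟪x - P x, k⟫) (⟪x - P x, k⟫) t := by
      simpa using (hasDerivAt_id t).mul_const ⟪x - P x, k⟫
    have h4 : HasDerivAt (fun t : ℝ => (1/2) * t ^ 2 * ⟪k - D k, k⟫) (t * ⟪k - D k, k⟫) t := by
      generalize ⟪k - D k, k⟫ = r
      have := ((hasDerivAt_pow 2 t).const_mul (1/2 : ℝ)).mul_const r
      have e : t * r = (1/2 : ℝ) * (((2:ℕ):ℝ) * t ^ (2 - 1)) * r := by norm_num; left; ring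
      rw [e]
      exact this
    exact (h2.sub h3).sub h4
  have hbd : ∀ t ∈ Ico (0:ℝ) 1, ‖⟪x + t • k - P (x + t • k), k⟫ - ⟪x - P x, k⟫
      - t * ⟪k - D k, k⟫‖ ≤ ε * ‖k‖ ^ 2 := by
    intro t ht
    have e : ⟪x + t • k - P (x + t • k), k⟫ - ⟪x - P x, k⟫ - t * ⟪k - D k, k⟫
        = - ⟪P (x + t • k) - P x - D (t • k), k⟫ := by
      rw [← real_inner_smul_left, ← inner_sub_left, ← inner_sub_left, ← inner_neg_left, map_smul]
      congr 1; module
    have hn : ‖t • k‖ ≤ ‖k‖ := by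
      rw [norm_smul, Real.norm_eq_abs, abs_of_nonneg ht.1]
      nlinarith [norm_nonneg k, ht.2]
    have := hb' (t • k) (hn.trans hk)
    rw [e, norm_neg, Real.norm_eq_abs]
    refine (abs_real_inner_le_norm _ _).trans ?_
    nlinarith [norm_nonneg k, mul_le_mul_of_nonneg_left hn hε.le]
  have := norm_image_sub_le_of_norm_deriv_le_segment_01'
    (f := φ) (fun t _ => (hder t).hasDerivWithinAt) hbd
  rw [Real.norm_eq_abs] at this
  convert this using 2
  simp [φ]
  ring

lemma moreauE_symm {f : F → ℝ} {P : F → F} (hP : ∀ x, SubG f (P x) (x - P x)) {x : F}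
    {D : F →L[ℝ] F} (hD : HasFDerivAt P D x) (u v : F) : ⟪D u, v⟫ = ⟪u, D v⟫ := by
  have h1 : HasFDerivAt (fun x => innerSL ℝ (x - P x))
      ((innerSL ℝ).comp (ContinuousLinearMap.id ℝ F - D)) x :=
    (innerSL ℝ).hasFDerivAt.comp x ((hasFDerivAt_id x).sub hD)
  have := second_derivative_symmetric (moreauE_hasFDerivAt hP) h1 u v
  rw [ContinuousLinearMap.comp_apply, ContinuousLinearMap.comp_apply, innerSL_apply_apply,
    innerSL_apply_apply, _root_.sub_apply, _root_.sub_apply, inner_sub_left, inner_sub_left,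
    ContinuousLinearMap.id_apply, ContinuousLinearMap.id_apply, real_inner_comm u v] at this
  rw [real_inner_comm (D v) u]
  linarith

lemma prox_expansion {f : F → ℝ} (hf : ∀ z, ∃ g, SubG f z g) {P : F → F}
    (hP : ∀ x, SubG f (P x) (x - P x)) {x : F}
    {D : F →L[ℝ] F} (hD : HasFDerivAt P D x) {C : ℝ} (hC : 0 ≤ C)
    (hup : ∀ z, f z ≤ f (P x) + ⟪x - P x, z - P x⟫ + C * ‖z - P x‖ ^ 2) :
    ∃ H : F →L[ℝ] F, (∀ u v, ⟪H u, v⟫ = ⟪u, H v⟫) ∧ ∀ ε > 0, ∃ ρ > 0, ∀ h : F, ‖h‖ ≤ ρ →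
      |f (P x + h) - f (P x) - ⟪x - P x, h⟫ - (1/2) * ⟪H h, h⟫| ≤ ε * ‖h‖ ^ 2 := by
  have hsymm := moreauE_symm hP hD
  set L := 1 + 4 * C with hL
  have hLpos : 0 < L := by positivity
  -- lower bound on D
  have hlow : ∀ k, ‖k‖ ≤ L * ‖D k‖ := by
    intro k
    refine le_of_forall_pos_le_add fun η hη => ?_
    obtain ⟨ρ, hρ, hb⟩ := moreauE_expansion hP hD (η / (L * (‖k‖ + 1))) (by positivity)
    set t := ρ / (‖k‖ + 1) with ht
    have htpos : 0 < t := by positivity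
    have hnk : ‖t • k‖ = t * ‖k‖ := by
      rw [norm_smul, Real.norm_eq_abs, abs_of_pos htpos]
    have h1 := (hb (t • k) (by
      rw [hnk, ht, div_mul_eq_mul_div, div_le_iff₀ (by positivity)]
      nlinarith [norm_nonneg k])).1
    have h2 := prox_inv_bound hC (hP x) hup (hP (x + t • k))
    rw [add_sub_cancel_left, ← hL] at h2
    have h3 : ‖P (x + t • k) - P x‖ ≤ ‖D (t • k)‖ + ‖P (x + t • k) - P x - D (t • k)‖ := by
      have := norm_add_le (D (t • k)) (P (x + t • k) - P x - D (t • k))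
      simpa using this
    have h4 : ‖D (t • k)‖ = t * ‖D k‖ := by
      rw [map_smul, norm_smul, Real.norm_eq_abs, abs_of_pos htpos]
    rw [hnk] at h1 h2
    rw [h4] at h3
    have h5 : t * ‖k‖ ≤ t * (L * ‖D k‖ + L * (η / (L * (‖k‖ + 1)) * ‖k‖)) := by
      calc t * ‖k‖ ≤ L * ‖P (x + t • k) - P x‖ := h2
        _ ≤ L * (t * ‖D k‖ + η / (L * (‖k‖ + 1)) * (t * ‖k‖)) := by gcongr; linarith
        _ = _ := by ring
    have h6 := le_of_mul_le_mul_left h5 htpos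
    have h7 : L * (η / (L * (‖k‖ + 1)) * ‖k‖) ≤ η := by
      have : L * (η / (L * (‖k‖ + 1)) * ‖k‖) = η * (‖k‖ / (‖k‖ + 1)) := by
        field_simp
      rw [this]
      have : ‖k‖ / (‖k‖ + 1) ≤ 1 := by
        rw [div_le_one (by positivity)]; linarith
      nlinarith
    linarith
  have hpos : ∀ k, 0 ≤ ⟪D k, k⟫ := by
    intro k
    refine le_of_forall_pos_le_add fun η hη => ?_
    obtain ⟨ρ, hρ, hb⟩ := moreauE_expansion hP hD (η / ((‖k‖ ^ 2 + 1))) (by positivity)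
    set t := ρ / (‖k‖ + 1) with ht
    have htpos : 0 < t := by positivity
    have hnk : ‖t • k‖ = t * ‖k‖ := by
      rw [norm_smul, Real.norm_eq_abs, abs_of_pos htpos]
    have h1 := (hb (t • k) (by
      rw [hnk, ht, div_mul_eq_mul_div, div_le_iff₀ (by positivity)]
      nlinarith [norm_nonneg k])).1
    have h2 := prox_mono (hP (x + t • k)) (hP x)
    rw [add_sub_cancel_left] at h2
    have h3 : ⟪t • k, P (x + t • k) - P x⟫ = t ^ 2 * ⟪D k, k⟫ +
        ⟪t • k, P (x + t • k) - P x - D (t • k)⟫ := by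
      rw [inner_sub_right (t • k) _ (D (t • k)), map_smul, inner_smul_left (𝕜 := ℝ) k (t • D k),
        inner_smul_right, real_inner_comm k (D k)]
      simp; ring
    have h4 := (real_inner_le_norm (t • k) (P (x + t • k) - P x - D (t • k)))
    rw [hnk] at h1 h4
    have h5 : 0 ≤ t ^ 2 * (⟪D k, k⟫ + η / (‖k‖ ^ 2 + 1) * ‖k‖ ^ 2) := by
      have : t * ‖k‖ * ‖P (x + t • k) - P x - D (t • k)‖ ≤
        t * ‖k‖ * (η / (‖k‖ ^ 2 + 1) * (t * ‖k‖)) := by gcongr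
      nlinarith [sq_nonneg ‖P (x + t • k) - P x‖]
    have h6 : 0 ≤ ⟪D k, k⟫ + η / (‖k‖ ^ 2 + 1) * ‖k‖ ^ 2 := by
      by_contra hc
      push Not at hc
      nlinarith [mul_neg_of_pos_of_neg (pow_pos htpos 2) hc]
    have h7 : η / (‖k‖ ^ 2 + 1) * ‖k‖ ^ 2 ≤ η := by
      rw [div_mul_eq_mul_div, div_le_iff₀ (by positivity)]; nlinarith
    linarith
  have hinj : Function.Injective D := by
    rw [injective_iff_map_eq_zero]
    intro k hk
    have := hlow k
    rw [hk, norm_zero, mul_zero] at this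
    exact norm_le_zero_iff.1 this
  obtain ⟨B, hB⟩ : ∃ B : F →L[ℝ] F, ∀ h, D (B h) = h := by
    let e := LinearEquiv.ofInjectiveEndo (D : F →ₗ[ℝ] F) hinj
    refine ⟨LinearMap.toContinuousLinearMap (e.symm : F →ₗ[ℝ] F), fun h => ?_⟩
    have := e.apply_symm_apply h
    exact this
  have hBsymm : ∀ u v, ⟪B u, v⟫ = ⟪u, B v⟫ := by
    intro u v
    have := hsymm (B u) (B v)
    rw [hB, hB] at this
    exact this.symm
  have hBn : ∀ h, ‖B h‖ ≤ L * ‖h‖ := by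
    intro h
    have := hlow (B h)
    rwa [hB] at this
  refine ⟨B - ContinuousLinearMap.id ℝ F, ?_, ?_⟩
  · intro u v
    simp [inner_sub_left, inner_sub_right, hBsymm]
  · intro ε hε
    obtain ⟨ρ, hρ, hb⟩ := moreauE_expansion hP hD (ε / L ^ 2) (by positivity)
    refine ⟨ρ / L, by positivity, fun h hh => ?_⟩
    have hhρ : L * ‖h‖ ≤ ρ := by
      rw [le_div_iff₀ hLpos] at hh; linarith
    have algebra_id : ∀ k : F, (1/2) * ⟪k - D k, k⟫ - (1/2) * ‖k - h‖ ^ 2 =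
        (1/2) * ⟪(B - ContinuousLinearMap.id ℝ F) h, h⟫ - (1/2) * ⟪D (k - B h), k - B h⟫ := by
      intro k
      rw [map_sub, hB, norm_sub_sq_real]
      simp only [inner_sub_left, inner_sub_right, _root_.sub_apply,
        ContinuousLinearMap.id_apply, real_inner_self_eq_norm_sq]
      have : ⟪D k, B h⟫ = ⟪k, h⟫ := by rw [hsymm, hB]
      rw [this, real_inner_comm k h, real_inner_comm (B h) h]
      ring
    have errb : ∀ k : F, ‖k‖ ≤ L * ‖h‖ → ε / L ^ 2 * ‖k‖ ^ 2 ≤ ε * ‖h‖ ^ 2 := by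
      intro k hk
      calc ε / L ^ 2 * ‖k‖ ^ 2 ≤ ε / L ^ 2 * (L * ‖h‖) ^ 2 := by gcongr
        _ = ε * ‖h‖ ^ 2 := by field_simp
    have valk : ∀ k : F, moreauE f P x + ⟪x - P x, k⟫ - (1/2) * ‖x + k - (P x + h)‖ ^ 2
        = f (P x) + ⟪x - P x, h⟫ - (1/2) * ‖k - h‖ ^ 2 := by
      intro k
      have e : x + k - (P x + h) = (x - P x) + (k - h) := by abel
      rw [e, norm_add_sq_real, inner_sub_right]
      unfold moreauE
      ring
    rw [abs_le]
    constructor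
    · have h1 := (abs_le.1 (hb (B h) ((hBn h).trans hhρ)).2).1
      have h2 := errb (B h) (hBn h)
      have h3 := moreauE_le hP (x + B h) (P x + h)
      have h4 := valk (B h)
      have h5 := algebra_id (B h)
      rw [sub_self, map_zero, inner_zero_left, mul_zero, sub_zero] at h5
      linarith
    · obtain ⟨g, hg⟩ := hf (P x + h)
      have hx' : SubG f (P x + h) ((P x + h + g) - (P x + h)) := by simpa using hg
      set k := (P x + h + g) - x with hk
      have hxk : P x + h + g = x + k := by rw [hk]; abel
      rw [hxk] at hx'
      have hPz : P (x + k) = P x + h := by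
        have := prox_lip (hP (x + k)) hx'
        simp only [sub_self, norm_zero] at this
        exact sub_eq_zero.1 (norm_le_zero_iff.1 this)
      have hkb : ‖k‖ ≤ L * ‖h‖ := by
        have := prox_inv_bound hC (hP x) hup hx'
        simpa [← hL] using this
      have h1 := (abs_le.1 (hb k (hkb.trans hhρ)).2).2
      have h2 := errb k hkb
      have h3 : moreauE f P (x + k) = f (P x + h) + (1/2) * ‖x + k - (P x + h)‖ ^ 2 := by
        unfold moreauE; rw [hPz]
      have h4 := valk k
      have h5 := algebra_id k
      have h6 := hpos (k - B h)
      linarith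

end ProxSection2

section ProxSection3

variable {F : Type*} [NormedAddCommGroup F] [InnerProductSpace ℝ F] [FiniteDimensional ℝ F]

lemma SubG_continuous {f : F → ℝ} (hf : ∀ z, ∃ g, SubG f z g) : Continuous f := by
  have hconv : ConvexOn ℝ univ f := by
    refine ⟨convex_univ, ?_⟩
    intro x _ y _ a b ha hb hab
    obtain ⟨g, hg⟩ := hf (a • x + b • y)
    have h1 := hg x
    have h2 := hg y
    have hx : x - (a • x + b • y) = b • (x - y) := by
      have : a = 1 - b := by linarith
      rw [this]; module
    have hy : y - (a • x + b • y) = (-a) • (x - y) := by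
      have : b = 1 - a := by linarith
      rw [this]; module
    rw [hx, inner_smul_right] at h1
    rw [hy, inner_smul_right] at h2
    have h3 := mul_le_mul_of_nonneg_left h1 ha
    have h4 := mul_le_mul_of_nonneg_left h2 hb
    simp only [smul_eq_mul]
    have : f (a • x + b • y) = a * f (a • x + b • y) + b * f (a • x + b • y) := by
      rw [← add_mul, hab, one_mul]
    linarith
  have := hconv.continuousOn_interior
  rw [interior_univ, continuousOn_univ] at this
  exact this

lemma eq_zero_of_inner_le_sq {v : F} {c : ℝ} (h : ∀ u : F, ⟪v, u⟫ ≤ c * ‖u‖ ^ 2) : v = 0 := by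
  by_contra hv
  have hvpos : 0 < ‖v‖ ^ 2 := by positivity
  set t : ℝ := 1 / (2 * (|c| + 1)) with ht
  have htpos : 0 < t := by positivity
  have := h (t • v)
  rw [inner_smul_right, real_inner_self_eq_norm_sq, norm_smul, mul_pow, Real.norm_eq_abs,
    sq_abs] at this
  have h2 : t * ‖v‖ ^ 2 ≤ t * (c * t * ‖v‖ ^ 2) := by linarith
  have h3 := le_of_mul_le_mul_left h2 htpos
  have h4 : c * t ≤ 1 / 2 := by
    rw [ht, mul_one_div, div_le_div_iff₀ (by positivity) (by norm_num)]
    have := le_abs_self c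
    linarith
  nlinarith

/-- If `q` is homogeneous of degree two and eventually below `c ‖h‖²`, it is below everywhere. -/
lemma quad_le_of_small {H : F →L[ℝ] F} {c ρ : ℝ} (hρ : 0 < ρ)
    (h : ∀ u : F, ‖u‖ ≤ ρ → ⟪H u, u⟫ ≤ c * ‖u‖ ^ 2) (u : F) : ⟪H u, u⟫ ≤ c * ‖u‖ ^ 2 := by
  set t : ℝ := ρ / (‖u‖ + 1) with ht
  have htpos : 0 < t := by positivity
  have hn : ‖t • u‖ = t * ‖u‖ := by rw [norm_smul, Real.norm_eq_abs, abs_of_pos htpos]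
  have := h (t • u) (by
    rw [hn, ht, div_mul_eq_mul_div, div_le_iff₀ (by positivity)]
    nlinarith [norm_nonneg u])
  rw [hn, map_smul, inner_smul_left, inner_smul_right] at this
  simp only [conj_trivial] at this
  have h2 : t ^ 2 * ⟪H u, u⟫ ≤ t ^ 2 * (c * ‖u‖ ^ 2) := by linarith
  exact le_of_mul_le_mul_left h2 (by positivity)

/-- Jensen lemma combined with Alexandrov theorem. -/
theorem jensen_alexandrov (w : F → ℝ) (C : ℝ) (hC : 0 ≤ C)
    (hw : ∀ z, ∃ g, ∀ z', w z + ⟪g, z' - z⟫ - C * ‖z' - z‖ ^ 2 ≤ w z') (zh : F)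
    (hmax : ∀ z, w z ≤ w zh) (δ : ℝ) (hδ : 0 < δ) :
    ∃ (z p : F) (H : F →L[ℝ] F), ‖z - zh‖ ≤ δ ∧ ‖p‖ ≤ δ ∧ (∀ u v, ⟪H u, v⟫ = ⟪u, H v⟫) ∧
      (∀ h, ⟪H h, h⟫ ≤ δ * ‖h‖ ^ 2) ∧
      ∀ ε > 0, ∃ ρ > 0, ∀ h : F, ‖h‖ ≤ ρ →
        |w (z + h) - w z - ⟪p, h⟫ - (1/2) * ⟪H h, h⟫| ≤ ε * ‖h‖ ^ 2 := by
  set f : F → ℝ := fun z => w z + C * ‖z‖ ^ 2 with hfdef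
  have hsq : ∀ z z' : F, ‖z'‖ ^ 2 = ‖z‖ ^ 2 + 2 * ⟪z, z' - z⟫ + ‖z' - z‖ ^ 2 := by
    intro z z'
    have := norm_add_sq_real z (z' - z)
    rwa [add_sub_cancel] at this
  have hf : ∀ z, ∃ g, SubG f z g := by
    intro z
    obtain ⟨g, hg⟩ := hw z
    refine ⟨g + (2 * C) • z, fun z' => ?_⟩
    have h1 := hg z'
    have h2 := hsq z z'
    simp only [hfdef]
    rw [inner_add_left, real_inner_smul_left, h2]
    linarith
  have hfc := SubG_continuous hf
  have hwc : Continuous w := by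
    have : w = fun z => f z - C * ‖z‖ ^ 2 := by ext z; simp [hfdef]
    rw [this]; fun_prop
  choose P hP using prox_exists hf
  have hPlip : LipschitzWith 1 P := by
    refine LipschitzWith.of_dist_le_mul fun x y => ?_
    rw [dist_eq_norm, dist_eq_norm, NNReal.coe_one, one_mul]
    exact prox_lip (hP x) (hP y)
  set a := δ / 4 with ha
  have hapos : 0 < a := by positivity
  set Q : F → F := fun x => x - P x - (2 * C) • P x - (2 * a) • (P x - zh) with hQ
  obtain ⟨K, hQlip⟩ : ∃ K, LipschitzWith K Q := by
    refine ⟨_, ((LipschitzWith.id.sub hPlip).sub ((lipschitzWith_smul (2 * C)).comp hPlip)).sub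
      ((lipschitzWith_smul (2 * a)).comp (hPlip.sub (LipschitzWith.const zh)))⟩
  set r := min (δ / 3) (a * δ) with hr
  have hrpos : 0 < r := by positivity
  -- choose the slope
  obtain ⟨p, hpr, hpd⟩ : ∃ p : F, ‖p‖ < r ∧ ∀ x, Q x = p → DifferentiableAt ℝ P x := by
    letI : MeasurableSpace F := borel F
    haveI : BorelSpace F := ⟨rfl⟩
    have hae := hPlip.ae_differentiableAt
      (μ := MeasureTheory.Measure.hausdorffMeasure (Module.finrank ℝ F : ℝ))
    set N := {x | ¬ DifferentiableAt ℝ P x} with hN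
    have hN0 : MeasureTheory.Measure.hausdorffMeasure (Module.finrank ℝ F : ℝ) N = 0 := hae
    have hQN : MeasureTheory.Measure.hausdorffMeasure (Module.finrank ℝ F : ℝ) (Q '' N) = 0 := by
      have := hQlip.hausdorffMeasure_image_le (d := (Module.finrank ℝ F : ℝ)) (by positivity) N
      rw [hN0, mul_zero] at this
      exact le_antisymm this bot_le
    have hball : 0 < MeasureTheory.Measure.hausdorffMeasure (Module.finrank ℝ F : ℝ)
        (Metric.ball (0:F) r) := Metric.measure_ball_pos _ _ hrpos
    by_contra hcon
    push Not at hcon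
    have hsub : Metric.ball (0:F) r ⊆ Q '' N := by
      intro p hp
      obtain ⟨x, hx, hxd⟩ := hcon p (by simpa using hp)
      exact ⟨x, hxd, hx⟩
    have := (MeasureTheory.measure_mono hsub).trans hQN.le
    exact absurd this (not_le.2 hball)
  -- maximizer
  have hψc : Continuous fun z => w z - a * ‖z - zh‖ ^ 2 - ⟪p, z - zh⟫ := by fun_prop
  obtain ⟨y, hy, hymax⟩ := (isCompact_closedBall zh (‖p‖ / a)).exists_isMaxOn
    ⟨zh, by simp; positivity⟩ hψc.continuousOn
  have hyb : ‖y - zh‖ ≤ ‖p‖ / a := by simpa [dist_eq_norm] using hy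
  have hyglob : ∀ z, w z - a * ‖z - zh‖ ^ 2 - ⟪p, z - zh⟫
      ≤ w y - a * ‖y - zh‖ ^ 2 - ⟪p, y - zh⟫ := by
    intro z
    by_cases hz : z ∈ Metric.closedBall zh (‖p‖ / a)
    · exact hymax hz
    · have h1 := hymax (show zh ∈ Metric.closedBall zh (‖p‖ / a) by simp; positivity)
      simp only [sub_self, norm_zero, inner_zero_right] at h1
      have h1 : w zh ≤ w y - a * ‖y - zh‖ ^ 2 - ⟪p, y - zh⟫ := by simpa using h1
      have h2 : ‖p‖ / a < ‖z - zh‖ := by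
        simpa [Metric.mem_closedBall, dist_eq_norm] using hz
      rw [div_lt_iff₀ hapos] at h2
      have h3 := (abs_le.1 (abs_real_inner_le_norm p (z - zh))).1
      nlinarith [norm_nonneg (z - zh), hmax z]
  set g0 := p + (2 * C) • y + (2 * a) • (y - zh) with hg0
  set x := g0 + y with hx
  have hwup : ∀ z, w z ≤ w y + ⟪p + (2 * a) • (y - zh), z - y⟫ + a * ‖z - y‖ ^ 2 := by
    intro z
    have h1 := hyglob z
    have e1 : z - zh = (y - zh) + (z - y) := by abel
    rw [e1, norm_add_sq_real, inner_add_right] at h1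
    rw [inner_add_left, real_inner_smul_left]
    linarith
  have hup0 : ∀ z, f z ≤ f y + ⟪g0, z - y⟫ + (C + a) * ‖z - y‖ ^ 2 := by
    intro z
    have h1 := hwup z
    have h2 := hsq y z
    simp only [hfdef]
    rw [hg0, inner_add_left, inner_add_left, real_inner_smul_left, h2]
    rw [inner_add_left] at h1
    linarith
  have hsub : SubG f y g0 := by
    obtain ⟨g, hg⟩ := hf y
    have : g - g0 = 0 := by
      apply eq_zero_of_inner_le_sq (c := C + a)
      intro u
      have h1 := hg (y + u)
      have h2 := hup0 (y + u)
      rw [add_sub_cancel_left] at h1 h2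
      rw [inner_sub_left]
      linarith
    rw [sub_eq_zero] at this
    rwa [← this]
  have hxy : x - y = g0 := by rw [hx]; abel
  have hPx : P x = y := by
    have := prox_lip (hP x) (show SubG f y (x - y) by rwa [hxy])
    simp only [sub_self, norm_zero] at this
    exact sub_eq_zero.1 (norm_le_zero_iff.1 this)
  have hQx : Q x = p := by
    simp only [hQ]
    rw [hPx, hxy, hg0]
    abel
  have hD := (hpd x hQx).hasFDerivAt
  obtain ⟨Hf, hHs, hHe⟩ := prox_expansion hf hP hD (C := C + a) (by positivity) (by
    rw [hPx, hxy]; exact hup0)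
  rw [hPx, hxy] at hHe
  have hexp : ∀ ε > 0, ∃ ρ > 0, ∀ h : F, ‖h‖ ≤ ρ →
      |w (y + h) - w y - ⟪p + (2 * a) • (y - zh), h⟫ -
        (1/2) * ⟪(Hf - (2 * C) • ContinuousLinearMap.id ℝ F) h, h⟫| ≤ ε * ‖h‖ ^ 2 := by
    intro ε hε
    obtain ⟨ρ, hρ, hb⟩ := hHe ε hε
    refine ⟨ρ, hρ, fun h hh => ?_⟩
    convert hb h hh using 2
    have h2 := norm_add_sq_real y h
    simp only [hfdef, hg0]
    rw [h2, _root_.sub_apply, inner_sub_left, _root_.smul_apply,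
      ContinuousLinearMap.id_apply, real_inner_smul_left, real_inner_self_eq_norm_sq,
      inner_add_left, inner_add_left, inner_add_left, real_inner_smul_left _ _ (2 * C)]
    ring
  have hpr1 : ‖p‖ ≤ δ / 3 := hpr.le.trans (min_le_left _ _)
  have hpr2 : ‖p‖ / a ≤ δ := by
    rw [div_le_iff₀ hapos]
    have := hpr.le.trans (min_le_right _ _)
    linarith
  refine ⟨y, p + (2 * a) • (y - zh), Hf - (2 * C) • ContinuousLinearMap.id ℝ F,
    hyb.trans hpr2, ?_, ?_, ?_, hexp⟩
  · refine (norm_add_le _ _).trans ?_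
    rw [norm_smul, Real.norm_eq_abs, abs_of_pos (by positivity)]
    rw [le_div_iff₀ hapos] at hyb
    linarith
  · intro u v
    rw [_root_.sub_apply, _root_.sub_apply, inner_sub_left, inner_sub_right, hHs]
    simp [real_inner_smul_left, real_inner_smul_right]
  · obtain ⟨ρ, hρ, hb⟩ := hexp a hapos
    apply quad_le_of_small hρ
    intro h hh
    have h1 := (abs_le.1 (hb h hh)).1
    have h2 := hwup (y + h)
    rw [add_sub_cancel_left] at h2
    have : δ = 4 * a := by rw [ha]; ring
    rw [this]
    linarith

end ProxSection3

section IshiiSection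

variable {G : Type*} [NormedAddCommGroup G] [InnerProductSpace ℝ G] [FiniteDimensional ℝ G]

/-- Half quadratic form. -/
def qf (S : G →L[ℝ] G) (x : G) : ℝ := (1/2) * ⟪S x, x⟫

/-- Symmetric operator. -/
def SymOp (S : G →L[ℝ] G) : Prop := ∀ u v, ⟪S u, v⟫ = ⟪u, S v⟫

lemma qf_add {S : G →L[ℝ] G} (hS : SymOp S) (x h : G) :
    qf S (x + h) = qf S x + ⟪S x, h⟫ + qf S h := by
  unfold qf
  rw [map_add, inner_add_left, inner_add_right, inner_add_right, hS h x, real_inner_comm h (S x)]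
  ring

lemma qf_sub {S : G →L[ℝ] G} (hS : SymOp S) (x h : G) :
    qf S (x - h) = qf S x - ⟪S x, h⟫ + qf S h := by
  rw [sub_eq_add_neg, qf_add hS, inner_neg_right]
  simp [qf, sub_eq_add_neg]

lemma qf_le (S : G →L[ℝ] G) (x : G) : qf S x ≤ ‖S‖ * ‖x‖ ^ 2 := by
  unfold qf
  have h1 := real_inner_le_norm (S x) x
  have h2 := S.le_opNorm x
  nlinarith [norm_nonneg x, norm_nonneg S, sq_nonneg ‖x‖,
    mul_nonneg (norm_nonneg S) (sq_nonneg ‖x‖)]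

lemma qf_smul (S : G →L[ℝ] G) (t : ℝ) (x : G) : qf S (t • x) = t ^ 2 * qf S x := by
  unfold qf
  rw [map_smul, inner_smul_left, inner_smul_right]
  simp; ring

lemma eq_zero_of_inner_le_sq_local {v : G} {c ρ : ℝ} (hρ : 0 < ρ)
    (h : ∀ u : G, ‖u‖ ≤ ρ → ⟪v, u⟫ ≤ c * ‖u‖ ^ 2) : v = 0 := by
  by_contra hv
  have hvp : 0 < ‖v‖ := by positivity
  have hvpos : 0 < ‖v‖ ^ 2 := by positivity
  set t : ℝ := min (1 / (2 * (|c| + 1))) (ρ / ‖v‖) with ht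
  have htpos : 0 < t := by positivity
  have := h (t • v) (by
    rw [norm_smul, Real.norm_eq_abs, abs_of_pos htpos, ← le_div_iff₀ hvp]
    exact min_le_right _ _)
  rw [inner_smul_right, real_inner_self_eq_norm_sq, norm_smul, mul_pow, Real.norm_eq_abs,
    sq_abs] at this
  have h2 : t * ‖v‖ ^ 2 ≤ t * (c * t * ‖v‖ ^ 2) := by linarith
  have h3 := le_of_mul_le_mul_left h2 htpos
  have h4 : c * t ≤ 1 / 2 := by
    calc c * t ≤ |c| * t := by gcongr; exact le_abs_self c
      _ ≤ |c| * (1 / (2 * (|c| + 1))) := by gcongr; exact min_le_left _ _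
      _ ≤ 1 / 2 := by
        rw [mul_one_div, div_le_div_iff₀ (by positivity) (by norm_num)]
        linarith
  nlinarith

/-- Two-sided second order expansion. -/
def HasExp2 (A : G → ℝ) (ξ p : G) (M : G →L[ℝ] G) : Prop :=
  ∀ ε > 0, ∃ ρ > 0, ∀ h : G, ‖h‖ ≤ ρ → |A (ξ + h) - A ξ - ⟪p, h⟫ - qf M h| ≤ ε * ‖h‖ ^ 2

/-- Upper second order jet relative to a set. -/
def UpJet (D : Set G) (u : G → ℝ) (X p : G) (M : G →L[ℝ] G) : Prop :=
  ∀ ε > 0, ∃ ρ > 0, ∀ X' ∈ D, ‖X' - X‖ ≤ ρ →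
    u X' ≤ u X + ⟪p, X' - X⟫ + qf M (X' - X) + ε * ‖X' - X‖ ^ 2

/-- The sup-convolution jets transfer. -/
lemma supconv_jet {D : Set G} {u A : G → ℝ} {S : G →L[ℝ] G} (hS : SymOp S) {ξ X p : G}
    {M : G →L[ℝ] G}
    (hA : ∀ ξ', ∀ X' ∈ D, u X' - qf S (X' - ξ') ≤ A ξ') (hXD : X ∈ D)
    (hX : A ξ = u X - qf S (X - ξ)) (hexp : HasExp2 A ξ p M) :
    p = S (X - ξ) ∧ UpJet D u X p M := by
  constructor
  · obtain ⟨ρ, hρ, hb⟩ := hexp 1 one_pos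
    have : S (X - ξ) - p = 0 := by
      apply eq_zero_of_inner_le_sq_local hρ (c := ‖S‖ + ‖M‖ + 1)
      intro h hh
      have h1 := (abs_le.1 (hb h hh)).2
      have h2 := hA (ξ + h) X hXD
      have e : X - (ξ + h) = (X - ξ) - h := by abel
      rw [e, qf_sub hS] at h2
      have h3 := qf_le S h
      have h4 := qf_le M h
      rw [inner_sub_left]
      linarith
    exact (sub_eq_zero.1 this).symm
  · intro ε hε
    obtain ⟨ρ, hρ, hb⟩ := hexp ε hε
    refine ⟨ρ, hρ, fun X' hX' hn => ?_⟩
    have h1 := (abs_le.1 (hb (X' - X) hn)).2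
    have h2 := hA (ξ + (X' - X)) X' hX'
    have e : X' - (ξ + (X' - X)) = X - ξ := by abel
    rw [e] at h2
    linarith

lemma wl_inner (x y : WithLp 2 (G × G)) : ⟪x, y⟫ = ⟪x.fst, y.fst⟫ + ⟪x.snd, y.snd⟫ :=
  WithLp.prod_inner_apply x y

lemma wl_inner_mk (a b : G) (y : WithLp 2 (G × G)) :
    ⟪WithLp.toLp 2 (a, b), y⟫ = ⟪a, y.fst⟫ + ⟪b, y.snd⟫ :=
  WithLp.prod_inner_apply _ y

set_option maxHeartbeats 1000000 in
/-- Theorem on sums. -/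
theorem ishii (D : Set G) (u v : G → ℝ) (S R : G →L[ℝ] G) (hS : SymOp S) (hR : SymOp R)
    (hu : ∀ ξ, ∃ X ∈ D, ∀ X' ∈ D, u X' - qf S (X' - ξ) ≤ u X - qf S (X - ξ))
    (hv : ∀ ξ, ∃ X ∈ D, ∀ X' ∈ D, v X' - qf S (X' - ξ) ≤ v X - qf S (X - ξ))
    (Xh ξh ηh Yh : G) (hXh : Xh ∈ D) (hYh : Yh ∈ D)
    (hmax : ∀ X ∈ D, ∀ Y ∈ D, ∀ ξ η,
      u X + v Y - qf S (X - ξ) - qf S (Y - η) - qf S (ξ - η) - qf R ξ - qf R η ≤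
      u Xh + v Yh - qf S (Xh - ξh) - qf S (Yh - ηh) - qf S (ξh - ηh) - qf R ξh - qf R ηh)
    (δ : ℝ) (hδ : 0 < δ) :
    ∃ X ∈ D, ∃ Y ∈ D, ∃ ξ η : G, ∃ M N : G →L[ℝ] G, SymOp M ∧ SymOp N ∧
      u Xh + v Yh - qf S (Xh - ξh) - qf S (Yh - ηh) - qf S (ξh - ηh) - qf R ξh - qf R ηh - δ ≤
      u X + v Y - qf S (X - ξ) - qf S (Y - η) - qf S (ξ - η) - qf R ξ - qf R η ∧
      ‖S (X - ξ) - S (ξ - η) - R ξ‖ ≤ δ ∧ ‖S (Y - η) + S (ξ - η) - R η‖ ≤ δ ∧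
      (∀ h k, qf M h + qf N k ≤ qf S (h - k) + qf R h + qf R k + δ * (‖h‖ ^ 2 + ‖k‖ ^ 2)) ∧
      UpJet D u X (S (X - ξ)) M ∧ UpJet D v Y (S (Y - η)) N := by
  choose Xu hXuD hXu using hu
  choose Yv hYvD hYv using hv
  set A : G → ℝ := fun ξ => u (Xu ξ) - qf S (Xu ξ - ξ) with hA
  set B : G → ℝ := fun η => v (Yv η) - qf S (Yv η - η) with hB
  have hAle : ∀ ξ', ∀ X' ∈ D, u X' - qf S (X' - ξ') ≤ A ξ' := fun ξ' X' h => hXu ξ' X' h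
  have hBle : ∀ ξ', ∀ X' ∈ D, v X' - qf S (X' - ξ') ≤ B ξ' := fun ξ' X' h => hYv ξ' X' h
  have hAsemi : ∀ ξ h, A ξ + ⟪S (Xu ξ - ξ), h⟫ - qf S h ≤ A (ξ + h) := by
    intro ξ h
    have := hAle (ξ + h) (Xu ξ) (hXuD ξ)
    have e : Xu ξ - (ξ + h) = (Xu ξ - ξ) - h := by abel
    rw [e, qf_sub hS] at this
    simp only [hA] at this ⊢
    linarith
  have hBsemi : ∀ ξ h, B ξ + ⟪S (Yv ξ - ξ), h⟫ - qf S h ≤ B (ξ + h) := by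
    intro ξ h
    have := hBle (ξ + h) (Yv ξ) (hYvD ξ)
    have e : Yv ξ - (ξ + h) = (Yv ξ - ξ) - h := by abel
    rw [e, qf_sub hS] at this
    simp only [hB] at this ⊢
    linarith
  set w : WithLp 2 (G × G) → ℝ := fun z =>
    A z.fst + B z.snd - qf S (z.fst - z.snd) - qf R z.fst - qf R z.snd with hw
  have hwadd : ∀ z h : WithLp 2 (G × G), w (z + h) - w z =
      (A (z.fst + h.fst) - A z.fst) + (B (z.snd + h.snd) - B z.snd)
      - ⟪S (z.fst - z.snd), h.fst - h.snd⟫ - qf S (h.fst - h.snd)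
      - ⟪R z.fst, h.fst⟫ - qf R h.fst - ⟪R z.snd, h.snd⟫ - qf R h.snd := by
    intro z h
    simp only [hw, WithLp.add_fst, WithLp.add_snd]
    have e : z.fst + h.fst - (z.snd + h.snd) = (z.fst - z.snd) + (h.fst - h.snd) := by abel
    rw [e, qf_add hS, qf_add hR, qf_add hR]
    ring
  have hnsq : ∀ h : WithLp 2 (G × G), ‖h‖ ^ 2 = ‖h.fst‖ ^ 2 + ‖h.snd‖ ^ 2 :=
    fun h => WithLp.prod_norm_sq_eq_of_L2 h
  have hwsemi : ∀ z, ∃ g, ∀ z', w z + ⟪g, z' - z⟫ - (3 * ‖S‖ + ‖R‖) * ‖z' - z‖ ^ 2 ≤ w z' := by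
    intro z
    refine ⟨WithLp.toLp 2 (S (Xu z.fst - z.fst) - S (z.fst - z.snd) - R z.fst,
      S (Yv z.snd - z.snd) + S (z.fst - z.snd) - R z.snd), fun z' => ?_⟩
    set h := z' - z with hh
    have e : z' = z + h := by rw [hh]; abel
    rw [e]
    have h1 := hwadd z h
    have h2 := hAsemi z.fst h.fst
    have h3 := hBsemi z.snd h.snd
    rw [wl_inner_mk]
    simp only [inner_sub_left, inner_add_left]
    rw [inner_sub_right] at h1
    have h4 := qf_le S h.fst
    have h5 := qf_le S h.snd
    have h6 := qf_le R h.fst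
    have h7 := qf_le R h.snd
    have h8 := qf_le S (h.fst - h.snd)
    have h9 : ‖h.fst - h.snd‖ ^ 2 ≤ 2 * ‖h‖ ^ 2 := by
      rw [hnsq]
      have := norm_sub_le h.fst h.snd
      nlinarith [norm_nonneg (h.fst - h.snd), sq_nonneg (‖h.fst‖ - ‖h.snd‖)]
    have h10 := mul_le_mul_of_nonneg_left h9 (norm_nonneg S)
    have h11 := hnsq h
    have h12 : ‖S‖ * ‖h‖ ^ 2 = ‖S‖ * ‖h.fst‖ ^ 2 + ‖S‖ * ‖h.snd‖ ^ 2 := by rw [h11]; ring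
    have h13 : ‖R‖ * ‖h‖ ^ 2 = ‖R‖ * ‖h.fst‖ ^ 2 + ‖R‖ * ‖h.snd‖ ^ 2 := by rw [h11]; ring
    linarith
  set zh : WithLp 2 (G × G) := WithLp.toLp 2 (ξh, ηh) with hzh
  have hwmax' : ∀ z, w z ≤
      u Xh + v Yh - qf S (Xh - ξh) - qf S (Yh - ηh) - qf S (ξh - ηh) - qf R ξh - qf R ηh := by
    intro z
    have := hmax (Xu z.fst) (hXuD _) (Yv z.snd) (hYvD _) z.fst z.snd
    simp only [hw, hA, hB]
    linarith
  have hwzh : u Xh + v Yh - qf S (Xh - ξh) - qf S (Yh - ηh) - qf S (ξh - ηh) - qf R ξh - qf R ηh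
      ≤ w zh := by
    have h1 := hAle ξh Xh hXh
    have h2 := hBle ηh Yh hYh
    have h3 : w zh = A ξh + B ηh - qf S (ξh - ηh) - qf R ξh - qf R ηh := rfl
    linarith
  have hwmax : ∀ z, w z ≤ w zh := fun z => (hwmax' z).trans hwzh
  obtain ⟨g, hg⟩ := hwsemi zh
  set CC := 3 * ‖S‖ + ‖R‖ with hCC
  have hCCnn : 0 ≤ CC := by positivity
  set δ' := min (δ / 2) (min 1 (δ / (‖g‖ + CC + 1))) with hδ'
  have hδ'pos : 0 < δ' := by positivity
  have hδ'1 : δ' ≤ δ / 2 := min_le_left _ _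
  have hδ'2 : δ' ≤ 1 := (min_le_right _ _).trans (min_le_left _ _)
  have hδ'3 : δ' * (‖g‖ + CC + 1) ≤ δ := by
    rw [← le_div_iff₀ (by positivity)]
    exact (min_le_right _ _).trans (min_le_right _ _)
  obtain ⟨z, p, H, hz, hp, hHs, hHle, hHexp⟩ :=
    jensen_alexandrov w CC hCCnn hwsemi zh hwmax δ' hδ'pos
  set ξ := z.fst with hξ
  set η := z.snd with hη
  let e := WithLp.prodContinuousLinearEquiv 2 ℝ G G
  let i1 : G →L[ℝ] WithLp 2 (G × G) := e.symm.toContinuousLinearMap.comp (ContinuousLinearMap.inl ℝ G G)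
  let i2 : G →L[ℝ] WithLp 2 (G × G) := e.symm.toContinuousLinearMap.comp (ContinuousLinearMap.inr ℝ G G)
  let π1 : WithLp 2 (G × G) →L[ℝ] G := (ContinuousLinearMap.fst ℝ G G).comp e.toContinuousLinearMap
  let π2 : WithLp 2 (G × G) →L[ℝ] G := (ContinuousLinearMap.snd ℝ G G).comp e.toContinuousLinearMap
  have hi1f : ∀ h, (i1 h).fst = h := fun h => rfl
  have hi1s : ∀ h, (i1 h).snd = 0 := fun h => rfl
  have hi2f : ∀ h, (i2 h).fst = 0 := fun h => rfl
  have hi2s : ∀ h, (i2 h).snd = h := fun h => rfl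
  have hπ1 : ∀ z, π1 z = z.fst := fun h => rfl
  have hπ2 : ∀ z, π2 z = z.snd := fun h => rfl
  have hin1 : ∀ a h, ⟪a, i1 h⟫ = ⟪a.fst, h⟫ := by
    intro a h; rw [wl_inner, hi1f, hi1s, inner_zero_right, add_zero]
  have hin2 : ∀ a h, ⟪a, i2 h⟫ = ⟪a.snd, h⟫ := by
    intro a h; rw [wl_inner, hi2f, hi2s, inner_zero_right, zero_add]
  have hni1 : ∀ h, ‖i1 h‖ = ‖h‖ := by
    intro h
    have := hnsq (i1 h)
    rw [hi1f, hi1s, norm_zero] at this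
    exact (pow_left_inj₀ (norm_nonneg _) (norm_nonneg _) two_ne_zero).1 (by linarith)
  have hni2 : ∀ h, ‖i2 h‖ = ‖h‖ := by
    intro h
    have := hnsq (i2 h)
    rw [hi2f, hi2s, norm_zero] at this
    exact (pow_left_inj₀ (norm_nonneg _) (norm_nonneg _) two_ne_zero).1 (by linarith)
  set M : G →L[ℝ] G := π1.comp (H.comp i1) + S + R with hM
  set N : G →L[ℝ] G := π2.comp (H.comp i2) + S + R with hN
  have hMs : SymOp M := by
    intro a b
    have h1 := hHs (i1 a) (i1 b)
    rw [hin1, real_inner_comm (H (i1 b)) (i1 a), hin1, real_inner_comm a _] at h1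
    simp only [hM, _root_.add_apply, ContinuousLinearMap.comp_apply, inner_add_left,
      inner_add_right, hπ1]
    rw [hS a b, hR a b, h1]
  have hNs : SymOp N := by
    intro a b
    have h1 := hHs (i2 a) (i2 b)
    rw [hin2, real_inner_comm (H (i2 b)) (i2 a), hin2, real_inner_comm a _] at h1
    simp only [hN, _root_.add_apply, ContinuousLinearMap.comp_apply, inner_add_left,
      inner_add_right, hπ2]
    rw [hS a b, hR a b, h1]
  have hqM : ∀ h, qf M h = (1/2) * ⟪H (i1 h), i1 h⟫ + qf S h + qf R h := by
    intro h
    rw [hin1]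
    simp only [qf, hM, _root_.add_apply, ContinuousLinearMap.comp_apply, inner_add_left, hπ1]
    ring
  have hqN : ∀ h, qf N h = (1/2) * ⟪H (i2 h), i2 h⟫ + qf S h + qf R h := by
    intro h
    rw [hin2]
    simp only [qf, hN, _root_.add_apply, ContinuousLinearMap.comp_apply, inner_add_left, hπ2]
    ring
  have hqneg : ∀ h : G, qf S (-h) = qf S h := by intro h; simp [qf]
  have hq0 : ∀ S : G →L[ℝ] G, qf S 0 = 0 := by intro S; simp [qf]
  have hAexp : HasExp2 A ξ (p.fst + S (ξ - η) + R ξ) M := by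
    intro ε hε
    obtain ⟨ρ, hρ, hb⟩ := hHexp ε hε
    refine ⟨ρ, hρ, fun h hh => ?_⟩
    have h1 := hb (i1 h) (by rwa [hni1])
    rw [hni1] at h1
    have h2 := hwadd z (i1 h)
    rw [h2, hin1, hi1f, hi1s] at h1
    convert h1 using 2
    rw [hqM]
    simp only [add_zero, sub_zero, sub_self, inner_zero_right, hq0, inner_add_left]
    rw [← hin1]
    simp only [← hξ, ← hη]
    ring
  have hBexp : HasExp2 B η (p.snd - S (ξ - η) + R η) N := by
    intro ε hε
    obtain ⟨ρ, hρ, hb⟩ := hHexp ε hε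
    refine ⟨ρ, hρ, fun h hh => ?_⟩
    have h1 := hb (i2 h) (by rwa [hni2])
    rw [hni2] at h1
    have h2 := hwadd z (i2 h)
    rw [h2, hin2, hi2f, hi2s] at h1
    convert h1 using 2
    rw [hqN]
    simp only [add_zero, zero_sub, sub_zero, sub_self, inner_zero_right, hq0, inner_add_left,
      inner_sub_left, inner_neg_right, hqneg]
    rw [← hin2]
    simp only [← hξ, ← hη]
    ring
  obtain ⟨hp1, hJ1⟩ := supconv_jet hS hAle (hXuD ξ) (rfl : A ξ = _) hAexp
  obtain ⟨hp2, hJ2⟩ := supconv_jet hS hBle (hYvD η) (rfl : B η = _) hBexp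
  have hpf : ‖p.fst‖ ≤ ‖p‖ := by
    have := hnsq p
    exact (pow_le_pow_iff_left₀ (norm_nonneg _) (norm_nonneg _) two_ne_zero).1
      (by nlinarith [sq_nonneg ‖p.snd‖])
  have hps : ‖p.snd‖ ≤ ‖p‖ := by
    have := hnsq p
    exact (pow_le_pow_iff_left₀ (norm_nonneg _) (norm_nonneg _) two_ne_zero).1
      (by nlinarith [sq_nonneg ‖p.fst‖])
  refine ⟨Xu ξ, hXuD ξ, Yv η, hYvD η, ξ, η, M, N, hMs, hNs, ?_, ?_, ?_, ?_, ?_, ?_⟩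
  · have h1 := hg z
    have h2 := (abs_le.1 (abs_real_inner_le_norm g (z - zh))).1
    have h3 : ‖g‖ * ‖z - zh‖ ≤ ‖g‖ * δ' := by gcongr
    have h4 : CC * ‖z - zh‖ ^ 2 ≤ CC * δ' := by
      have : ‖z - zh‖ ^ 2 ≤ δ' := by nlinarith [norm_nonneg (z - zh)]
      gcongr
    have h5 : w z = u (Xu ξ) + v (Yv η) - qf S (Xu ξ - ξ) - qf S (Yv η - η) - qf S (ξ - η)
        - qf R ξ - qf R η := by
      simp only [hw, hA, hB, ← hξ, ← hη]; ring
    rw [← h5]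
    nlinarith
  · rw [← hp1]
    have : p.fst + S (ξ - η) + R ξ - S (ξ - η) - R ξ = p.fst := by abel
    rw [this]
    linarith
  · rw [← hp2]
    have : p.snd - S (ξ - η) + R η + S (ξ - η) - R η = p.snd := by abel
    rw [this]
    linarith
  · -- matrix inequality
    obtain ⟨ρ1, hρ1, hb1⟩ := hAexp (δ / 4) (by positivity)
    obtain ⟨ρ2, hρ2, hb2⟩ := hBexp (δ / 4) (by positivity)
    obtain ⟨ρ3, hρ3, hb3⟩ := hHexp (δ / 4) (by positivity)
    intro h k
    set ρ := min ρ1 (min ρ2 ρ3) with hρ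
    have hρpos : 0 < ρ := by positivity
    set t := ρ / (‖h‖ + ‖k‖ + 1) with ht
    have htpos : 0 < t := by positivity
    have htm : t * (‖h‖ + ‖k‖ + 1) = ρ := by rw [ht]; field_simp
    have hnt : ∀ x : G, ‖t • x‖ = t * ‖x‖ := by
      intro x; rw [norm_smul, Real.norm_eq_abs, abs_of_pos htpos]
    set hk : WithLp 2 (G × G) := WithLp.toLp 2 (t • h, t • k) with hhk
    have e1 : hk.fst = t • h := rfl
    have e2 : hk.snd = t • k := rfl
    have hhkn : ‖hk‖ ^ 2 = t ^ 2 * (‖h‖ ^ 2 + ‖k‖ ^ 2) := by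
      rw [hnsq, e1, e2, hnt, hnt]; ring
    have hhkn' : ‖hk‖ ≤ ρ := by
      refine (pow_le_pow_iff_left₀ (norm_nonneg _) hρpos.le two_ne_zero).1 ?_
      rw [hhkn, ← htm]
      have : t ^ 2 * (‖h‖ ^ 2 + ‖k‖ ^ 2) ≤ t ^ 2 * (‖h‖ + ‖k‖ + 1) ^ 2 := by
        gcongr
        nlinarith [norm_nonneg h, norm_nonneg k, mul_nonneg (norm_nonneg h) (norm_nonneg k)]
      linarith [this, mul_pow t (‖h‖ + ‖k‖ + 1) 2]
    have hth : ‖t • h‖ ≤ ρ := by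
      rw [hnt, ← htm]; nlinarith [norm_nonneg h, norm_nonneg k, mul_nonneg htpos.le (norm_nonneg k)]
    have htk : ‖t • k‖ ≤ ρ := by
      rw [hnt, ← htm]; nlinarith [norm_nonneg h, norm_nonneg k, mul_nonneg htpos.le (norm_nonneg h)]
    have a1 := (abs_le.1 (hb1 (t • h) (hth.trans (min_le_left _ _)))).1
    have a2 := (abs_le.1 (hb2 (t • k)
      (htk.trans ((min_le_right _ _).trans (min_le_left _ _))))).1
    have a3 := (abs_le.1 (hb3 hk (hhkn'.trans ((min_le_right _ _).trans (min_le_right _ _))))).2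
    have a4 := hwadd z hk
    have a5 := hHle hk
    rw [a4] at a3
    rw [wl_inner p hk] at a3
    rw [hhkn] at a3 a5
    simp only [e1, e2, ← hξ, ← hη] at a3
    rw [inner_add_left, inner_add_left] at a1
    rw [inner_add_left, inner_sub_left] at a2
    rw [inner_sub_right] at a3
    rw [← smul_sub] at a3
    rw [hnt] at a1 a2
    have key : t ^ 2 * (qf M h + qf N k) ≤ t ^ 2 * (qf S (h - k) + qf R h + qf R k
        + δ * (‖h‖ ^ 2 + ‖k‖ ^ 2)) := by
      rw [qf_smul] at a1 a2
      rw [qf_smul, qf_smul, qf_smul] at a3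
      have a6 : δ' * (t ^ 2 * (‖h‖ ^ 2 + ‖k‖ ^ 2)) ≤ δ / 2 * (t ^ 2 * (‖h‖ ^ 2 + ‖k‖ ^ 2)) := by
        gcongr
      have a7 : 0 ≤ δ * (t ^ 2 * (‖h‖ ^ 2 + ‖k‖ ^ 2)) := by positivity
      linarith
    exact le_of_mul_le_mul_left key (by positivity)
  · rw [hp1] at hJ1; exact hJ1
  · rw [hp2] at hJ2; exact hJ2

end IshiiSection

section JetSection

variable {n d : ℕ}

/-- Space-time with Euclidean structure. -/
abbrev PG (n : ℕ) := WithLp 2 (ℝ × EucSp n)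

/-- Point constructor. -/
def mkP (t : ℝ) (x : EucSp n) : PG n := WithLp.toLp 2 (t, x)

@[simp] lemma mkP_fst (t : ℝ) (x : EucSp n) : (mkP t x).fst = t := rfl
@[simp] lemma mkP_snd (t : ℝ) (x : EucSp n) : (mkP t x).snd = x := rfl

lemma pg_ext {X Y : PG n} (h1 : X.fst = Y.fst) (h2 : X.snd = Y.snd) : X = Y := by
  apply (WithLp.ofLp_injective 2)
  exact Prod.ext h1 h2

lemma pg_inner (X Y : PG n) : ⟪X, Y⟫ = X.fst * Y.fst + ⟪X.snd, Y.snd⟫ := by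
  have := WithLp.prod_inner_apply (𝕜 := ℝ) X Y
  rw [this]
  congr 1
  simp [mul_comm]

lemma pg_norm_sq (X : PG n) : ‖X‖ ^ 2 = X.fst ^ 2 + ‖X.snd‖ ^ 2 := by
  rw [WithLp.prod_norm_sq_eq_of_L2, Real.norm_eq_abs, sq_abs]

/-- Space-time inclusion of the time direction. -/
def iT (n : ℕ) : ℝ →L[ℝ] PG n :=
  (WithLp.prodContinuousLinearEquiv 2 ℝ ℝ (EucSp n)).symm.toContinuousLinearMap.comp
    (ContinuousLinearMap.inl ℝ ℝ (EucSp n))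
/-- Space-time inclusion of the space direction. -/
def iX (n : ℕ) : EucSp n →L[ℝ] PG n :=
  (WithLp.prodContinuousLinearEquiv 2 ℝ ℝ (EucSp n)).symm.toContinuousLinearMap.comp
    (ContinuousLinearMap.inr ℝ ℝ (EucSp n))
/-- Time projection. -/
def pT (n : ℕ) : PG n →L[ℝ] ℝ :=
  (ContinuousLinearMap.fst ℝ ℝ (EucSp n)).comp
  (WithLp.prodContinuousLinearEquiv 2 ℝ ℝ (EucSp n)).toContinuousLinearMap
/-- Space projection. -/
def pX (n : ℕ) : PG n →L[ℝ] EucSp n :=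
  (ContinuousLinearMap.snd ℝ ℝ (EucSp n)).comp
  (WithLp.prodContinuousLinearEquiv 2 ℝ ℝ (EucSp n)).toContinuousLinearMap

lemma iT_apply (t : ℝ) : iT n t = mkP t 0 := rfl
lemma iX_apply (x : EucSp n) : iX n x = mkP 0 x := rfl
lemma pT_apply (X : PG n) : pT n X = X.fst := rfl
lemma pX_apply (X : PG n) : pX n X = X.snd := rfl

lemma mkP_eq (t : ℝ) (x : EucSp n) : mkP t x = iT n t + iX n x := by
  rw [iT_apply, iX_apply]
  apply pg_ext <;> simp

lemma mkP_sub (t s : ℝ) (x y : EucSp n) : mkP (t - s) (x - y) = mkP t x - mkP s y := by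
  apply pg_ext <;> simp

lemma mkP_eta (X : PG n) : mkP X.fst X.snd = X := rfl

lemma continuous_mkP : Continuous (fun q : ℝ × EucSp n => mkP q.1 q.2) := by
  simp only [mkP_eq]
  fun_prop

/-- Quadratic test function. -/
def tf (p : PG n) (M : PG n →L[ℝ] PG n) (t0 : ℝ) (x0 : EucSp n) (t : ℝ) (x : EucSp n) : ℝ :=
  ⟪p, mkP t x - mkP t0 x0⟫ + qf M (mkP t x - mkP t0 x0)

lemma tf_hasF (p : PG n) {M : PG n →L[ℝ] PG n} (hM : SymOp M) (Z h : PG n) :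
    HasFDerivAt (fun h : PG n => ⟪p, h - Z⟫ + qf M (h - Z)) (innerSL ℝ (p + M (h - Z))) h := by
  have h0 : HasFDerivAt (fun h : PG n => h - Z) (ContinuousLinearMap.id ℝ (PG n)) h :=
    (hasFDerivAt_id h).sub_const Z
  have h1 := (hasFDerivAt_const p h).inner ℝ h0
  have h2 := ((M.hasFDerivAt (x := h - Z)).comp h h0).inner ℝ h0
  have h3 := h1.add (h2.const_mul (1/2))
  refine h3.congr_fderiv ?_
  ext v
  simp only [_root_.add_apply, _root_.smul_apply, ContinuousLinearMap.comp_apply,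
    ContinuousLinearMap.prod_apply, fderivInnerCLM_apply, innerSL_apply_apply,
    ContinuousLinearMap.zero_apply, inner_zero_left, add_zero, ContinuousLinearMap.id_apply,
    inner_add_left, smul_eq_mul]
  simp only [Function.comp_apply]
  rw [hM v, real_inner_comm (M (h - Z)) v]
  ring

lemma tf_hasT (p : PG n) {M : PG n →L[ℝ] PG n} (hM : SymOp M) (t0 : ℝ) (x0 : EucSp n)
    (t : ℝ) (x : EucSp n) :
    HasDerivAt (fun s => tf p M t0 x0 s x) (p + M (mkP t x - mkP t0 x0)).fst t := by
  have h1 : HasFDerivAt (fun s : ℝ => mkP s x) (iT n) t := by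
    simp only [mkP_eq]
    exact (iT n).hasFDerivAt.add_const _
  have h2 := ((tf_hasF p hM (mkP t0 x0) (mkP t x)).comp t h1).hasDerivAt
  refine h2.congr_deriv ?_
  simp only [ContinuousLinearMap.comp_apply, iT_apply, innerSL_apply_apply]
  rw [pg_inner]
  simp

lemma tf_hasX (p : PG n) {M : PG n →L[ℝ] PG n} (hM : SymOp M) (t0 : ℝ) (x0 : EucSp n)
    (t : ℝ) (x : EucSp n) :
    HasGradientAt (fun y => tf p M t0 x0 t y) (p + M (mkP t x - mkP t0 x0)).snd x := by
  have h1 : HasFDerivAt (fun y : EucSp n => mkP t y) (iX n) x := by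
    simp only [mkP_eq]
    exact (iX n).hasFDerivAt.const_add _
  have h2 := ((tf_hasF p hM (mkP t0 x0) (mkP t x)).comp x h1)
  rw [hasGradientAt_iff_hasFDerivAt]
  refine h2.congr_fderiv ?_
  ext v
  simp only [ContinuousLinearMap.comp_apply, iX_apply, innerSL_apply_apply,
    InnerProductSpace.toDual_apply_apply]
  rw [pg_inner]
  simp

lemma tf_tderiv (p : PG n) {M : PG n →L[ℝ] PG n} (hM : SymOp M) (t0 : ℝ) (x0 : EucSp n)
    (t : ℝ) (x : EucSp n) :
    tderiv (tf p M t0 x0) t x = (p + M (mkP t x - mkP t0 x0)).fst := (tf_hasT p hM t0 x0 t x).deriv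

lemma tf_xgrad (p : PG n) {M : PG n →L[ℝ] PG n} (hM : SymOp M) (t0 : ℝ) (x0 : EucSp n)
    (t : ℝ) (x : EucSp n) :
    xgrad (tf p M t0 x0) t x = (p + M (mkP t x - mkP t0 x0)).snd :=
  (tf_hasX p hM t0 x0 t x).gradient

lemma tf_xgrad_hasF (p : PG n) {M : PG n →L[ℝ] PG n} (hM : SymOp M) (t0 : ℝ) (x0 : EucSp n)
    (t : ℝ) (x : EucSp n) :
    HasFDerivAt (fun y => xgrad (tf p M t0 x0) t y) ((pX n).comp (M.comp (iX n))) x := by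
  simp only [tf_xgrad p hM]
  have e : (fun y : EucSp n => (p + M (mkP t y - mkP t0 x0)).snd) =
    fun y => (pX n).comp (M.comp (iX n)) y + (p + M (iT n t - mkP t0 x0)).snd := by
    funext y
    simp only [ContinuousLinearMap.comp_apply, ← pX_apply, mkP_eq]
    rw [← map_add]
    congr 1
    simp only [map_sub, map_add]
    abel
  rw [e]
  exact (ContinuousLinearMap.hasFDerivAt _).add_const _

lemma tf_xhess (p : PG n) {M : PG n →L[ℝ] PG n} (hM : SymOp M) (t0 : ℝ) (x0 : EucSp n)
    (t : ℝ) (x : EucSp n) :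
    xhess (tf p M t0 x0) t x = fun i j => (M (mkP 0 (EuclideanSpace.single j 1))).snd i := by
  funext i j
  unfold xhess
  rw [(tf_xgrad_hasF p hM t0 x0 t x).fderiv]
  rfl

lemma tf_C12 (p : PG n) {M : PG n →L[ℝ] PG n} (hM : SymOp M) (t0 : ℝ) (x0 : EucSp n)
    (s : Set (ℝ × EucSp n)) : IsC12On (tf p M t0 x0) s where
  cont := by
    apply Continuous.continuousOn
    have := continuous_mkP (n := n)
    unfold tf qf
    fun_prop
  diff_t := fun q _ => (tf_hasT p hM t0 x0 q.1 q.2).differentiableAt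
  cont_t := by
    apply Continuous.continuousOn
    have := continuous_mkP (n := n)
    simp only [tf_tderiv p hM, ← pT_apply]
    fun_prop
  diff_x := fun q _ => (tf_hasX p hM t0 x0 q.1 q.2).differentiableAt
  diff_grad := fun q _ => (tf_xgrad_hasF p hM t0 x0 q.1 q.2).differentiableAt
  cont_grad := by
    apply Continuous.continuousOn
    have := continuous_mkP (n := n)
    simp only [tf_xgrad p hM, ← pX_apply]
    fun_prop
  cont_hess := by
    apply Continuous.continuousOn
    simp only [tf_xhess p hM]
    exact continuous_const

/-- Columns of `σ`. -/
def scol (σ : ℝ → EucSp n → Matrix (Fin n) (Fin d) ℝ) (t : ℝ) (x : EucSp n) (k : Fin d) : EucSp n :=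
  WithLp.toLp 2 (fun i => σ t x i k)

lemma trace_eq (A : Matrix (Fin n) (Fin d) ℝ) (L : EucSp n →L[ℝ] EucSp n)
    (Hm : Matrix (Fin n) (Fin n) ℝ) (hH : ∀ i j, Hm i j = L (EuclideanSpace.single j 1) i) :
    (A * Aᵀ * Hm).trace =
      ∑ k, ⟪L (WithLp.toLp 2 (fun i => A i k)), WithLp.toLp 2 (fun i => A i k)⟫ := by
  have hL : ∀ v : EucSp n, ∀ i, L v i = ∑ j, v j * Hm i j := by
    intro v i
    conv_lhs => rw [← (EuclideanSpace.basisFun (Fin n) ℝ).sum_repr v]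
    simp [map_sum, map_smul, hH]
  have h1 : (A * Aᵀ * Hm).trace = ∑ x, ∑ i, ∑ j, A x i * A j i * Hm j x := by
    simp only [Matrix.trace, Matrix.diag, Matrix.mul_apply, Matrix.transpose_apply,
      Finset.sum_mul]
    exact Finset.sum_congr rfl fun x _ => Finset.sum_comm
  rw [h1, Finset.sum_comm]
  refine Finset.sum_congr rfl fun k _ => ?_
  rw [Finset.sum_comm, PiLp.inner_apply]
  refine Finset.sum_congr rfl fun i _ => ?_
  rw [hL]
  simp only [RCLike.inner_apply, conj_trivial, Finset.mul_sum]
  refine Finset.sum_congr rfl fun j _ => ?_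
  ring

lemma tf_Lop (b : ℝ → EucSp n → EucSp n) (σ : ℝ → EucSp n → Matrix (Fin n) (Fin d) ℝ)
    (p : PG n) {M : PG n →L[ℝ] PG n} (hM : SymOp M) (t0 : ℝ) (x0 : EucSp n) :
    Lop b σ (tf p M t0 x0) t0 x0 = ⟪b t0 x0, p.snd⟫ + ∑ k, qf M (mkP 0 (scol σ t0 x0 k)) := by
  unfold Lop
  rw [tf_xgrad p hM, tf_xhess p hM]
  have := trace_eq (σ t0 x0) ((pX n).comp (M.comp (iX n))) (fun i j => (M (mkP 0 (EuclideanSpace.single j 1))).snd i) (fun i j => rfl)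
  simp only [ContinuousLinearMap.comp_apply, iX_apply, pX_apply] at this
  rw [this, sub_self, map_zero, add_zero, Finset.mul_sum]
  congr 1
  refine Finset.sum_congr rfl fun k _ => ?_
  unfold qf
  rw [pg_inner]
  simp [scol]

/-- The time strip. -/
def strip (T : ℝ) (n : ℕ) : Set (PG n) := {X | X.fst ∈ Set.Icc (0:ℝ) T}

lemma symOp_addId {M : PG n →L[ℝ] PG n} (hM : SymOp M) (a : ℝ) :
    SymOp (M + a • ContinuousLinearMap.id ℝ (PG n)) := by
  intro u v
  simp [inner_add_left, inner_add_right, inner_smul_left, inner_smul_right, hM u v]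

lemma qf_addId (M : PG n →L[ℝ] PG n) (a : ℝ) (h : PG n) :
    qf (M + a • ContinuousLinearMap.id ℝ (PG n)) h = qf M h + a / 2 * ‖h‖ ^ 2 := by
  simp only [qf, _root_.add_apply, _root_.smul_apply, ContinuousLinearMap.id_apply,
    inner_add_left, inner_smul_left, real_inner_self_eq_norm_sq]
  simp
  ring

lemma jet_localmax {T : ℝ} {U : ℝ → EucSp n → ℝ} {X p : PG n} {M : PG n →L[ℝ] PG n}
    (hJ : UpJet (strip T n) (fun X => U X.fst X.snd) X p M) {ε : ℝ} (hε : 0 < ε) :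
    IsLocalMaxOn (fun q : ℝ × EucSp n => U q.1 q.2 -
      tf p (M + (2 * ε) • ContinuousLinearMap.id ℝ (PG n)) X.fst X.snd q.1 q.2)
      (pdom T n) (X.fst, X.snd) := by
  obtain ⟨ρ, hρ, h⟩ := hJ ε hε
  have hc : ContinuousAt (fun q : ℝ × EucSp n => ‖mkP q.1 q.2 - X‖) (X.fst, X.snd) := by
    have := continuous_mkP (n := n)
    apply Continuous.continuousAt
    fun_prop
  have hev : ∀ᶠ q : ℝ × EucSp n in 𝓝 (X.fst, X.snd), ‖mkP q.1 q.2 - X‖ < ρ := by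
    apply hc.eventually_lt_const
    simpa [mkP_eta] using hρ
  have hev2 : ∀ᶠ q : ℝ × EucSp n in 𝓝[pdom T n] (X.fst, X.snd), q ∈ pdom T n :=
    self_mem_nhdsWithin
  filter_upwards [hev2, mem_nhdsWithin_of_mem_nhds hev] with q hq hqρ
  have h1 := h (mkP q.1 q.2) ⟨hq.1.1, hq.1.2.le⟩ hqρ.le
  unfold tf
  rw [mkP_eta, qf_addId, sub_self]
  simp only [mkP_fst, mkP_snd, inner_zero_right] at h1 ⊢
  have : qf (M + (2 * ε) • ContinuousLinearMap.id ℝ (PG n)) 0 = 0 := by simp [qf]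
  rw [this]
  linarith

theorem visc_sub {T : ℝ} {b : ℝ → EucSp n → EucSp n} {σ : ℝ → EucSp n → Matrix (Fin n) (Fin d) ℝ}
    {f : ℝ → EucSp n → ℝ} {g : EucSp n → ℝ} {K : Set (EucSp n)}
    {c : ℝ → EucSp n → EucSp n → ℝ} {U : ℝ → EucSp n → ℝ}
    (hU : IsSubHJB T b σ f g K c U) {X p : PG n} {M : PG n →L[ℝ] PG n} (hM : SymOp M)
    (hX : X.fst ∈ Set.Ico 0 T)
    (hJ : UpJet (strip T n) (fun X => U X.fst X.snd) X p M) :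
    0 ≤ p.fst + ⟪b X.fst X.snd, p.snd⟫ + (∑ k, qf M (mkP 0 (scol σ X.fst X.snd k)))
      + f X.fst X.snd ∨ U X.fst X.snd ≤ Mop K c U X.fst X.snd := by
  by_contra! hcon
  obtain ⟨h1, h2⟩ := hcon
  set Q := ∑ k, ‖mkP 0 (scol σ X.fst X.snd k)‖ ^ 2 with hQ
  have hQ0 : 0 ≤ Q := Finset.sum_nonneg fun _ _ => by positivity
  set E := p.fst + ⟪b X.fst X.snd, p.snd⟫ + (∑ k, qf M (mkP 0 (scol σ X.fst X.snd k)))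
      + f X.fst X.snd with hE
  set ε := -E / (2 * (Q + 1)) with hε
  have hεpos : 0 < ε := by
    apply div_pos <;> linarith
  have hs := symOp_addId hM (2 * ε)
  have h3 := hU.1 X.fst X.snd ⟨hX, mem_univ _⟩ _ (tf_C12 p hs X.fst X.snd _) (jet_localmax hJ hεpos)
  rw [tf_tderiv p hs, tf_Lop b σ p hs, sub_self, map_zero, add_zero] at h3
  simp only [qf_addId, Finset.sum_add_distrib, ← Finset.mul_sum] at h3
  rw [min_le_iff] at h3
  rcases h3 with h3 | h3
  · rw [← hQ] at h3
    have : ε * (2 * (Q + 1)) = -E := by rw [hε]; field_simp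
    nlinarith
  · linarith

theorem visc_super {T : ℝ} {b : ℝ → EucSp n → EucSp n}
    {σ : ℝ → EucSp n → Matrix (Fin n) (Fin d) ℝ}
    {f : ℝ → EucSp n → ℝ} {g : EucSp n → ℝ} {K : Set (EucSp n)}
    {c : ℝ → EucSp n → EucSp n → ℝ} {V : ℝ → EucSp n → ℝ}
    (hV : IsSuperHJB T b σ f g K c V) {X p : PG n} {M : PG n →L[ℝ] PG n} (hM : SymOp M)
    (hX : X.fst ∈ Set.Ico 0 T)
    (hJ : UpJet (strip T n) (fun X => -V X.fst X.snd) X p M) :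
    0 ≤ p.fst + ⟪b X.fst X.snd, p.snd⟫ + (∑ k, qf M (mkP 0 (scol σ X.fst X.snd k)))
      - f X.fst X.snd ∧ Mop K c V X.fst X.snd ≤ V X.fst X.snd := by
  have key : ∀ ε > 0, 0 ≤ p.fst + ⟪b X.fst X.snd, p.snd⟫ +
      (∑ k, qf M (mkP 0 (scol σ X.fst X.snd k))) +
      ε * (∑ k, ‖mkP 0 (scol σ X.fst X.snd k)‖ ^ 2) - f X.fst X.snd ∧
      Mop K c V X.fst X.snd ≤ V X.fst X.snd := by
    intro ε hε
    have hs := symOp_addId hM (2 * ε)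
    have hs' : SymOp (-(M + (2 * ε) • ContinuousLinearMap.id ℝ (PG n))) := by
      intro u v
      simp only [_root_.neg_apply, inner_neg_left, inner_neg_right, hs u v]
    have hm := (jet_localmax (U := fun t x => -V t x) hJ hε).neg
    have hqn : ∀ h, qf (-(M + (2 * ε) • ContinuousLinearMap.id ℝ (PG n))) h =
        -(qf (M + (2 * ε) • ContinuousLinearMap.id ℝ (PG n)) h) := by
      intro h; simp only [qf, _root_.neg_apply, inner_neg_left]; ring
    have hm2 : IsLocalMinOn (fun q : ℝ × EucSp n => V q.1 q.2 -
      tf (-p) (-(M + (2 * ε) • ContinuousLinearMap.id ℝ (PG n))) X.fst X.snd q.1 q.2)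
      (pdom T n) (X.fst, X.snd) := by
      have e : (fun q : ℝ × EucSp n => V q.1 q.2 -
          tf (-p) (-(M + (2 * ε) • ContinuousLinearMap.id ℝ (PG n))) X.fst X.snd q.1 q.2) =
          fun q : ℝ × EucSp n => -(-V q.1 q.2 -
          tf p (M + (2 * ε) • ContinuousLinearMap.id ℝ (PG n)) X.fst X.snd q.1 q.2) := by
        funext q
        simp only [tf, hqn, inner_neg_left]
        ring
      rw [e]
      exact hm
    have h3 := hV.1 X.fst X.snd ⟨hX, mem_univ _⟩ _ (tf_C12 (-p) hs' X.fst X.snd _) hm2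
    rw [tf_tderiv _ hs', tf_Lop b σ _ hs', sub_self, map_zero, add_zero, le_min_iff] at h3
    simp only [hqn, qf_addId, Finset.sum_add_distrib, Finset.sum_neg_distrib,
      ← Finset.mul_sum, ← pT_apply, ← pX_apply, map_neg, inner_neg_right] at h3
    simp only [pT_apply, pX_apply] at h3
    constructor
    · linarith [h3.1]
    · linarith [h3.2]
  refine ⟨?_, (key 1 one_pos).2⟩
  set Q := ∑ k, ‖mkP 0 (scol σ X.fst X.snd k)‖ ^ 2 with hQ
  have hQ0 : 0 ≤ Q := Finset.sum_nonneg fun _ _ => by positivity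
  by_contra! hcon
  set E := p.fst + ⟪b X.fst X.snd, p.snd⟫ + (∑ k, qf M (mkP 0 (scol σ X.fst X.snd k)))
      - f X.fst X.snd with hE
  set ε := -E / (2 * (Q + 1)) with hε
  have hεpos : 0 < ε := by
    apply div_pos <;> linarith
  have h1 := (key ε hεpos).1
  have : ε * (2 * (Q + 1)) = -E := by rw [hε]; field_simp
  nlinarith

end JetSection

section HelperSection

variable {n d : ℕ}

lemma near_diag {S : Set (PG n × PG n)} (hS : IsCompact S) {F : PG n × PG n → ℝ}
    (hF : UpperSemicontinuousOn F S) (a : ℝ) (h : ∀ p ∈ S, p.1.fst = p.2.fst → F p < a) :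
    ∃ ρ > 0, ∀ p ∈ S, |p.1.fst - p.2.fst| ≤ ρ → F p < a := by
  have hc := hF.isCompact_inter_preimage_Ici hS a
  have hcont : Continuous (fun p : PG n × PG n => |p.1.fst - p.2.fst|) := by
    simp only [← pT_apply]
    fun_prop
  rcases (S ∩ F ⁻¹' Ici a).eq_empty_or_nonempty with he | hne
  · refine ⟨1, one_pos, fun p hp _ => ?_⟩
    by_contra hcon
    have : p ∈ S ∩ F ⁻¹' Ici a := ⟨hp, not_lt.1 hcon⟩
    rw [he] at this
    exact this
  · obtain ⟨q, hq, hmin⟩ := hc.exists_isMinOn hne hcont.continuousOn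
    have hqpos : 0 < |q.1.fst - q.2.fst| := by
      rw [abs_pos]
      intro h0
      exact absurd (h q hq.1 (sub_eq_zero.1 h0)) (not_lt.2 hq.2)
    refine ⟨|q.1.fst - q.2.fst| / 2, by positivity, fun p hp hle => ?_⟩
    by_contra hcon
    have : |q.1.fst - q.2.fst| ≤ |p.1.fst - p.2.fst| := hmin (show p ∈ S ∩ F ⁻¹' Ici a from ⟨hp, not_lt.1 hcon⟩)
    linarith

lemma usc_coercive_max {E : Type*} [NormedAddCommGroup E] [ProperSpace E] {D : Set E}
    (hD : IsClosed D) {F : E → ℝ} (hF : UpperSemicontinuousOn F D) {x0 : E} (hx0 : x0 ∈ D)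
    (r : ℝ) (h : ∀ x ∈ D, F x0 ≤ F x → ‖x‖ ≤ r) : ∃ x ∈ D, ∀ y ∈ D, F y ≤ F x := by
  have hc : IsCompact (D ∩ Metric.closedBall 0 r) :=
    (isCompact_closedBall 0 r).inter_left hD
  have hx0' : x0 ∈ D ∩ Metric.closedBall 0 r :=
    ⟨hx0, by rw [mem_closedBall_zero_iff]; exact h x0 hx0 le_rfl⟩
  obtain ⟨x, hx, hmax⟩ := (hF.mono inter_subset_left).exists_isMaxOn ⟨x0, hx0'⟩ hc
  refine ⟨x, hx.1, fun y hy => ?_⟩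
  by_cases hy' : F x0 ≤ F y
  · exact hmax (show y ∈ D ∩ Metric.closedBall 0 r from
      ⟨hy, by rw [mem_closedBall_zero_iff]; exact h y hy hy'⟩)
  · exact (not_le.1 hy').le.trans (hmax hx0')

lemma isClosed_strip (T : ℝ) : IsClosed (strip T n) := by
  have : strip T n = (pT n) ⁻¹' (Icc 0 T) := rfl
  rw [this]
  exact isClosed_Icc.preimage (pT n).continuous

/-- The diagonal sup. -/
lemma exists_N0 {T : ℝ} {u v : PG n → ℝ} {B m : ℝ} (hu : ∀ X ∈ strip T n, |u X| ≤ B)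
    (hv : ∀ X ∈ strip T n, |v X| ≤ B) {X0 : PG n} (hX0 : X0 ∈ strip T n)
    (hm : m ≤ u X0 + v X0) :
    ∃ N0, m ≤ N0 ∧
      (∀ κ > 0, ∃ r > 0, ∀ X ∈ strip T n, ∀ Y ∈ strip T n, X.fst = Y.fst → ‖X.snd - Y.snd‖ ≤ r →
        u X + v Y ≤ N0 + κ) ∧
      (∀ κ > 0, ∀ r > 0, ∃ X ∈ strip T n, ∃ Y ∈ strip T n, X.fst = Y.fst ∧ ‖X.snd - Y.snd‖ ≤ r ∧
        N0 - κ ≤ u X + v Y) := by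
  set A : Set ℝ := {a | ∃ r > 0, ∀ X ∈ strip T n, ∀ Y ∈ strip T n, X.fst = Y.fst →
    ‖X.snd - Y.snd‖ ≤ r → u X + v Y ≤ a} with hA
  have hne : A.Nonempty := by
    refine ⟨2 * B, 1, one_pos, fun X hX Y hY _ _ => ?_⟩
    linarith [(abs_le.1 (hu X hX)).2, (abs_le.1 (hv Y hY)).2]
  have hlb : ∀ a ∈ A, m ≤ a := by
    rintro a ⟨r, hr, ha⟩
    have := ha X0 hX0 X0 hX0 rfl (by simpa using hr.le)
    linarith
  have hbdd : BddBelow A := ⟨m, hlb⟩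
  refine ⟨sInf A, le_csInf hne hlb, ?_, ?_⟩
  · intro κ hκ
    obtain ⟨a, ⟨r, hr, ha⟩, hlt⟩ := exists_lt_of_csInf_lt hne (lt_add_of_pos_right (sInf A) hκ)
    exact ⟨r, hr, fun X hX Y hY h1 h2 => (ha X hX Y hY h1 h2).trans hlt.le⟩
  · intro κ hκ r hr
    by_contra! hcon
    have : sInf A - κ ∈ A := ⟨r, hr, fun X hX Y hY h1 h2 => (hcon X hX Y hY h1 h2).le⟩
    have := csInf_le hbdd this
    linarith

/-- Diagonal operators. -/
def diagOp (n : ℕ) (a c : ℝ) : PG n →L[ℝ] PG n :=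
  a • (iT n).comp (pT n) + c • (iX n).comp (pX n)

lemma diagOp_apply (a c : ℝ) (Z : PG n) : diagOp n a c Z = mkP (a * Z.fst) (c • Z.snd) := by
  simp only [diagOp, _root_.add_apply, _root_.smul_apply, ContinuousLinearMap.comp_apply, iT_apply,
    iX_apply, pT_apply, pX_apply]
  apply pg_ext <;> simp

lemma diagOp_sym (a c : ℝ) : SymOp (diagOp n a c) := by
  intro X Y
  rw [pg_inner, pg_inner, diagOp_apply, diagOp_apply]
  simp only [mkP_fst, mkP_snd, inner_smul_left, inner_smul_right]
  simp
  ring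

lemma qf_diagOp (a c : ℝ) (Z : PG n) :
    qf (diagOp n a c) Z = (a * Z.fst ^ 2 + c * ‖Z.snd‖ ^ 2) / 2 := by
  unfold qf
  rw [pg_inner, diagOp_apply]
  simp only [mkP_fst, mkP_snd, inner_smul_left, real_inner_self_eq_norm_sq]
  simp
  ring

/-- The total penalty. -/
def pen (a c g : ℝ) (X Y ξ η : PG n) : ℝ :=
  qf (diagOp n a c) (X - ξ) + qf (diagOp n a c) (Y - η) + qf (diagOp n a c) (ξ - η)
    + qf (diagOp n 0 g) ξ + qf (diagOp n 0 g) η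

lemma pen_eq (a c g : ℝ) (X Y ξ η : PG n) : pen a c g X Y ξ η =
    (a * ((X.fst - ξ.fst) ^ 2 + (Y.fst - η.fst) ^ 2 + (ξ.fst - η.fst) ^ 2)
    + c * (‖X.snd - ξ.snd‖ ^ 2 + ‖Y.snd - η.snd‖ ^ 2 + ‖ξ.snd - η.snd‖ ^ 2)
    + g * (‖ξ.snd‖ ^ 2 + ‖η.snd‖ ^ 2)) / 2 := by
  unfold pen
  simp only [qf_diagOp, WithLp.sub_fst, WithLp.sub_snd]
  ring

lemma tri_sq (α β γ' : EucSp n) (x y : EucSp n) (h : x - y = α + β - γ') :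
    ‖x - y‖ ^ 2 ≤ 3 * (‖α‖ ^ 2 + ‖γ'‖ ^ 2 + ‖β‖ ^ 2) := by
  have h1 : ‖x - y‖ ≤ ‖α‖ + ‖β‖ + ‖γ'‖ := by
    rw [h]
    exact (norm_sub_le _ _).trans (by gcongr; exact norm_add_le _ _)
  nlinarith [norm_nonneg (x - y), sq_nonneg (‖α‖ - ‖β‖), sq_nonneg (‖α‖ - ‖γ'‖),
    sq_nonneg (‖β‖ - ‖γ'‖)]

lemma pen_bounds {a c g C : ℝ} (ha : 0 < a) (hc : 0 < c) (hg : 0 < g) {X Y ξ η : PG n}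
    (h : pen a c g X Y ξ η ≤ C) :
    a * (X.fst - Y.fst) ^ 2 ≤ 6 * C ∧ c * ‖X.snd - Y.snd‖ ^ 2 ≤ 6 * C ∧
    c * ‖ξ.snd - η.snd‖ ^ 2 ≤ 2 * C ∧ g * ‖ξ.snd‖ ^ 2 ≤ 2 * C ∧ g * ‖η.snd‖ ^ 2 ≤ 2 * C ∧
    c * ‖X.snd - ξ.snd‖ ^ 2 ≤ 2 * C ∧ c * ‖Y.snd - η.snd‖ ^ 2 ≤ 2 * C ∧
    a * (X.fst - ξ.fst) ^ 2 ≤ 2 * C ∧ a * (Y.fst - η.fst) ^ 2 ≤ 2 * C := by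
  rw [pen_eq] at h
  have p1 : 0 ≤ a * (X.fst - ξ.fst) ^ 2 := by positivity
  have p2 : 0 ≤ a * (Y.fst - η.fst) ^ 2 := by positivity
  have p3 : 0 ≤ a * (ξ.fst - η.fst) ^ 2 := by positivity
  have p4 : 0 ≤ c * ‖X.snd - ξ.snd‖ ^ 2 := by positivity
  have p5 : 0 ≤ c * ‖Y.snd - η.snd‖ ^ 2 := by positivity
  have p6 : 0 ≤ c * ‖ξ.snd - η.snd‖ ^ 2 := by positivity
  have p7 : 0 ≤ g * ‖ξ.snd‖ ^ 2 := by positivity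
  have p8 : 0 ≤ g * ‖η.snd‖ ^ 2 := by positivity
  have t1 : (X.fst - Y.fst) ^ 2 ≤ 3 * ((X.fst - ξ.fst) ^ 2 + (Y.fst - η.fst) ^ 2
      + (ξ.fst - η.fst) ^ 2) := by
    nlinarith [sq_nonneg ((X.fst - ξ.fst) - (ξ.fst - η.fst)),
      sq_nonneg ((X.fst - ξ.fst) + (Y.fst - η.fst)), sq_nonneg ((ξ.fst - η.fst) + (Y.fst - η.fst))]
  have t2 := tri_sq (X.snd - ξ.snd) (ξ.snd - η.snd) (Y.snd - η.snd) X.snd Y.snd (by abel)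
  have t1' := mul_le_mul_of_nonneg_left t1 ha.le
  have t2' := mul_le_mul_of_nonneg_left t2 hc.le
  refine ⟨?_, ?_, ?_, ?_, ?_, ?_, ?_, ?_, ?_⟩ <;> linarith

lemma pen_nonneg {a c g : ℝ} (ha : 0 < a) (hc : 0 < c) (hg : 0 < g) (X Y ξ η : PG n) :
    0 ≤ pen a c g X Y ξ η := by
  rw [pen_eq]; positivity

lemma sq_le_of_mul_le {c x C : ℝ} (hc : 0 < c) (hx : 0 ≤ x) (h : c * x ^ 2 ≤ C) :
    x ≤ Real.sqrt (C / c) := by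
  apply Real.le_sqrt_of_sq_le
  rw [le_div_iff₀ hc]
  linarith

lemma pg_norm_le (X : PG n) : ‖X‖ ≤ |X.fst| + ‖X.snd‖ := by
  have := pg_norm_sq X
  refine (pow_le_pow_iff_left₀ (norm_nonneg _) (by positivity) two_ne_zero).1 ?_
  rw [this]
  nlinarith [sq_abs X.fst, mul_nonneg (abs_nonneg X.fst) (norm_nonneg X.snd)]

lemma abs_fst_le {T : ℝ} {X : PG n} (hX : X ∈ strip T n) : |X.fst| ≤ T := by
  have h1 : 0 ≤ X.fst := hX.1
  rw [abs_of_nonneg h1]; exact hX.2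

/-- Attainment of sup-convolution. -/
lemma supconv_attained {T : ℝ} (hT : 0 < T) {u : PG n → ℝ} {B : ℝ}
    (husc : UpperSemicontinuousOn u (strip T n)) (hu : ∀ X ∈ strip T n, |u X| ≤ B)
    {a c : ℝ} (ha : 0 < a) (hc : 0 < c) (ξ : PG n) :
    ∃ X ∈ strip T n, ∀ X' ∈ strip T n,
      u X' - qf (diagOp n a c) (X' - ξ) ≤ u X - qf (diagOp n a c) (X - ξ) := by
  have hcont : Continuous fun X : PG n => -qf (diagOp n a c) (X - ξ) := by
    unfold qf; fun_prop
  have hF : UpperSemicontinuousOn (fun X => u X + -qf (diagOp n a c) (X - ξ)) (strip T n) :=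
    husc.add (hcont.upperSemicontinuous.upperSemicontinuousOn _)
  have h0 : mkP 0 ξ.snd ∈ strip T n := ⟨le_rfl, hT.le⟩
  set C := 2 * B + qf (diagOp n a c) (mkP 0 ξ.snd - ξ) with hC
  obtain ⟨X, hX, hmax⟩ := usc_coercive_max (isClosed_strip T) hF h0
    (T + (Real.sqrt (2 * C / c) + ‖ξ.snd‖)) (by
      intro X hX hle
      have h1 := (abs_le.1 (hu X hX)).2
      have h2 := (abs_le.1 (hu _ h0)).1
      have h3 : qf (diagOp n a c) (X - ξ) ≤ C := by rw [hC]; linarith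
      rw [qf_diagOp] at h3
      have h4 : 0 ≤ a * (X - ξ).fst ^ 2 := by positivity
      have h5 : ‖(X - ξ).snd‖ ≤ Real.sqrt (2 * C / c) :=
        sq_le_of_mul_le hc (norm_nonneg _) (by linarith)
      have h6 : ‖X.snd‖ ≤ ‖(X - ξ).snd‖ + ‖ξ.snd‖ := by
        have := norm_add_le (X - ξ).snd ξ.snd
        simpa using this
      have := pg_norm_le X
      have := abs_fst_le hX
      linarith)
  exact ⟨X, hX, fun X' hX' => by have := hmax X' hX'; linarith⟩

/-- Existence of the maximum for the doubled problem. -/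
lemma doubled_max {T : ℝ} {u v : PG n → ℝ} {B : ℝ}
    (husc : UpperSemicontinuousOn u (strip T n)) (hu : ∀ X ∈ strip T n, |u X| ≤ B)
    (hvsc : UpperSemicontinuousOn v (strip T n)) (hv : ∀ X ∈ strip T n, |v X| ≤ B)
    {a c g : ℝ} (ha : 0 < a) (hc : 0 < c) (hg : 0 < g) {X0 Y0 : PG n} (hX0 : X0 ∈ strip T n)
    (hY0 : Y0 ∈ strip T n) (hpos : 0 ≤ u X0 + v Y0 - pen a c g X0 Y0 X0 Y0) :
    ∃ Xh ∈ strip T n, ∃ Yh ∈ strip T n, ∃ ξh ηh, ∀ X ∈ strip T n, ∀ Y ∈ strip T n, ∀ ξ η,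
      u X + v Y - pen a c g X Y ξ η ≤ u Xh + v Yh - pen a c g Xh Yh ξh ηh := by
  set D : Set (PG n × PG n × PG n × PG n) := {p | p.1 ∈ strip T n ∧ p.2.1 ∈ strip T n} with hD
  have hDc : IsClosed D :=
    ((isClosed_strip T).preimage continuous_fst).inter
      ((isClosed_strip T).preimage (continuous_fst.comp continuous_snd))
  have h1 : UpperSemicontinuousOn (fun p : PG n × PG n × PG n × PG n => u p.1) D :=
    husc.comp continuous_fst.continuousOn (fun p hp => hp.1)
  have h2 : UpperSemicontinuousOn (fun p : PG n × PG n × PG n × PG n => v p.2.1) D :=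
    hvsc.comp (continuous_fst.comp continuous_snd).continuousOn (fun p hp => hp.2)
  have hcont : Continuous fun p : PG n × PG n × PG n × PG n =>
      -pen a c g p.1 p.2.1 p.2.2.1 p.2.2.2 := by
    unfold pen qf; fun_prop
  have hF : UpperSemicontinuousOn (fun p : PG n × PG n × PG n × PG n =>
      u p.1 + v p.2.1 + -pen a c g p.1 p.2.1 p.2.2.1 p.2.2.2) D :=
    (h1.add h2).add (hcont.upperSemicontinuous.upperSemicontinuousOn _)
  set Rg := Real.sqrt (2 * (2 * B) / g)
  set Rc := Real.sqrt (2 * (2 * B) / c)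
  set Ra := Real.sqrt (2 * (2 * B) / a)
  have hRg : 0 ≤ Rg := Real.sqrt_nonneg _
  have hRc : 0 ≤ Rc := Real.sqrt_nonneg _
  have hRa : 0 ≤ Ra := Real.sqrt_nonneg _
  obtain ⟨p, hp, hmax⟩ := usc_coercive_max hDc hF (x0 := (X0, Y0, X0, Y0)) ⟨hX0, hY0⟩
    (T + Rg + Rc + Ra) (by
      rintro ⟨X, Y, ξ, η⟩ ⟨hX, hY⟩ hle
      simp only at hle hX hY
      have b1 := (abs_le.1 (hu X hX)).2
      have b2 := (abs_le.1 (hv Y hY)).2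
      have b3 : pen a c g X Y ξ η ≤ 2 * B := by linarith
      obtain ⟨-, -, -, q4, q5, q6, q7, q8, q9⟩ := pen_bounds ha hc hg b3
      have c4 : ‖ξ.snd‖ ≤ Rg := sq_le_of_mul_le hg (norm_nonneg _) q4
      have c5 : ‖η.snd‖ ≤ Rg := sq_le_of_mul_le hg (norm_nonneg _) q5
      have c6 : ‖X.snd - ξ.snd‖ ≤ Rc := sq_le_of_mul_le hc (norm_nonneg _) q6
      have c7 : ‖Y.snd - η.snd‖ ≤ Rc := sq_le_of_mul_le hc (norm_nonneg _) q7
      have c8 : |X.fst - ξ.fst| ≤ Ra := sq_le_of_mul_le ha (abs_nonneg _) (by rwa [sq_abs])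
      have c9 : |Y.fst - η.fst| ≤ Ra := sq_le_of_mul_le ha (abs_nonneg _) (by rwa [sq_abs])
      have d1 := abs_fst_le hX
      have d2 := abs_fst_le hY
      have d3 : |ξ.fst| ≤ |X.fst| + |X.fst - ξ.fst| := by
        have := abs_sub X.fst (X.fst - ξ.fst)
        simpa using this
      have d4 : |η.fst| ≤ |Y.fst| + |Y.fst - η.fst| := by
        have := abs_sub Y.fst (Y.fst - η.fst)
        simpa using this
      have d5 : ‖X.snd‖ ≤ ‖X.snd - ξ.snd‖ + ‖ξ.snd‖ := by
        have := norm_add_le (X.snd - ξ.snd) ξ.snd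
        simpa using this
      have d6 : ‖Y.snd‖ ≤ ‖Y.snd - η.snd‖ + ‖η.snd‖ := by
        have := norm_add_le (Y.snd - η.snd) η.snd
        simpa using this
      have e1 := pg_norm_le X
      have e2 := pg_norm_le Y
      have e3 := pg_norm_le ξ
      have e4 := pg_norm_le η
      simp only [Prod.norm_def, sup_le_iff]
      refine ⟨?_, ?_, ?_, ?_⟩ <;> linarith)
  obtain ⟨Xh, Yh, ξh, ηh⟩ := p
  refine ⟨Xh, hp.1, Yh, hp.2, ξh, ηh, fun X hX Y hY ξ η => ?_⟩
  have := hmax (X, Y, ξ, η) ⟨hX, hY⟩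
  simp only at this
  linarith

end HelperSection

section DoublingSection

variable {n d : ℕ}

lemma isCompact_pairs (T Rad r0 : ℝ) :
    IsCompact {p : PG n × PG n | p.1 ∈ strip T n ∧ p.2 ∈ strip T n ∧ ‖p.1‖ ≤ Rad ∧ ‖p.2‖ ≤ Rad ∧
      ‖p.1.snd - p.2.snd‖ ≤ r0} := by
  have hc : IsCompact (Metric.closedBall (0 : PG n) Rad ×ˢ Metric.closedBall (0 : PG n) Rad) :=
    (isCompact_closedBall _ _).prod (isCompact_closedBall _ _)
  refine hc.of_isClosed_subset ?_ ?_
  · simp only [setOf_and, ← pX_apply]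
    refine ((isClosed_strip T).preimage continuous_fst).inter
      (((isClosed_strip T).preimage continuous_snd).inter ?_)
    refine (isClosed_le (by fun_prop) continuous_const).inter
      ((isClosed_le (by fun_prop) continuous_const).inter
      (isClosed_le (by fun_prop) continuous_const))
  · rintro p ⟨-, -, h1, h2, -⟩
    exact ⟨by simpa using h1, by simpa using h2⟩

lemma pen_shift (a c γ : ℝ) (X Y ξ η : PG n) (ζ : EucSp n) :
    pen a c (2 * γ) (mkP X.fst (X.snd + ζ)) (mkP Y.fst (Y.snd + ζ))
      (mkP ξ.fst (ξ.snd + ζ)) (mkP η.fst (η.snd + ζ)) = pen a c (2 * γ) X Y ξ η +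
        γ * (‖ξ.snd + ζ‖ ^ 2 - ‖ξ.snd‖ ^ 2 + ‖η.snd + ζ‖ ^ 2 - ‖η.snd‖ ^ 2) := by
  rw [pen_eq, pen_eq]
  simp only [mkP_fst, mkP_snd, add_sub_add_right_eq_sub]
  ring

lemma mkP_strip {T : ℝ} {X : PG n} (hX : X ∈ strip T n) (ζ : EucSp n) :
    mkP X.fst (X.snd + ζ) ∈ strip T n := hX

set_option maxHeartbeats 4000000 in
theorem doubling {T B m κ r1 : ℝ} (hT : 0 < T) {u v : PG n → ℝ}
    (husc : UpperSemicontinuousOn u (strip T n)) (hu : ∀ X ∈ strip T n, |u X| ≤ B)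
    (hvsc : UpperSemicontinuousOn v (strip T n)) (hv : ∀ X ∈ strip T n, |v X| ≤ B)
    {X0 : PG n} (hX0 : X0 ∈ strip T n) (hm : m ≤ u X0 + v X0) (hκ : 0 < κ) (hκm : 8 * κ ≤ m)
    (hr1 : 0 < r1)
    (hterm : ∀ X ∈ strip T n, ∀ Y ∈ strip T n, X.fst = T → Y.fst = T → ‖X.snd - Y.snd‖ ≤ r1 →
      u X + v Y < m / 2)
    (Θ : PG n × PG n → ℝ) (hΘ : Continuous Θ) (hΘ0 : ∀ p, p.1.fst = p.2.fst → Θ p = 0) :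
    ∃ ε > 0, ∃ γ > 0, ε ≤ κ ∧ γ ≤ κ ∧ ∃ X ∈ strip T n, ∃ Y ∈ strip T n,
    ∃ ξ η p1 p2 : PG n, ∃ M N : PG n →L[ℝ] PG n,
      SymOp M ∧ SymOp N ∧ X.fst < T ∧ Y.fst < T ∧
      |X.fst - Y.fst| ≤ r1 ∧ ‖X.snd - Y.snd‖ ≤ r1 ∧
      ‖X.snd - Y.snd‖ ^ 2 ≤ 36 * κ * ε ∧ ‖ξ.snd - η.snd‖ ^ 2 ≤ 12 * κ * ε ∧
      γ * ‖ξ.snd‖ ^ 2 ≤ 6 * κ ∧ γ * ‖η.snd‖ ^ 2 ≤ 6 * κ ∧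
      Θ (X, Y) ≤ ε ^ 2 ∧
      p1.fst + p2.fst ≤ 2 * κ ∧
      ‖p1.snd - (1 / ε) • (ξ.snd - η.snd) - (2 * γ) • ξ.snd‖ ≤ κ ∧
      ‖p2.snd + (1 / ε) • (ξ.snd - η.snd) - (2 * γ) • η.snd‖ ≤ κ ∧
      (∀ h k : EucSp n, qf M (mkP 0 h) + qf N (mkP 0 k) ≤ 1 / (2 * ε) * ‖h - k‖ ^ 2
        + γ * (‖h‖ ^ 2 + ‖k‖ ^ 2) + κ * (‖h‖ ^ 2 + ‖k‖ ^ 2)) ∧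
      UpJet (strip T n) u X p1 M ∧ UpJet (strip T n) v Y p2 N ∧
      (∀ ζ : EucSp n, u (mkP X.fst (X.snd + ζ)) + v (mkP Y.fst (Y.snd + ζ)) ≤ u X + v Y + κ +
        γ * (‖ξ.snd + ζ‖ ^ 2 - ‖ξ.snd‖ ^ 2 + ‖η.snd + ζ‖ ^ 2 - ‖η.snd‖ ^ 2)) := by
  obtain ⟨N0, hmN0, hi, hii⟩ := exists_N0 hu hv hX0 hm
  have hB : 0 < B := by
    have := (abs_le.1 (hu X0 hX0)).2
    have := (abs_le.1 (hv X0 hX0)).2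
    linarith
  obtain ⟨r0', hr0', hi⟩ := hi κ hκ
  obtain ⟨r0, hr0, hr0a, hr0b⟩ : ∃ r0 > 0, r0 ≤ r0' ∧ r0 ≤ r1 :=
    ⟨min r0' r1, by positivity, min_le_left _ _, min_le_right _ _⟩
  obtain ⟨ε, hε, hεκ, hεr⟩ : ∃ ε > 0, ε ≤ κ ∧ 12 * B * ε ≤ r0 ^ 2 := by
    refine ⟨min κ (r0 ^ 2 / (12 * B)), by positivity, min_le_left _ _, ?_⟩
    calc 12 * B * min κ (r0 ^ 2 / (12 * B)) ≤ 12 * B * (r0 ^ 2 / (12 * B)) := by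
          gcongr; exact min_le_right _ _
      _ = r0 ^ 2 := by field_simp
  obtain ⟨X1, hX1, Y1, hY1, ht1, hd1, hval1⟩ := hii κ hκ (Real.sqrt (2 * ε * κ)) (by positivity)
  have hd1' : ‖X1.snd - Y1.snd‖ ^ 2 ≤ 2 * ε * κ := by
    have := Real.sq_sqrt (show 0 ≤ 2 * ε * κ by positivity)
    nlinarith [norm_nonneg (X1.snd - Y1.snd)]
  obtain ⟨γ, hγ, hγκ, hγx⟩ : ∃ γ > 0, γ ≤ κ ∧ γ * (‖X1.snd‖ ^ 2 + ‖Y1.snd‖ ^ 2) ≤ κ := by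
    refine ⟨min κ (κ / (‖X1.snd‖ ^ 2 + ‖Y1.snd‖ ^ 2 + 1)), by positivity, min_le_left _ _, ?_⟩
    calc min κ (κ / (‖X1.snd‖ ^ 2 + ‖Y1.snd‖ ^ 2 + 1)) * (‖X1.snd‖ ^ 2 + ‖Y1.snd‖ ^ 2)
        ≤ (κ / (‖X1.snd‖ ^ 2 + ‖Y1.snd‖ ^ 2 + 1)) * (‖X1.snd‖ ^ 2 + ‖Y1.snd‖ ^ 2 + 1) := by
          exact mul_le_mul (min_le_right _ _) (by linarith) (by positivity) (by positivity)
      _ = κ := by field_simp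
  obtain ⟨cc, hcc⟩ : ∃ cc, cc = 1 / ε := ⟨_, rfl⟩
  have hccpos : 0 < cc := by rw [hcc]; positivity
  have hccε : cc * ε = 1 := by rw [hcc]; field_simp
  obtain ⟨gg, hgg⟩ : ∃ gg, gg = 2 * γ := ⟨_, rfl⟩
  have hggpos : 0 < gg := by rw [hgg]; positivity
  set Rg := Real.sqrt (2 * (2 * B) / gg)
  set Rc := Real.sqrt (2 * (2 * B) / cc)
  set Rad := T + Rg + Rc with hRad
  set S := {p : PG n × PG n | p.1 ∈ strip T n ∧ p.2 ∈ strip T n ∧ ‖p.1‖ ≤ Rad ∧ ‖p.2‖ ≤ Rad ∧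
      ‖p.1.snd - p.2.snd‖ ≤ r0} with hS
  have hScomp : IsCompact S := isCompact_pairs T Rad r0
  have hF : UpperSemicontinuousOn (fun p : PG n × PG n => u p.1 + v p.2) S :=
    UpperSemicontinuousOn.add (husc.comp continuous_fst.continuousOn (fun p hp => hp.1))
      (hvsc.comp continuous_snd.continuousOn (fun p hp => hp.2.1))
  obtain ⟨ρ1, hρ1, hn1⟩ := near_diag hScomp hF (N0 + 2 * κ) (by
    rintro p ⟨h1, h2, -, -, h5⟩ hd
    have := hi p.1 h1 p.2 h2 hd (h5.trans hr0a)
    linarith)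
  have hTcl : IsClosed {p : PG n × PG n | p.1.fst = T ∨ p.2.fst = T} := by
    simp only [setOf_or, ← pT_apply]
    exact (isClosed_eq (by fun_prop) continuous_const).union
      (isClosed_eq (by fun_prop) continuous_const)
  obtain ⟨ρ2, hρ2, hn2⟩ := near_diag (hScomp.inter_right hTcl) (hF.mono inter_subset_left) (m / 2) (by
    rintro p ⟨⟨h1, h2, -, -, h5⟩, h6⟩ hd
    have h6' : p.1.fst = T ∧ p.2.fst = T := by
      rcases h6 with h6 | h6
      · exact ⟨h6, by rw [← hd]; exact h6⟩
      · exact ⟨by rw [hd]; exact h6, h6⟩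
    exact hterm p.1 h1 p.2 h2 h6'.1 h6'.2 (h5.trans hr0b))
  obtain ⟨ρ3, hρ3, hn3⟩ := near_diag hScomp (hΘ.upperSemicontinuous.upperSemicontinuousOn S)
    (ε ^ 2) (by
    intro p _ hd
    rw [hΘ0 p hd]; positivity)
  obtain ⟨ρ, hρ, hρa, hρb, hρc, hρd⟩ : ∃ ρ > 0, ρ ≤ ρ1 ∧ ρ ≤ ρ2 ∧ ρ ≤ ρ3 ∧ ρ ≤ r1 :=
    ⟨min (min ρ1 ρ2) (min ρ3 r1), by positivity, (min_le_left _ _).trans (min_le_left _ _),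
      (min_le_left _ _).trans (min_le_right _ _), (min_le_right _ _).trans (min_le_left _ _),
      (min_le_right _ _).trans (min_le_right _ _)⟩
  obtain ⟨a, ha⟩ : ∃ a, a = 12 * B / ρ ^ 2 := ⟨_, rfl⟩
  have hapos : 0 < a := by rw [ha]; positivity
  have haρ : a * ρ ^ 2 = 12 * B := by rw [ha]; field_simp
  have hpen1 : pen a cc gg X1 Y1 X1 Y1 ≤ 2 * κ := by
    rw [pen_eq, ht1, hgg]
    simp only [sub_self, norm_zero]
    have : cc * ‖X1.snd - Y1.snd‖ ^ 2 ≤ 2 * κ := by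
      calc cc * ‖X1.snd - Y1.snd‖ ^ 2 ≤ cc * (2 * ε * κ) := by gcongr
        _ = 2 * κ * (cc * ε) := by ring
        _ = 2 * κ := by rw [hccε, mul_one]
    linarith
  obtain ⟨Xh, hXh, Yh, hYh, ξh, ηh, hmax⟩ := doubled_max husc hu hvsc hv hapos hccpos hggpos hX1 hY1
    (by linarith)
  obtain ⟨X, hX, Y, hY, ξ, η, M, N, hM, hN, hval, he1, he2, hmat, hJ1, hJ2⟩ :=
    ishii (strip T n) u v (diagOp n a cc) (diagOp n 0 gg) (diagOp_sym _ _) (diagOp_sym _ _)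
      (supconv_attained hT husc hu hapos hccpos) (supconv_attained hT hvsc hv hapos hccpos)
      Xh ξh ηh Yh hXh hYh (by
        intro X hX Y hY ξ η
        have := hmax X hX Y hY ξ η
        unfold pen at this
        linarith) κ hκ
  have hval' : u Xh + v Yh - pen a cc gg Xh Yh ξh ηh - κ ≤ u X + v Y - pen a cc gg X Y ξ η := by
    unfold pen; linarith
  have hvalN : N0 - 4 * κ ≤ u X + v Y - pen a cc gg X Y ξ η := by
    have := hmax X1 hX1 Y1 hY1 X1 Y1
    linarith
  have hpnn := pen_nonneg hapos hccpos hggpos X Y ξ η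
  have hcrude : pen a cc gg X Y ξ η ≤ 2 * B := by
    have := (abs_le.1 (hu X hX)).2
    have := (abs_le.1 (hv Y hY)).2
    linarith
  obtain ⟨q1, q2, -, q4, q5, q6, q7, -, -⟩ := pen_bounds hapos hccpos hggpos hcrude
  have hmul : ∀ z C : ℝ, cc * z ≤ C → z ≤ C * ε := by
    intro z C h
    calc z = (cc * z) * ε := by rw [mul_right_comm, hccε, one_mul]
      _ ≤ C * ε := by gcongr
  have hxy : ‖X.snd - Y.snd‖ ≤ r0 := by
    have := hmul _ _ q2
    exact (pow_le_pow_iff_left₀ (norm_nonneg _) hr0.le two_ne_zero).1 (by linarith)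
  have hts : |X.fst - Y.fst| ≤ ρ := by
    have : (X.fst - Y.fst) ^ 2 ≤ ρ ^ 2 := by
      refine le_of_mul_le_mul_left ?_ hapos
      rw [haρ]; linarith
    exact abs_le_of_sq_le_sq this hρ.le
  have hXS : (X, Y) ∈ S := by
    have c4 : ‖ξ.snd‖ ≤ Rg := sq_le_of_mul_le hggpos (norm_nonneg _) q4
    have c5 : ‖η.snd‖ ≤ Rg := sq_le_of_mul_le hggpos (norm_nonneg _) q5
    have c6 : ‖X.snd - ξ.snd‖ ≤ Rc := sq_le_of_mul_le hccpos (norm_nonneg _) q6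
    have c7 : ‖Y.snd - η.snd‖ ≤ Rc := sq_le_of_mul_le hccpos (norm_nonneg _) q7
    have d1 := abs_fst_le hX
    have d2 := abs_fst_le hY
    have d5 : ‖X.snd‖ ≤ ‖X.snd - ξ.snd‖ + ‖ξ.snd‖ := by
      have := norm_add_le (X.snd - ξ.snd) ξ.snd
      simpa using this
    have d6 : ‖Y.snd‖ ≤ ‖Y.snd - η.snd‖ + ‖η.snd‖ := by
      have := norm_add_le (Y.snd - η.snd) η.snd
      simpa using this
    have e1 := pg_norm_le X
    have e2 := pg_norm_le Y
    refine ⟨hX, hY, ?_, ?_, hxy⟩ <;> simp only [hRad] <;> linarith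
  have hFle := hn1 (X, Y) hXS (hts.trans hρa)
  simp only at hFle
  have hnotT : X.fst ≠ T ∧ Y.fst ≠ T := by
    by_contra hcon
    have hcon' : X.fst = T ∨ Y.fst = T := by tauto
    have := hn2 (X, Y) ⟨hXS, hcon'⟩ (hts.trans hρb)
    simp only at this
    linarith
  have hfine : pen a cc gg X Y ξ η ≤ 6 * κ := by linarith
  obtain ⟨-, q2, q3, q4, q5, -, -, -, -⟩ := pen_bounds hapos hccpos hggpos hfine
  have hX2 : X.fst ≤ T := hX.2
  have hY2 : Y.fst ≤ T := hY.2
  have hfst_le : ∀ Z : PG n, |Z.fst| ≤ ‖Z‖ := by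
    intro Z
    have := pg_norm_sq Z
    exact abs_le_of_sq_le_sq (by nlinarith [sq_nonneg ‖Z.snd‖]) (norm_nonneg _)
  have hsnd_le : ∀ Z : PG n, ‖Z.snd‖ ≤ ‖Z‖ := by
    intro Z
    have := pg_norm_sq Z
    exact (pow_le_pow_iff_left₀ (norm_nonneg _) (norm_nonneg _) two_ne_zero).1
      (by nlinarith [sq_nonneg Z.fst])
  refine ⟨ε, hε, γ, hγ, hεκ, hγκ, X, hX, Y, hY, ξ, η, _, _, M, N, hM, hN,
    lt_of_le_of_ne hX2 hnotT.1, lt_of_le_of_ne hY2 hnotT.2, hts.trans hρd, hxy.trans hr0b, ?_, ?_, ?_, ?_,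
    (hn3 (X, Y) hXS (hts.trans hρc)).le, ?_, ?_, ?_, ?_, hJ1, hJ2, ?_⟩
  · have := hmul _ _ q2
    linarith
  · have := hmul _ _ q3
    linarith
  · rw [hgg] at q4; linarith
  · rw [hgg] at q5; linarith
  · have e1 := (abs_le.1 ((hfst_le _).trans he1)).2
    have e2 := (abs_le.1 ((hfst_le _).trans he2)).2
    simp only [diagOp_apply, WithLp.sub_fst, WithLp.add_fst, mkP_fst] at e1 e2 ⊢
    linarith
  · have e1 := (hsnd_le _).trans he1
    simp only [diagOp_apply, WithLp.sub_snd, WithLp.add_snd, mkP_snd, hcc, hgg] at e1 ⊢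
    exact e1
  · have e1 := (hsnd_le _).trans he2
    simp only [diagOp_apply, WithLp.sub_snd, WithLp.add_snd, mkP_snd, hcc, hgg] at e1 ⊢
    exact e1
  · intro h k
    have := hmat (mkP 0 h) (mkP 0 k)
    rw [qf_diagOp, qf_diagOp, qf_diagOp, pg_norm_sq, pg_norm_sq] at this
    simp only [WithLp.sub_snd, WithLp.sub_fst, mkP_fst, mkP_snd] at this
    have e : 1 / (2 * ε) = cc / 2 := by rw [hcc]; field_simp
    rw [e]
    rw [hgg] at this
    linarith
  · intro ζ
    have h1 := hmax (mkP X.fst (X.snd + ζ)) (mkP_strip hX ζ) (mkP Y.fst (Y.snd + ζ)) (mkP_strip hY ζ)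
      (mkP ξ.fst (ξ.snd + ζ)) (mkP η.fst (η.snd + ζ))
    rw [hgg] at h1 hval'
    rw [pen_shift] at h1
    linarith

end DoublingSection

section CoreSection

variable {n d : ℕ}

lemma uc_close {E : Type*} [PseudoMetricSpace E] {F : E → ℝ} {s : Set E}
    (h : UniformContinuousOn F s) {κ : ℝ} (hκ : 0 < κ) :
    ∃ r > 0, ∀ x ∈ s, ∀ y ∈ s, dist x y ≤ r → |F x - F y| ≤ κ := by
  obtain ⟨δ, hδ, h⟩ := Metric.uniformContinuousOn_iff.1 h κ hκ
  refine ⟨δ / 2, by positivity, fun x hx y hy hd => ?_⟩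
  have := h x hx y hy (by linarith)
  rw [Real.dist_eq] at this
  exact this.le

/-- First order part estimate. -/
lemma drift_est {bX bY pX1 pY1 ξ η : EucSp n} {ε γ κ CL Cb dx : ℝ} (hε : 0 < ε) (hγ : 0 < γ)
    (hκ : 0 < κ) (hεκ : ε ≤ κ) (hγκ : γ ≤ κ) (hCL : 0 ≤ CL) (hCb : 0 ≤ Cb) (hdx : 0 ≤ dx)
    (hbX : ‖bX‖ ≤ Cb) (hbY : ‖bY‖ ≤ Cb) (hbd : ‖bX - bY‖ ≤ CL * dx + ε)
    (hdx2 : dx ^ 2 ≤ 36 * κ * ε) (hdξ : ‖ξ - η‖ ^ 2 ≤ 12 * κ * ε)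
    (hξ : γ * ‖ξ‖ ^ 2 ≤ 6 * κ) (hη : γ * ‖η‖ ^ 2 ≤ 6 * κ)
    (h1 : ‖pX1 - (1 / ε) • (ξ - η) - (2 * γ) • ξ‖ ≤ κ)
    (h2 : ‖pY1 + (1 / ε) • (ξ - η) - (2 * γ) • η‖ ≤ κ) :
    ⟪bX, pX1⟫ + ⟪bY, pY1⟫ ≤ (24 * CL + 4 + 14 * Cb) * κ := by
  have hsm : ∀ ξ : EucSp n, γ * ‖ξ‖ ^ 2 ≤ 6 * κ → γ * ‖ξ‖ ≤ 3 * κ := by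
    intro ξ hξ
    refine (pow_le_pow_iff_left₀ (by positivity) (by positivity) two_ne_zero).1 ?_
    have : γ * (γ * ‖ξ‖ ^ 2) ≤ κ * (6 * κ) := by gcongr
    nlinarith
  have s1 := hsm ξ hξ
  have s2 := hsm η hη
  set e1 := pX1 - (1 / ε) • (ξ - η) - (2 * γ) • ξ with he1
  set e2 := pY1 + (1 / ε) • (ξ - η) - (2 * γ) • η with he2
  have i1 : ⟪bX, pX1⟫ = ⟪bX, e1⟫ + (1 / ε) * ⟪bX, ξ - η⟫ + 2 * γ * ⟪bX, ξ⟫ := by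
    have : pX1 = e1 + (1 / ε) • (ξ - η) + (2 * γ) • ξ := by rw [he1]; abel
    rw [this, inner_add_right, inner_add_right, inner_smul_right, inner_smul_right]
  have i2 : ⟪bY, pY1⟫ = ⟪bY, e2⟫ - (1 / ε) * ⟪bY, ξ - η⟫ + 2 * γ * ⟪bY, η⟫ := by
    have : pY1 = e2 - (1 / ε) • (ξ - η) + (2 * γ) • η := by rw [he2]; abel
    rw [this, inner_add_right, inner_sub_right, inner_smul_right, inner_smul_right]
  have c1 : ⟪bX, e1⟫ ≤ Cb * κ := (real_inner_le_norm _ _).trans (by gcongr)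
  have c2 : ⟪bY, e2⟫ ≤ Cb * κ := (real_inner_le_norm _ _).trans (by gcongr)
  have c3 : 2 * γ * ⟪bX, ξ⟫ ≤ 6 * Cb * κ := by
    have : ⟪bX, ξ⟫ ≤ Cb * ‖ξ‖ := (real_inner_le_norm _ _).trans (by gcongr)
    calc 2 * γ * ⟪bX, ξ⟫ ≤ 2 * γ * (Cb * ‖ξ‖) := by gcongr
      _ = 2 * Cb * (γ * ‖ξ‖) := by ring
      _ ≤ 2 * Cb * (3 * κ) := by gcongr
      _ = _ := by ring
  have c4 : 2 * γ * ⟪bY, η⟫ ≤ 6 * Cb * κ := by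
    have : ⟪bY, η⟫ ≤ Cb * ‖η‖ := (real_inner_le_norm _ _).trans (by gcongr)
    calc 2 * γ * ⟪bY, η⟫ ≤ 2 * γ * (Cb * ‖η‖) := by gcongr
      _ = 2 * Cb * (γ * ‖η‖) := by ring
      _ ≤ 2 * Cb * (3 * κ) := by gcongr
      _ = _ := by ring
  have hdξ' : ‖ξ - η‖ ≤ 4 * κ := by
    refine (pow_le_pow_iff_left₀ (by positivity) (by positivity) two_ne_zero).1 ?_
    have : 12 * κ * ε ≤ 12 * κ * κ := by gcongr
    nlinarith
  have c5 : (1 / ε) * ⟪bX, ξ - η⟫ - (1 / ε) * ⟪bY, ξ - η⟫ ≤ (24 * CL + 4) * κ := by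
    rw [← mul_sub, ← inner_sub_left]
    have a1 : ⟪bX - bY, ξ - η⟫ ≤ (CL * dx + ε) * ‖ξ - η‖ :=
      (real_inner_le_norm _ _).trans (by gcongr)
    have a2 : dx * ‖ξ - η‖ ≤ 24 * κ * ε := by nlinarith [sq_nonneg (dx - ‖ξ - η‖)]
    have a3 : (CL * dx + ε) * ‖ξ - η‖ ≤ ε * ((24 * CL + 4) * κ) := by
      have := mul_le_mul_of_nonneg_left a2 hCL
      have := mul_le_mul_of_nonneg_left hdξ' hε.le
      nlinarith
    calc 1 / ε * ⟪bX - bY, ξ - η⟫ ≤ 1 / ε * (ε * ((24 * CL + 4) * κ)) := by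
          gcongr; exact a1.trans a3
      _ = _ := by field_simp
  rw [i1, i2]
  linarith

/-- Second order part estimate. -/
lemma diff_est {M N : PG n →L[ℝ] PG n} {s1 s2 s3 : Fin d → EucSp n} {ε γ κ CL2 Cs dx : ℝ}
    (hε : 0 < ε) (hγ : 0 < γ) (hεκ : ε ≤ κ) (hγκ : γ ≤ κ)
    (hmat : ∀ h k : EucSp n, qf M (mkP 0 h) + qf N (mkP 0 k) ≤ 1 / (2 * ε) * ‖h - k‖ ^ 2
        + γ * (‖h‖ ^ 2 + ‖k‖ ^ 2) + κ * (‖h‖ ^ 2 + ‖k‖ ^ 2))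
    (h1 : ∑ k, ‖s1 k‖ ^ 2 ≤ Cs) (h3 : ∑ k, ‖s3 k‖ ^ 2 ≤ Cs) (hCL2 : 0 ≤ CL2)
    (h12 : ∑ k, ‖s1 k - s2 k‖ ^ 2 ≤ CL2 * dx ^ 2) (h23 : ∑ k, ‖s2 k - s3 k‖ ^ 2 ≤ ε ^ 2)
    (hdx2 : dx ^ 2 ≤ 36 * κ * ε) :
    ∑ k, qf M (mkP 0 (s1 k)) + ∑ k, qf N (mkP 0 (s3 k)) ≤ (36 * CL2 + 1 + 4 * Cs) * κ := by
  have hCs : 0 ≤ Cs := (Finset.sum_nonneg fun _ _ => by positivity).trans h1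
  have hκ : 0 < κ := hε.trans_le hεκ
  have a0 : ∑ k, qf M (mkP 0 (s1 k)) + ∑ k, qf N (mkP 0 (s3 k)) ≤
      1 / (2 * ε) * (∑ k, ‖s1 k - s3 k‖ ^ 2) + (γ + κ) * (∑ k, ‖s1 k‖ ^ 2 + ∑ k, ‖s3 k‖ ^ 2) := by
    rw [← Finset.sum_add_distrib, ← Finset.sum_add_distrib, Finset.mul_sum, Finset.mul_sum,
      ← Finset.sum_add_distrib]
    refine Finset.sum_le_sum fun k _ => ?_
    have := hmat (s1 k) (s3 k)
    linarith
  have a1 : ∑ k, ‖s1 k - s3 k‖ ^ 2 ≤ 2 * ∑ k, ‖s1 k - s2 k‖ ^ 2 + 2 * ∑ k, ‖s2 k - s3 k‖ ^ 2 := by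
    rw [Finset.mul_sum, Finset.mul_sum, ← Finset.sum_add_distrib]
    refine Finset.sum_le_sum fun k _ => ?_
    have : ‖s1 k - s3 k‖ ≤ ‖s1 k - s2 k‖ + ‖s2 k - s3 k‖ := norm_sub_le_norm_sub_add_norm_sub _ _ _
    nlinarith [norm_nonneg (s1 k - s3 k), sq_nonneg (‖s1 k - s2 k‖ - ‖s2 k - s3 k‖)]
  have a2 : ∑ k, ‖s1 k - s3 k‖ ^ 2 ≤ 2 * ε * ((36 * CL2 + 1) * κ) := by
    have := mul_le_mul_of_nonneg_left hdx2 hCL2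
    nlinarith
  have a3 : 1 / (2 * ε) * (∑ k, ‖s1 k - s3 k‖ ^ 2) ≤ (36 * CL2 + 1) * κ := by
    calc 1 / (2 * ε) * (∑ k, ‖s1 k - s3 k‖ ^ 2) ≤ 1 / (2 * ε) * (2 * ε * ((36 * CL2 + 1) * κ)) := by
          gcongr
      _ = _ := by field_simp
  have a4 : (γ + κ) * (∑ k, ‖s1 k‖ ^ 2 + ∑ k, ‖s3 k‖ ^ 2) ≤ (κ + κ) * (Cs + Cs) := by
    gcongr
  linarith

set_option maxHeartbeats 1000000 in
theorem core {T B μ k Cb Cs CL CL2 RK : ℝ} (hT : 0 < T) {b : ℝ → EucSp n → EucSp n}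
    {σ : ℝ → EucSp n → Matrix (Fin n) (Fin d) ℝ}
    {f : ℝ → EucSp n → ℝ} {g : EucSp n → ℝ} {K : Set (EucSp n)}
    {c : ℝ → EucSp n → EucSp n → ℝ} {u v : PG n → ℝ}
    (hμ : 0 < μ) (hk : 0 < k) (hCb : 0 ≤ Cb) (hCL : 0 ≤ CL) (hCL2 : 0 ≤ CL2)
    (hRK : 0 ≤ RK)
    (hb_cont : Continuous fun p : ℝ × EucSp n => b p.1 p.2)
    (hσ_cont : ∀ k, Continuous fun p : ℝ × EucSp n => scol σ p.1 p.2 k)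
    (hb : ∀ t x, ‖b t x‖ ≤ Cb) (hσ : ∀ t x, ∑ k, ‖scol σ t x k‖ ^ 2 ≤ Cs)
    (hbL : ∀ t ∈ Set.Icc (0:ℝ) T, ∀ x x', ‖b t x - b t x'‖ ≤ CL * ‖x - x'‖)
    (hσL : ∀ t ∈ Set.Icc (0:ℝ) T, ∀ x x',
      ∑ k, ‖scol σ t x k - scol σ t x' k‖ ^ 2 ≤ CL2 * ‖x - x'‖ ^ 2)
    (hf_uc : UniformContinuousOn (fun p : ℝ × EucSp n => f p.1 p.2) (Set.Icc 0 T ×ˢ Set.univ))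
    (hg_uc : UniformContinuous g)
    (hc_uc : UniformContinuousOn (fun p : ℝ × EucSp n × EucSp n => c p.1 p.2.1 p.2.2)
      (Set.Icc 0 T ×ˢ Set.univ ×ˢ K))
    (hKR : ∀ ζ ∈ K, ‖ζ‖ ≤ RK)
    (husc : UpperSemicontinuousOn u (strip T n)) (hu : ∀ X ∈ strip T n, |u X| ≤ B)
    (hvsc : UpperSemicontinuousOn v (strip T n)) (hv : ∀ X ∈ strip T n, |v X| ≤ B)
    (hju : ∀ X p M, X.fst ∈ Set.Ico 0 T → SymOp M → UpJet (strip T n) u X p M →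
      0 ≤ p.fst + ⟪b X.fst X.snd, p.snd⟫ + (∑ k, qf M (mkP 0 (scol σ X.fst X.snd k)))
      + f X.fst X.snd ∨ ∀ δ > 0, ∃ ζ ∈ K, u X ≤ u (mkP X.fst (X.snd + ζ)) - c X.fst X.snd ζ + δ)
    (hjv : ∀ X p M, X.fst ∈ Set.Ico 0 T → SymOp M → UpJet (strip T n) v X p M →
      0 ≤ p.fst + ⟪b X.fst X.snd, p.snd⟫ + (∑ k, qf M (mkP 0 (scol σ X.fst X.snd k)))
      - f X.fst X.snd - μ ∧ ∀ ζ ∈ K, v X ≤ v (mkP X.fst (X.snd + ζ)) + c X.fst X.snd ζ - μ * k)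
    (hTu : ∀ x, u (mkP T x) ≤ g x) (hTv : ∀ x, v (mkP T x) ≤ -g x) :
    ∀ X ∈ strip T n, u X + v X ≤ 0 := by
  intro X0 hX0
  by_contra! hpos
  obtain ⟨m, hm⟩ : ∃ m, m = u X0 + v X0 := ⟨_, rfl⟩
  rw [← hm] at hpos
  have hCs : 0 ≤ Cs := (Finset.sum_nonneg fun _ _ => by positivity).trans (hσ 0 0)
  set C1 := 2 + (24 * CL + 4 + 14 * Cb) + (36 * CL2 + 1 + 4 * Cs) + 1 with hC1
  set C2 := 3 + 12 * RK + 2 * RK ^ 2 with hC2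
  have hC1p : 0 < C1 := by positivity
  have hC2p : 0 < C2 := by positivity
  obtain ⟨κ, hκ, hκm, hκ1, hκ2⟩ : ∃ κ > 0, 8 * κ ≤ m ∧ C1 * κ < μ ∧ C2 * κ < μ * k := by
    refine ⟨min (m / 8) (min (μ / (2 * C1)) (μ * k / (2 * C2))), by positivity, ?_, ?_, ?_⟩
    · have := min_le_left (m / 8) (min (μ / (2 * C1)) (μ * k / (2 * C2)))
      linarith
    · calc C1 * min (m / 8) (min (μ / (2 * C1)) (μ * k / (2 * C2))) ≤ C1 * (μ / (2 * C1)) := by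
            gcongr; exact (min_le_right _ _).trans (min_le_left _ _)
        _ = μ / 2 := by field_simp
        _ < μ := by linarith
    · have : 0 < μ * k := by positivity
      calc C2 * min (m / 8) (min (μ / (2 * C1)) (μ * k / (2 * C2))) ≤ C2 * (μ * k / (2 * C2)) := by
            gcongr; exact (min_le_right _ _).trans (min_le_right _ _)
        _ = μ * k / 2 := by field_simp
        _ < μ * k := by linarith
  obtain ⟨ra, hra, hfa⟩ := uc_close hf_uc hκ
  obtain ⟨rb, hrb, hcb⟩ := uc_close hc_uc hκ
  obtain ⟨rc, hrc, hgc⟩ := uc_close (uniformContinuousOn_univ.2 hg_uc) (show 0 < m / 4 by positivity)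
  obtain ⟨r1, hr1, h1a, h1b, h1c⟩ : ∃ r1 > 0, r1 ≤ ra ∧ r1 ≤ rb ∧ r1 ≤ rc :=
    ⟨min ra (min rb rc), by positivity, min_le_left _ _, (min_le_right _ _).trans (min_le_left _ _),
      (min_le_right _ _).trans (min_le_right _ _)⟩
  set Θ : PG n × PG n → ℝ := fun p => ‖b p.1.fst p.2.snd - b p.2.fst p.2.snd‖ ^ 2 +
    ∑ k, ‖scol σ p.1.fst p.2.snd k - scol σ p.2.fst p.2.snd k‖ ^ 2 with hΘ
  have hΘc : Continuous Θ := by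
    have a1 : Continuous fun p : PG n × PG n => (p.1.fst, p.2.snd) := by
      simp only [← pT_apply, ← pX_apply]; fun_prop
    have a2 : Continuous fun p : PG n × PG n => (p.2.fst, p.2.snd) := by
      simp only [← pT_apply, ← pX_apply]; fun_prop
    refine Continuous.add (((hb_cont.comp a1).sub (hb_cont.comp a2)).norm.pow 2) ?_
    exact continuous_finsetSum _ fun k _ =>
      (((hσ_cont k).comp a1).sub ((hσ_cont k).comp a2)).norm.pow 2
  obtain ⟨ε, hε, γ, hγ, hεκ, hγκ, X, hX, Y, hY, ξ, η, p1, p2, M, N, hM, hN, hXT, hYT, hts, hxy,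
    hxy2, hξη, hξ, hη, hΘε, hp, he1, he2, hmat, hJ1, hJ2, hshift⟩ :=
    doubling hT husc hu hvsc hv hX0 hm.le hκ hκm hr1 (by
      intro X hX Y hY h1 h2 h3
      have e1 : X = mkP T X.snd := by rw [← h1]; rfl
      have e2 : Y = mkP T Y.snd := by rw [← h2]; rfl
      have a1 := hTu X.snd
      have a2 := hTv Y.snd
      rw [← e1] at a1
      rw [← e2] at a2
      have a3 := (abs_le.1 (hgc X.snd (mem_univ _) Y.snd (mem_univ _)
        (by rw [dist_eq_norm]; exact h3.trans h1c))).2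
      linarith) Θ hΘc (by
      intro p hp
      simp [hΘ, hp])
  have hXI : X.fst ∈ Set.Ico 0 T := ⟨hX.1, hXT⟩
  have hYI : Y.fst ∈ Set.Ico 0 T := ⟨hY.1, hYT⟩
  have hX' : X.fst ∈ Set.Icc 0 T := hX
  have hY' : Y.fst ∈ Set.Icc 0 T := hY
  obtain ⟨hv1, hv2⟩ := hjv Y p2 N hYI hN hJ2
  rcases hju X p1 M hXI hM hJ1 with hu1 | hu2
  · have hbt : ‖b X.fst Y.snd - b Y.fst Y.snd‖ ≤ ε := by
      refine (pow_le_pow_iff_left₀ (norm_nonneg _) hε.le two_ne_zero).1 (le_trans ?_ hΘε)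
      simp only [hΘ]
      exact le_add_of_nonneg_right (Finset.sum_nonneg fun _ _ => by positivity)
    have hst : ∑ k, ‖scol σ X.fst Y.snd k - scol σ Y.fst Y.snd k‖ ^ 2 ≤ ε ^ 2 := by
      refine le_trans ?_ hΘε
      simp only [hΘ]
      exact le_add_of_nonneg_left (by positivity)
    have hbd : ‖b X.fst X.snd - b Y.fst Y.snd‖ ≤ CL * ‖X.snd - Y.snd‖ + ε := by
      have a1 := hbL X.fst hX' X.snd Y.snd
      have a2 := norm_sub_le_norm_sub_add_norm_sub (b X.fst X.snd) (b X.fst Y.snd) (b Y.fst Y.snd)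
      linarith
    have k1 := drift_est hε hγ hκ hεκ hγκ hCL hCb (norm_nonneg _) (hb X.fst X.snd) (hb Y.fst Y.snd)
      hbd hxy2 hξη hξ hη he1 he2
    have k2 := diff_est (s1 := scol σ X.fst X.snd) (s2 := scol σ X.fst Y.snd)
      (s3 := scol σ Y.fst Y.snd) hε hγ hεκ hγκ hmat (hσ _ _) (hσ _ _) hCL2
      (hσL X.fst hX' X.snd Y.snd) hst hxy2
    have k3 := (abs_le.1 (hfa (X.fst, X.snd) ⟨hX', mem_univ _⟩ (Y.fst, Y.snd) ⟨hY', mem_univ _⟩ (by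
      rw [Prod.dist_eq, sup_le_iff, Real.dist_eq, dist_eq_norm]
      exact ⟨hts.trans h1a, hxy.trans h1a⟩))).2
    simp only at k3
    have : C1 * κ = 2 * κ + (24 * CL + 4 + 14 * Cb) * κ + (36 * CL2 + 1 + 4 * Cs) * κ + κ := by
      rw [hC1]; ring
    linarith
  · obtain ⟨ζ, hζ, hu3⟩ := hu2 κ hκ
    have hv3 := hv2 ζ hζ
    have hs := hshift ζ
    have k3 := (abs_le.1 (hcb (X.fst, X.snd, ζ) ⟨hX', mem_univ _, hζ⟩ (Y.fst, Y.snd, ζ)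
      ⟨hY', mem_univ _, hζ⟩ (by
      rw [Prod.dist_eq, Prod.dist_eq, sup_le_iff, sup_le_iff, Real.dist_eq, dist_eq_norm, dist_self]
      exact ⟨hts.trans h1b, hxy.trans h1b, hrb.le⟩))).1
    simp only at k3
    have hζn := hKR ζ hζ
    have hsm : ∀ ξ : EucSp n, γ * ‖ξ‖ ^ 2 ≤ 6 * κ →
        γ * (‖ξ + ζ‖ ^ 2 - ‖ξ‖ ^ 2) ≤ (6 * RK + RK ^ 2) * κ := by
      intro ξ hξ
      have s1 : γ * ‖ξ‖ ≤ 3 * κ := by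
        refine (pow_le_pow_iff_left₀ (by positivity) (by positivity) two_ne_zero).1 ?_
        have : γ * (γ * ‖ξ‖ ^ 2) ≤ κ * (6 * κ) := by gcongr
        nlinarith
      have s2 : ‖ξ + ζ‖ ^ 2 ≤ (‖ξ‖ + RK) ^ 2 := by
        gcongr
        exact (norm_add_le _ _).trans (by gcongr)
      have s3 : γ * (‖ξ + ζ‖ ^ 2 - ‖ξ‖ ^ 2) ≤ γ * ((‖ξ‖ + RK) ^ 2 - ‖ξ‖ ^ 2) := by gcongr
      have s4 : γ * ‖ξ‖ * RK ≤ 3 * κ * RK := by gcongr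
      have s5 : γ * RK ^ 2 ≤ κ * RK ^ 2 := by gcongr
      linarith
    have s1 := hsm _ hξ
    have s2 := hsm _ hη
    have : C2 * κ = 3 * κ + 2 * ((6 * RK + RK ^ 2) * κ) := by rw [hC2]; ring
    linarith

end CoreSection

section CompSection

variable {n d : ℕ}

lemma le_of_bound {a b : ℝ} {T C : ℝ} (h : ∀ μ, 0 < μ → μ < 1 → a + (-(1 - μ) * b - μ * C) ≤ 0)
    (_hT : 0 < T) : a ≤ b := by
  by_contra! hlt
  -- a - b > 0
  have hd : 0 < a - b := by linarith
  set D := |b - C| + 1 with hD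
  have hDp : 0 < D := by positivity
  set μ := min (1/2) ((a - b) / (2 * D)) with hμ
  have h1 : 0 < μ := by positivity
  have h2 : μ < 1 := lt_of_le_of_lt (min_le_left _ _) (by norm_num)
  have h3 : μ * D ≤ (a - b) / 2 := by
    calc μ * D ≤ (a - b) / (2 * D) * D := by
          gcongr; exact min_le_right _ _
      _ = (a - b) / 2 := by field_simp
  have h4 := h μ h1 h2
  have h5 : μ * (b - C) ≥ - (μ * D) := by
    have : -D ≤ b - C := by
      have := neg_abs_le (b - C); linarith
    nlinarith
  nlinarith

lemma jet_transfer {T μ A Cg : ℝ} (hμ1 : μ < 1) {V : ℝ → EucSp n → ℝ}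
    {X p : PG n} {N : PG n →L[ℝ] PG n}
    (hJ : UpJet (strip T n)
      (fun X => -(1 - μ) * V X.fst X.snd - μ * (A * (T - X.fst) + Cg)) X p N) :
    UpJet (strip T n) (fun X => -V X.fst X.snd) X ((1 - μ)⁻¹ • (p - mkP (μ * A) 0))
      ((1 - μ)⁻¹ • N) := by
  intro ε hε
  have hl : 0 < 1 - μ := by linarith
  obtain ⟨ρ, hρ, h⟩ := hJ ((1 - μ) * ε) (by positivity)
  refine ⟨ρ, hρ, fun X' hX' hd => ?_⟩
  have h1 := h X' hX' hd
  have e1 : ⟪(1 - μ)⁻¹ • (p - mkP (μ * A) 0), X' - X⟫ =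
      (1 - μ)⁻¹ * (⟪p, X' - X⟫ - μ * A * (X'.fst - X.fst)) := by
    rw [real_inner_smul_left, inner_sub_left, pg_inner (mkP (μ * A) 0)]
    simp
  have e2 : qf ((1 - μ)⁻¹ • N) (X' - X) = (1 - μ)⁻¹ * qf N (X' - X) := by
    simp only [qf, _root_.smul_apply, real_inner_smul_left]
    ring
  simp only at h1 ⊢
  rw [e1, e2]
  have e3 : -V X.fst X.snd + (1 - μ)⁻¹ * (⟪p, X' - X⟫ - μ * A * (X'.fst - X.fst)) +
      (1 - μ)⁻¹ * qf N (X' - X) + ε * ‖X' - X‖ ^ 2 = (1 - μ)⁻¹ *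
      (-(1 - μ) * V X.fst X.snd + (⟪p, X' - X⟫ - μ * A * (X'.fst - X.fst)) + qf N (X' - X)
        + (1 - μ) * ε * ‖X' - X‖ ^ 2) := by
    field_simp
  rw [e3, inv_mul_eq_div, le_div_iff₀ hl]
  linarith

lemma scol_sq_sum_le (M : Matrix (Fin n) (Fin d) ℝ) :
    ∑ k, ‖(WithLp.toLp 2 (fun i => M i k) : EucSp n)‖ ^ 2 ≤ (∑ i, ∑ j, |M i j|) ^ 2 := by
  have h1 : ∀ k, ‖(WithLp.toLp 2 (fun i => M i k) : EucSp n)‖ ≤ ∑ i, |M i k| := by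
    intro k
    rw [EuclideanSpace.norm_eq]
    apply Real.sqrt_le_iff.2 ⟨Finset.sum_nonneg fun _ _ => abs_nonneg _, ?_⟩
    simpa using Finset.sum_sq_le_sq_sum_of_nonneg (s := Finset.univ) (f := fun i => |M i k|)
      (fun i _ => abs_nonneg _)
  calc ∑ k, ‖(WithLp.toLp 2 (fun i => M i k) : EucSp n)‖ ^ 2 ≤ ∑ k, (∑ i, |M i k|) ^ 2 := by
        gcongr with k _
        exact h1 k
    _ ≤ (∑ k, ∑ i, |M i k|) ^ 2 := Finset.sum_sq_le_sq_sum_of_nonneg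
        (fun k _ => Finset.sum_nonneg fun _ _ => abs_nonneg _)
    _ = _ := by rw [Finset.sum_comm]

theorem comparison
    (T : ℝ) (hT : 0 < T)
    (b : ℝ → EucSp n → EucSp n) (σ : ℝ → EucSp n → Matrix (Fin n) (Fin d) ℝ)
    (f : ℝ → EucSp n → ℝ) (g : EucSp n → ℝ)
    (K : Set (EucSp n)) (c : ℝ → EucSp n → EucSp n → ℝ)
    (hb_cont : Continuous fun p : ℝ × EucSp n => b p.1 p.2)
    (hσ_cont : Continuous fun p : ℝ × EucSp n => σ p.1 p.2)
    (hb_bdd : ∃ C, ∀ t x, ‖b t x‖ ≤ C)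
    (hσ_bdd : ∃ C, ∀ t x i j, |σ t x i j| ≤ C)
    (hlip : ∃ C > (0:ℝ), ∀ t ∈ Set.Icc (0:ℝ) T, ∀ x x' : EucSp n,
      ‖b t x - b t x'‖ + (∑ i, ∑ j, |σ t x i j - σ t x' i j|) ≤ C * ‖x - x'‖)
    (hf_bdd : ∃ C, ∀ t x, |f t x| ≤ C)
    (hf_uc : UniformContinuousOn (fun p : ℝ × EucSp n => f p.1 p.2)
      (Set.Icc 0 T ×ˢ Set.univ))
    (hg_bdd : ∃ C, ∀ x, |g x| ≤ C)
    (hg_uc : UniformContinuous g)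
    (hK : K.Nonempty) (hKcomp : IsCompact K)
    (hc_uc : UniformContinuousOn (fun p : ℝ × EucSp n × EucSp n => c p.1 p.2.1 p.2.2)
      (Set.Icc 0 T ×ˢ Set.univ ×ˢ K))
    (k : ℝ) (hk : 0 < k) (hck : ∀ t x, ∀ ξ ∈ K, k ≤ c t x ξ)
    (U V : ℝ → EucSp n → ℝ) (B : ℝ)
    (hUB : ∀ t ∈ Set.Icc 0 T, ∀ x, |U t x| ≤ B) (hVB : ∀ t ∈ Set.Icc 0 T, ∀ x, |V t x| ≤ B)
    (hUs : UpperSemicontinuousOn (fun X : PG n => U X.fst X.snd) (strip T n))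
    (hVs : UpperSemicontinuousOn (fun X : PG n => -V X.fst X.snd) (strip T n))
    (hU : IsSubHJB T b σ f g K c U) (hV : IsSuperHJB T b σ f g K c V) :
    ∀ t ∈ Set.Icc 0 T, ∀ x, U t x ≤ V t x := by
  intro t ht x
  obtain ⟨Cb, hCb⟩ := hb_bdd
  obtain ⟨Cs, hCs⟩ := hσ_bdd
  obtain ⟨CL, hCLp, hCL⟩ := hlip
  obtain ⟨Cf, hCf⟩ := hf_bdd
  obtain ⟨Cg, hCg⟩ := hg_bdd
  obtain ⟨RK, hRK⟩ := hKcomp.isBounded.exists_norm_le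
  have hCf0 : 0 ≤ Cf := (abs_nonneg _).trans (hCf 0 0)
  have hCg0 : 0 ≤ Cg := (abs_nonneg _).trans (hCg 0)
  have hB0 : 0 ≤ B := (abs_nonneg _).trans (hUB t ht x)
  have hCb0 : 0 ≤ Cb := (norm_nonneg _).trans (hCb 0 0)
  have hRK0 : 0 ≤ RK := by
    obtain ⟨ζ, hζ⟩ := hK
    exact (norm_nonneg _).trans (hRK ζ hζ)
  have hsc : ∀ k, Continuous fun p : ℝ × EucSp n => scol σ p.1 p.2 k := by
    intro k
    unfold scol
    refine (PiLp.continuous_toLp 2 _).comp ?_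
    refine continuous_pi fun i => ?_
    exact hσ_cont.matrix_elem i k
  refine le_of_bound (T := T) (C := (Cf + 1) * (T - t) + Cg) (fun μ hμ hμ1 => ?_) hT
  have hl : 0 < 1 - μ := by linarith
  set v : PG n → ℝ := fun X => -(1 - μ) * V X.fst X.snd - μ * ((Cf + 1) * (T - X.fst) + Cg)
    with hv
  refine core (u := fun X => U X.fst X.snd) (v := v) (B := B + ((Cf + 1) * T + Cg))
    (Cs := (∑ _i : Fin n, ∑ _j : Fin d, Cs) ^ 2) (CL2 := CL ^ 2)
    hT hμ hk hCb0 hCLp.le (by positivity) hRK0 hb_cont hsc hCb ?_ ?_ ?_ hf_uc hg_uc hc_uc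
    hRK hUs ?_ ?_ ?_ ?_ ?_ ?_ ?_ (mkP t x) ht
  · intro t x
    refine (scol_sq_sum_le (σ t x)).trans ?_
    have h0 : 0 ≤ ∑ i, ∑ j, |σ t x i j| :=
      Finset.sum_nonneg fun _ _ => Finset.sum_nonneg fun _ _ => abs_nonneg _
    apply pow_le_pow_left₀ h0
    gcongr with i _ j _
    exact hCs t x i j
  · intro t ht x x'
    have h0 : 0 ≤ ∑ i, ∑ j, |σ t x i j - σ t x' i j| :=
      Finset.sum_nonneg fun _ _ => Finset.sum_nonneg fun _ _ => abs_nonneg _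
    linarith [hCL t ht x x']
  · intro t ht x x'
    have h0 : 0 ≤ ∑ i, ∑ j, |σ t x i j - σ t x' i j| :=
      Finset.sum_nonneg fun _ _ => Finset.sum_nonneg fun _ _ => abs_nonneg _
    have h1 := scol_sq_sum_le (σ t x - σ t x')
    have h2 : ∑ i, ∑ j, |σ t x i j - σ t x' i j| ≤ CL * ‖x - x'‖ := by
      linarith [hCL t ht x x', norm_nonneg (b t x - b t x')]
    rw [← mul_pow]
    refine le_trans h1 (pow_le_pow_left₀ h0 h2 2)
  · intro X hX
    have := hUB X.fst hX X.snd
    have : 0 ≤ (Cf + 1) * T + Cg := by positivity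
    linarith
  · -- usc of v
    intro X hX y hy
    have hc1 : Continuous fun X : PG n => μ * ((Cf + 1) * (T - X.fst) + Cg) := by
      have : Continuous fun X : PG n => X.fst := (pT n).continuous
      fun_prop
    have hy' : -(1 - μ) * V X.fst X.snd - μ * ((Cf + 1) * (T - X.fst) + Cg) < y := hy
    set δ := (y - (-(1 - μ) * V X.fst X.snd - μ * ((Cf + 1) * (T - X.fst) + Cg))) / 2 with hδ
    have hδp : 0 < δ := by rw [hδ]; linarith
    have h1 := hVs X hX (-V X.fst X.snd + δ) (by simp only; linarith)
    have h2 : ∀ᶠ X' in 𝓝[strip T n] X, μ * ((Cf + 1) * (T - X.fst) + Cg) - δ <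
        μ * ((Cf + 1) * (T - X'.fst) + Cg) :=
      (hc1.continuousAt.mono_left nhdsWithin_le_nhds).eventually (lt_mem_nhds (by linarith))
    filter_upwards [h1, h2] with X' h1 h2
    show -(1 - μ) * V X'.fst X'.snd - μ * ((Cf + 1) * (T - X'.fst) + Cg) < y
    have h3 : (1 - μ) * (-V X'.fst X'.snd) ≤ (1 - μ) * (-V X.fst X.snd + δ) :=
      mul_le_mul_of_nonneg_left h1.le hl.le
    have : (1 - μ) * δ ≤ δ := by nlinarith
    linarith
  · intro X hX
    have h1 := hVB X.fst hX X.snd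
    obtain ⟨ha, hb'⟩ := hX
    have h2 : 0 ≤ (Cf + 1) * (T - X.fst) + Cg := by
      have : 0 ≤ T - X.fst := by linarith
      positivity
    have h3 : (Cf + 1) * (T - X.fst) + Cg ≤ (Cf + 1) * T + Cg := by nlinarith
    have h4 : μ * ((Cf + 1) * (T - X.fst) + Cg) ≤ (Cf + 1) * T + Cg := by nlinarith
    have h5 : 0 ≤ μ * ((Cf + 1) * (T - X.fst) + Cg) := by positivity
    have h6 : |(1 - μ) * V X.fst X.snd| ≤ B := by
      rw [abs_mul, abs_of_pos hl]
      nlinarith [abs_nonneg (V X.fst X.snd)]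
    rw [abs_le] at h6 ⊢
    simp only [hv]
    constructor <;> linarith
  · intro X p M hX hM hJ
    rcases visc_sub hU hM hX hJ with h | h
    · exact Or.inl h
    · right
      intro δ hδ
      have hne : ((fun ξ => U X.fst (X.snd + ξ) - c X.fst X.snd ξ) '' K).Nonempty := hK.image _
      obtain ⟨_, ⟨ζ, hζ, rfl⟩, h2⟩ := exists_lt_of_lt_csSup hne
        (show U X.fst X.snd - δ < sSup _ from by
          have : U X.fst X.snd ≤ sSup _ := h
          linarith)
      refine ⟨ζ, hζ, ?_⟩
      simp only [mkP_fst, mkP_snd] at h2 ⊢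
      linarith
  · intro X p N hX hN hJ
    have hJ' := jet_transfer hμ1 hJ
    have hN' : SymOp ((1 - μ)⁻¹ • N) := by
      intro u w
      simp only [_root_.smul_apply, real_inner_smul_left, real_inner_smul_right, hN u w]
    obtain ⟨h1, h2⟩ := visc_super hV hN' hX hJ'
    have e2 : ∀ Y, qf ((1 - μ)⁻¹ • N) Y = (1 - μ)⁻¹ * qf N Y := by
      intro Y
      simp only [qf, _root_.smul_apply, real_inner_smul_left]
      ring
    have e3 : ((1 - μ)⁻¹ • (p - mkP (μ * (Cf + 1)) 0)).fst =
        (1 - μ)⁻¹ * (p.fst - μ * (Cf + 1)) := by simp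
    have e4 : ((1 - μ)⁻¹ • (p - mkP (μ * (Cf + 1)) 0)).snd = (1 - μ)⁻¹ • p.snd := by simp
    simp only [e2, e3, e4, ← Finset.mul_sum, real_inner_smul_right] at h1
    constructor
    · have h3 := mul_le_mul_of_nonneg_left h1 hl.le
      have h4 : (1 - μ) * ((1 - μ)⁻¹ * (p.fst - μ * (Cf + 1)) +
          (1 - μ)⁻¹ * ⟪b X.fst X.snd, p.snd⟫ +
          (1 - μ)⁻¹ * (∑ k, qf N (mkP 0 (scol σ X.fst X.snd k))) - f X.fst X.snd) =
          (p.fst - μ * (Cf + 1)) + ⟪b X.fst X.snd, p.snd⟫ +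
          (∑ k, qf N (mkP 0 (scol σ X.fst X.snd k))) - (1 - μ) * f X.fst X.snd := by
        field_simp
      rw [h4] at h3
      have h5 := (abs_le.1 (hCf X.fst X.snd)).2
      nlinarith
    · intro ζ hζ
      have hXs : X.fst ∈ Set.Icc 0 T := ⟨hX.1, hX.2.le⟩
      have hbd : BddAbove ((fun ξ => V X.fst (X.snd + ξ) - c X.fst X.snd ξ) '' K) := by
        refine ⟨B, ?_⟩
        rintro _ ⟨ξ, hξ, rfl⟩
        have := (abs_le.1 (hVB X.fst hXs (X.snd + ξ))).2
        have := hck X.fst X.snd ξ hξ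
        simp only
        linarith
      have h3 : V X.fst (X.snd + ζ) - c X.fst X.snd ζ ≤ V X.fst X.snd :=
        (le_csSup hbd ⟨ζ, hζ, rfl⟩).trans h2
      have h4 := hck X.fst X.snd ζ hζ
      simp only [hv, mkP_fst, mkP_snd]
      nlinarith
  · exact hU.2
  · intro y
    have h1 := hV.2 y
    have h2 := (abs_le.1 (hCg y)).2
    simp only [hv, mkP_fst, mkP_snd]
    nlinarith

end CompSection

section EnvSection

variable {n d : ℕ}

/-- The filter used in the envelopes. -/
def envF (T : ℝ) (t : ℝ) (x : EucSp n) : Filter (ℝ × EucSp n) :=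
  𝓝[{p : ℝ × EucSp n | p.1 < T}] (t, x)

lemma envF_neBot {T t : ℝ} (ht : t ≤ T) (x : EucSp n) : (envF T t x).NeBot := by
  unfold envF
  rw [← mem_closure_iff_nhdsWithin_neBot]
  have : {p : ℝ × EucSp n | p.1 < T} = Set.Iio T ×ˢ Set.univ := by ext; simp
  rw [this, closure_prod_eq, closure_Iio, closure_univ]
  exact ⟨ht, trivial⟩

lemma env_bdd_le {W : ℝ → EucSp n → ℝ} {C : ℝ} (hW : ∀ t x, |W t x| ≤ C)
    (F : Filter (ℝ × EucSp n)) : F.IsBoundedUnder (· ≤ ·) (fun p => W p.1 p.2) :=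
  isBoundedUnder_of ⟨C, fun p => (abs_le.1 (hW p.1 p.2)).2⟩

lemma env_bdd_ge {W : ℝ → EucSp n → ℝ} {C : ℝ} (hW : ∀ t x, |W t x| ≤ C)
    (F : Filter (ℝ × EucSp n)) : F.IsBoundedUnder (· ≥ ·) (fun p => W p.1 p.2) :=
  isBoundedUnder_of ⟨-C, fun p => (abs_le.1 (hW p.1 p.2)).1⟩

lemma lsc_le_usc {T t C : ℝ} (ht : t ≤ T) {W : ℝ → EucSp n → ℝ} (hW : ∀ t x, |W t x| ≤ C)
    (x : EucSp n) : lscEnvT T W t x ≤ uscEnvT T W t x := by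
  haveI := envF_neBot ht x
  exact liminf_le_limsup (f := envF T t x) (env_bdd_le hW _) (env_bdd_ge hW _)

lemma usc_le_C {T t C : ℝ} (ht : t ≤ T) {W : ℝ → EucSp n → ℝ} (hW : ∀ t x, |W t x| ≤ C)
    (x : EucSp n) : uscEnvT T W t x ≤ C := by
  haveI := envF_neBot ht x
  exact limsup_le_of_le (f := envF T t x) ((env_bdd_ge hW _).isCoboundedUnder_le)
    (Eventually.of_forall fun p => (abs_le.1 (hW p.1 p.2)).2)

lemma negC_le_lsc {T t C : ℝ} (ht : t ≤ T) {W : ℝ → EucSp n → ℝ} (hW : ∀ t x, |W t x| ≤ C)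
    (x : EucSp n) : -C ≤ lscEnvT T W t x := by
  haveI := envF_neBot ht x
  exact le_liminf_of_le (f := envF T t x) ((env_bdd_le hW _).isCoboundedUnder_ge)
    (Eventually.of_forall fun p => (abs_le.1 (hW p.1 p.2)).1)

lemma usc_env {T C : ℝ} {W : ℝ → EucSp n → ℝ} (hW : ∀ t x, |W t x| ≤ C) :
    UpperSemicontinuousOn (fun X : PG n => uscEnvT T W X.fst X.snd) (strip T n) := by
  intro X hX y hy
  obtain ⟨z, hz1, hz2⟩ := exists_between hy
  have h1 : ∀ᶠ p in 𝓝[{p : ℝ × EucSp n | p.1 < T}] (X.fst, X.snd), W p.1 p.2 < z :=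
    eventually_lt_of_limsup_lt hz1 (env_bdd_le hW _)
  have h2 := eventually_eventually_nhdsWithin.2 h1
  rw [eventually_nhdsWithin_iff] at h1
  have h3 := eventually_eventually_nhds.2 h1
  have hc : Tendsto (fun X : PG n => (X.fst, X.snd)) (𝓝[strip T n] X) (𝓝 (X.fst, X.snd)) := by
    have : Continuous fun X : PG n => (X.fst, X.snd) := (pT n).continuous.prodMk (pX n).continuous
    exact this.continuousAt.mono_left nhdsWithin_le_nhds
  filter_upwards [hc.eventually h3, self_mem_nhdsWithin] with X' h4 hX'
  haveI := envF_neBot hX'.2 X'.snd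
  refine lt_of_le_of_lt ?_ hz2
  refine limsup_le_of_le (f := envF T X'.fst X'.snd) ((env_bdd_ge hW _).isCoboundedUnder_le) ?_
  unfold envF
  rw [eventually_nhdsWithin_iff]
  exact h4.mono fun p hp hpT => (hp hpT).le

lemma lsc_env {T C : ℝ} {W : ℝ → EucSp n → ℝ} (hW : ∀ t x, |W t x| ≤ C) :
    UpperSemicontinuousOn (fun X : PG n => -lscEnvT T W X.fst X.snd) (strip T n) := by
  intro X hX y hy
  obtain ⟨z, hz1, hz2⟩ := exists_between hy
  have h1 : ∀ᶠ p in 𝓝[{p : ℝ × EucSp n | p.1 < T}] (X.fst, X.snd), -z < W p.1 p.2 :=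
    eventually_lt_of_lt_liminf (by
      have : -z < lscEnvT T W X.fst X.snd := by simp only at hz1; linarith
      exact this) (env_bdd_ge hW _)
  rw [eventually_nhdsWithin_iff] at h1
  have h3 := eventually_eventually_nhds.2 h1
  have hc : Tendsto (fun X : PG n => (X.fst, X.snd)) (𝓝[strip T n] X) (𝓝 (X.fst, X.snd)) := by
    have : Continuous fun X : PG n => (X.fst, X.snd) := (pT n).continuous.prodMk (pX n).continuous
    exact this.continuousAt.mono_left nhdsWithin_le_nhds
  filter_upwards [hc.eventually h3, self_mem_nhdsWithin] with X' h4 hX'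
  haveI := envF_neBot hX'.2 X'.snd
  refine lt_of_le_of_lt ?_ hz2
  have : -z ≤ lscEnvT T W X'.fst X'.snd := by
    refine le_liminf_of_le (f := envF T X'.fst X'.snd) ((env_bdd_le hW _).isCoboundedUnder_ge) ?_
    unfold envF
    rw [eventually_nhdsWithin_iff]
    exact h4.mono fun p hp hpT => (hp hpT).le
  linarith

lemma le_usc {T t C : ℝ} (ht : t < T) {W : ℝ → EucSp n → ℝ} (hW : ∀ t x, |W t x| ≤ C)
    (x : EucSp n) : W t x ≤ uscEnvT T W t x := by
  by_contra! h
  have h1 : ∀ᶠ p in 𝓝[{p : ℝ × EucSp n | p.1 < T}] (t, x), W p.1 p.2 < W t x :=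
    eventually_lt_of_limsup_lt h (env_bdd_le hW _)
  exact lt_irrefl _ (h1.self_of_nhdsWithin (show t < T from ht))

lemma lsc_le {T t C : ℝ} (ht : t < T) {W : ℝ → EucSp n → ℝ} (hW : ∀ t x, |W t x| ≤ C)
    (x : EucSp n) : lscEnvT T W t x ≤ W t x := by
  by_contra! h
  have h1 : ∀ᶠ p in 𝓝[{p : ℝ × EucSp n | p.1 < T}] (t, x), W t x < W p.1 p.2 :=
    eventually_lt_of_lt_liminf h (env_bdd_ge hW _)
  exact lt_irrefl _ (h1.self_of_nhdsWithin (show t < T from ht))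

end EnvSection

/-- **Uniqueness of bounded viscosity solutions** of equation (HJB): two bounded viscosity
solutions have identical (and equal to each other) usc and lsc envelopes on `[0,T] × ℝⁿ`;
in particular they coincide on `[0,T) × ℝⁿ` and are continuous there. -/
theorem uniqueness_HJB
    {n d : ℕ} (hn : 0 < n) (hd : 0 < d) (T : ℝ) (hT : 0 < T)
    (b : ℝ → EucSp n → EucSp n) (σ : ℝ → EucSp n → Matrix (Fin n) (Fin d) ℝ)
    (f : ℝ → EucSp n → ℝ) (g : EucSp n → ℝ)
    (K : Set (EucSp n)) (c : ℝ → EucSp n → EucSp n → ℝ)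
    -- (H1)
    (hb_cont : Continuous fun p : ℝ × EucSp n => b p.1 p.2)
    (hσ_cont : Continuous fun p : ℝ × EucSp n => σ p.1 p.2)
    (hb_bdd : ∃ C, ∀ t x, ‖b t x‖ ≤ C)
    (hσ_bdd : ∃ C, ∀ t x i j, |σ t x i j| ≤ C)
    (hlip : ∃ C > (0:ℝ), ∀ t ∈ Set.Icc (0:ℝ) T, ∀ x x' : EucSp n,
      ‖b t x - b t x'‖ + (∑ i, ∑ j, |σ t x i j - σ t x' i j|) ≤ C * ‖x - x'‖)
    -- (H2)
    (hf_bdd : ∃ C, ∀ t x, |f t x| ≤ C)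
    (hf_uc : UniformContinuousOn (fun p : ℝ × EucSp n => f p.1 p.2)
      (Set.Icc 0 T ×ˢ Set.univ))
    (hg_bdd : ∃ C, ∀ x, |g x| ≤ C)
    (hg_uc : UniformContinuous g)
    -- (H3)
    (hK : K.Nonempty) (hKcomp : IsCompact K)
    (hc_uc : UniformContinuousOn (fun p : ℝ × EucSp n × EucSp n => c p.1 p.2.1 p.2.2)
      (Set.Icc 0 T ×ˢ Set.univ ×ˢ K))
    (k : ℝ) (hk : 0 < k) (hck : ∀ t x, ∀ ξ ∈ K, k ≤ c t x ξ)
    (hc_sub : ∀ t x, ∀ ξ₁ ∈ K, ∀ ξ₂ ∈ K, ξ₁ + ξ₂ ∈ K →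
      c t x (ξ₁ + ξ₂) ≤ c t x ξ₁ + c t x ξ₂)
    -- the two bounded viscosity solutions
    (W₁ W₂ : ℝ → EucSp n → ℝ)
    (hW₁_bdd : ∃ C, ∀ t x, |W₁ t x| ≤ C) (hW₂_bdd : ∃ C, ∀ t x, |W₂ t x| ≤ C)
    (hW₁ : IsViscSolHJB T b σ f g K c W₁) (hW₂ : IsViscSolHJB T b σ f g K c W₂) :
    (∀ t ∈ Set.Icc (0:ℝ) T, ∀ x,
        uscEnvT T W₁ t x = lscEnvT T W₁ t x ∧
        lscEnvT T W₁ t x = uscEnvT T W₂ t x ∧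
        uscEnvT T W₂ t x = lscEnvT T W₂ t x) ∧
    (∀ t ∈ Set.Ico (0:ℝ) T, ∀ x, W₁ t x = W₂ t x) ∧
    ContinuousOn (fun p : ℝ × EucSp n => W₁ p.1 p.2) (pdom T n) := by
  have key : ∀ A B : ℝ → EucSp n → ℝ, (∃ C, ∀ t x, |A t x| ≤ C) → (∃ C, ∀ t x, |B t x| ≤ C) →
      IsViscSolHJB T b σ f g K c A → IsViscSolHJB T b σ f g K c B →
      ∀ t ∈ Set.Icc 0 T, ∀ x, uscEnvT T A t x ≤ lscEnvT T B t x := by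
    rintro A B ⟨C1, h1⟩ ⟨C2, h2⟩ hA hB
    refine comparison T hT b σ f g K c hb_cont hσ_cont hb_bdd hσ_bdd hlip hf_bdd hf_uc hg_bdd
      hg_uc hK hKcomp hc_uc k hk hck _ _ (max C1 C2) ?_ ?_ (usc_env h1) (lsc_env h2) hA.1 hB.2
    · intro t ht x
      have e1 := usc_le_C ht.2 h1 x
      have e2 := negC_le_lsc ht.2 h1 x
      have e3 := lsc_le_usc ht.2 h1 x
      exact (abs_le.2 ⟨by linarith, e1⟩).trans (le_max_left _ _)
    · intro t ht x
      have e1 := usc_le_C ht.2 h2 x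
      have e2 := negC_le_lsc ht.2 h2 x
      have e3 := lsc_le_usc ht.2 h2 x
      exact (abs_le.2 ⟨e2, by linarith⟩).trans (le_max_right _ _)
  have k12 := key W₁ W₂ hW₁_bdd hW₂_bdd hW₁ hW₂
  have k21 := key W₂ W₁ hW₂_bdd hW₁_bdd hW₂ hW₁
  obtain ⟨C1, hC1⟩ := hW₁_bdd
  obtain ⟨C2, hC2⟩ := hW₂_bdd
  have main : ∀ t ∈ Set.Icc (0:ℝ) T, ∀ x,
        uscEnvT T W₁ t x = lscEnvT T W₁ t x ∧
        lscEnvT T W₁ t x = uscEnvT T W₂ t x ∧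
        uscEnvT T W₂ t x = lscEnvT T W₂ t x := by
    intro t ht x
    have a1 := k12 t ht x
    have a2 := k21 t ht x
    have a3 := lsc_le_usc ht.2 hC1 x
    have a4 := lsc_le_usc ht.2 hC2 x
    refine ⟨?_, ?_, ?_⟩ <;> linarith
  refine ⟨main, ?_, ?_⟩
  · intro t ht x
    obtain ⟨e1, e2, e3⟩ := main t ⟨ht.1, ht.2.le⟩ x
    have a1 := le_usc ht.2 hC1 x
    have a2 := lsc_le ht.2 hC1 x
    have a3 := le_usc ht.2 hC2 x
    have a4 := lsc_le ht.2 hC2 x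
    linarith
  · rintro ⟨t, x⟩ ⟨ht, -⟩
    have ht' : t ∈ Set.Ico 0 T := ht
    obtain ⟨e1, -, -⟩ := main t ⟨ht'.1, ht'.2.le⟩ x
    have a1 := le_usc ht'.2 hC1 x
    have a2 := lsc_le ht'.2 hC1 x
    have h := tendsto_of_liminf_eq_limsup (f := envF T t x)
      (u := fun p : ℝ × EucSp n => W₁ p.1 p.2) (a := W₁ t x)
      (show lscEnvT T W₁ t x = W₁ t x by linarith)
      (show uscEnvT T W₁ t x = W₁ t x by linarith) (env_bdd_le hC1 _) (env_bdd_ge hC1 _)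
    refine h.mono_left (nhdsWithin_mono _ ?_)
    rintro p ⟨hp, -⟩
    exact hp.2
end
end

section
/- Stability of subsolutions under increasing limits: Assume (H1)–(H3). Let (V_m)_{m≥0} be a nondecreasing, uniformly bounded sequence of continuous functions on [0,T]×ℝⁿ such that for each m ≥ 1, V_m is a viscosity subsolution on [0,T)×ℝⁿ of min{ −∂ₜV_m − LV_m − f, V_m − MV_{m−1} } = 0 (test-function sense). Let V := sup_m V_m (the pointwise limit) and let V* be its upper semicontinuous envelope. Then for every (t,x) ∈ (0,T)×ℝⁿ and every (p,q,X) ∈ J^{2,+}V*(t,x), one has min{ −p − ⟨b(t,x), q⟩ − (1/2)tr[(σσᵀ)(t,x)X] − f(t,x), V*(t,x) − (MV*)(t,x) } ≤ 0. -/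
open scoped BigOperators RealInnerProductSpace
open Filter Matrix Set Topology

noncomputable section

variable {n d : ℕ}

lemma qform_eq_inner {n : ℕ} (X : Matrix (Fin n) (Fin n) ℝ) (v : EucSp n) :
    qform X v = ⟪Matrix.toEuclideanCLM (𝕜 := ℝ) X v, v⟫ := by
  simp only [qform, PiLp.inner_apply, Matrix.ofLp_toEuclideanCLM, Matrix.mulVec, dotProduct]
  refine Finset.sum_congr rfl fun i _ => ?_
  simp [Finset.mul_sum, mul_comm, mul_left_comm]

lemma toCLM_add_smul {n : ℕ} (X : Matrix (Fin n) (Fin n) ℝ) (a : ℝ) (v : EucSp n) :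
    Matrix.toEuclideanCLM (𝕜 := ℝ) (X + a • (1 : Matrix (Fin n) (Fin n) ℝ)) v
      = Matrix.toEuclideanCLM (𝕜 := ℝ) X v + a • v := by
  simp

lemma toCLM_symm {n : ℕ} (X : Matrix (Fin n) (Fin n) ℝ) (hX : X.IsSymm) (v w : EucSp n) :
    ⟪Matrix.toEuclideanCLM (𝕜 := ℝ) X v, w⟫ = ⟪v, Matrix.toEuclideanCLM (𝕜 := ℝ) X w⟫ := by
  simp only [PiLp.inner_apply, Matrix.ofLp_toEuclideanCLM, Matrix.mulVec, dotProduct]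
  simp only [RCLike.inner_apply, conj_trivial, Finset.mul_sum, Finset.sum_mul]
  rw [Finset.sum_comm]
  refine Finset.sum_congr rfl fun i _ => Finset.sum_congr rfl fun j _ => ?_
  rw [← hX.apply i j]; ring

/-- The quadratic test function with smoothed time modulus. -/
def testFn {n : ℕ} (p : ℝ) (q : EucSp n) (Y : Matrix (Fin n) (Fin n) ℝ) (a δ t : ℝ)
    (x : EucSp n) (s : ℝ) (y : EucSp n) : ℝ :=
  p * (s - t) + ⟪q, y - x⟫ + (1 / 2) * ⟪Matrix.toEuclideanCLM (𝕜 := ℝ) Y (y - x), y - x⟫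
    + a * √((s - t) ^ 2 + δ ^ 2)

lemma testFn_hasDerivAt {n : ℕ} (p : ℝ) (q : EucSp n) (Y : Matrix (Fin n) (Fin n) ℝ)
    (a δ t : ℝ) (hδ : 0 < δ) (x : EucSp n) (s : ℝ) (y : EucSp n) :
    HasDerivAt (fun s => testFn p q Y a δ t x s y)
      (p + a * ((s - t) / √((s - t) ^ 2 + δ ^ 2))) s := by
  unfold testFn
  have hpos : 0 < (s - t) ^ 2 + δ ^ 2 := by positivity
  have h0 : HasDerivAt (fun s : ℝ => s - t) 1 s := (hasDerivAt_id s).sub_const t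
  have h1 := (((h0.pow 2).add_const (δ ^ 2)).sqrt hpos.ne').const_mul a
  have h2 := (((h0.const_mul p).add_const ⟪q, y - x⟫).add_const
    ((1 / 2) * ⟪Matrix.toEuclideanCLM (𝕜 := ℝ) Y (y - x), y - x⟫)).add h1
  refine (h2.congr_deriv ?_)
  have h3 : √((s - t) ^ 2 + δ ^ 2) ≠ 0 := (Real.sqrt_pos.2 hpos).ne'
  simp only [Pi.pow_apply, Nat.cast_ofNat]
  generalize √((s - t) ^ 2 + δ ^ 2) = A at h3
  field_simp
  try ring

lemma testFn_hasGradientAt {n : ℕ} (p : ℝ) (q : EucSp n) (Y : Matrix (Fin n) (Fin n) ℝ)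
    (hY : Y.IsSymm) (a δ t : ℝ) (x : EucSp n) (s : ℝ) (y : EucSp n) :
    HasGradientAt (fun y => testFn p q Y a δ t x s y)
      (q + Matrix.toEuclideanCLM (𝕜 := ℝ) Y (y - x)) y := by
  unfold testFn
  rw [hasGradientAt_iff_hasFDerivAt]
  have h0 : HasFDerivAt (fun y : EucSp n => y - x) (ContinuousLinearMap.id ℝ (EucSp n)) y :=
    (hasFDerivAt_id y).sub_const x
  have h1 := (Matrix.toEuclideanCLM (𝕜 := ℝ) Y).hasFDerivAt.comp y h0
  have h2 := (h1.inner ℝ h0).const_mul (1 / 2)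
  have h3 := (hasFDerivAt_const q y).inner ℝ h0
  have h4 := ((h3.const_add (p * (s - t))).add h2).add_const (a * √((s - t) ^ 2 + δ ^ 2))
  refine h4.congr_fderiv ?_
  ext h
  simp [toCLM_symm Y hY h]
  rw [real_inner_comm h, inner_sub_right, real_inner_comm h, real_inner_comm h]
  ring

lemma testFn_tderiv {n : ℕ} (p : ℝ) (q : EucSp n) (Y : Matrix (Fin n) (Fin n) ℝ)
    (a δ t : ℝ) (hδ : 0 < δ) (x : EucSp n) (s : ℝ) (y : EucSp n) :
    tderiv (testFn p q Y a δ t x) s y = p + a * ((s - t) / √((s - t) ^ 2 + δ ^ 2)) :=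
  (testFn_hasDerivAt p q Y a δ t hδ x s y).deriv

lemma testFn_xgrad {n : ℕ} (p : ℝ) (q : EucSp n) (Y : Matrix (Fin n) (Fin n) ℝ)
    (hY : Y.IsSymm) (a δ t : ℝ) (x : EucSp n) (s : ℝ) (y : EucSp n) :
    xgrad (testFn p q Y a δ t x) s y = q + Matrix.toEuclideanCLM (𝕜 := ℝ) Y (y - x) :=
  (testFn_hasGradientAt p q Y hY a δ t x s y).gradient

lemma grad_hasFDerivAt {n : ℕ} (q : EucSp n) (Y : Matrix (Fin n) (Fin n) ℝ) (x y : EucSp n) :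
    HasFDerivAt (fun y => q + Matrix.toEuclideanCLM (𝕜 := ℝ) Y (y - x))
      (Matrix.toEuclideanCLM (𝕜 := ℝ) Y) y := by
  have h0 : HasFDerivAt (fun y : EucSp n => y - x) (ContinuousLinearMap.id ℝ (EucSp n)) y :=
    (hasFDerivAt_id y).sub_const x
  exact ((Matrix.toEuclideanCLM (𝕜 := ℝ) Y).hasFDerivAt.comp y h0).const_add q

lemma testFn_xhess {n : ℕ} (p : ℝ) (q : EucSp n) (Y : Matrix (Fin n) (Fin n) ℝ)
    (hY : Y.IsSymm) (a δ t : ℝ) (x : EucSp n) (s : ℝ) (y : EucSp n) :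
    xhess (testFn p q Y a δ t x) s y = Y := by
  ext i j
  unfold xhess
  simp only [testFn_xgrad p q Y hY]
  rw [(grad_hasFDerivAt q Y x y).fderiv]
  simp [Matrix.ofLp_toEuclideanCLM]

lemma testFn_continuous {n : ℕ} (p : ℝ) (q : EucSp n) (Y : Matrix (Fin n) (Fin n) ℝ)
    (a δ t : ℝ) (x : EucSp n) :
    Continuous (fun z : ℝ × EucSp n => testFn p q Y a δ t x z.1 z.2) := by
  unfold testFn
  fun_prop

lemma testFn_C12 {n : ℕ} (p : ℝ) (q : EucSp n) (Y : Matrix (Fin n) (Fin n) ℝ)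
    (hY : Y.IsSymm) (a δ t : ℝ) (hδ : 0 < δ) (x : EucSp n) (S : Set (ℝ × EucSp n)) :
    IsC12On (testFn p q Y a δ t x) S where
  cont := (testFn_continuous p q Y a δ t x).continuousOn
  diff_t z _ := (testFn_hasDerivAt p q Y a δ t hδ x z.1 z.2).differentiableAt
  cont_t := by
    simp only [testFn_tderiv p q Y a δ t hδ]
    refine Continuous.continuousOn ?_
    refine continuous_const.add (continuous_const.mul (Continuous.div ?_ ?_ ?_))
    · fun_prop
    · fun_prop
    · intro z
      exact (Real.sqrt_pos.2 (by positivity)).ne'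
  diff_x z _ := (testFn_hasGradientAt p q Y hY a δ t x z.1 z.2).differentiableAt
  diff_grad z _ := by
    simp only [testFn_xgrad p q Y hY]
    exact (grad_hasFDerivAt q Y x z.2).differentiableAt
  cont_grad := by
    simp only [testFn_xgrad p q Y hY]
    fun_prop
  cont_hess := by
    simp only [testFn_xhess p q Y hY]
    fun_prop

/-- **Stability of subsolutions under increasing limits**: if each `V_m` is a continuous
viscosity subsolution of `min{−∂ₜV_m − LV_m − f, V_m − MV_{m−1}} = 0`, the sequence is
nondecreasing and uniformly bounded, and `V = sup_m V_m` with usc envelope `V*`, then the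
subsolution inequality holds at every superjet of `V*` on `(0,T) × ℝⁿ`. -/
theorem subsolution_stability
    {n d : ℕ} (hn : 0 < n) (hd : 0 < d) (T : ℝ) (hT : 0 < T)
    (b : ℝ → EucSp n → EucSp n) (σ : ℝ → EucSp n → Matrix (Fin n) (Fin d) ℝ)
    (f : ℝ → EucSp n → ℝ)
    -- (H1)
    (hb_cont : Continuous fun p : ℝ × EucSp n => b p.1 p.2)
    (hσ_cont : Continuous fun p : ℝ × EucSp n => σ p.1 p.2)
    (hb_bdd : ∃ C, ∀ t x, ‖b t x‖ ≤ C)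
    (hσ_bdd : ∃ C, ∀ t x i j, |σ t x i j| ≤ C)
    (hlip : ∃ C > (0:ℝ), ∀ t ∈ Set.Icc (0:ℝ) T, ∀ x x' : EucSp n,
      ‖b t x - b t x'‖ + (∑ i, ∑ j, |σ t x i j - σ t x' i j|) ≤ C * ‖x - x'‖)
    -- (H2)
    (hf_bdd : ∃ C, ∀ t x, |f t x| ≤ C)
    (hf_uc : UniformContinuousOn (fun p : ℝ × EucSp n => f p.1 p.2)
      (Set.Icc 0 T ×ˢ Set.univ))
    -- (H3)
    (K : Set (EucSp n)) (hK : K.Nonempty) (hKcomp : IsCompact K)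
    (c : ℝ → EucSp n → EucSp n → ℝ)
    (hc_uc : UniformContinuousOn (fun p : ℝ × EucSp n × EucSp n => c p.1 p.2.1 p.2.2)
      (Set.Icc 0 T ×ˢ Set.univ ×ˢ K))
    (k : ℝ) (hk : 0 < k) (hck : ∀ t x, ∀ ξ ∈ K, k ≤ c t x ξ)
    -- the nondecreasing, uniformly bounded sequence of continuous subsolutions
    (Vseq : ℕ → ℝ → EucSp n → ℝ)
    (hV_cont : ∀ m, ContinuousOn (fun p : ℝ × EucSp n => Vseq m p.1 p.2)
      (Set.Icc 0 T ×ˢ Set.univ))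
    (hV_mono : ∀ m t x, Vseq m t x ≤ Vseq (m + 1) t x)
    (hV_bdd : ∃ C, ∀ m t x, |Vseq m t x| ≤ C)
    (hV_sub : ∀ m : ℕ, 1 ≤ m → ∀ t₀ x₀, (t₀, x₀) ∈ pdom T n →
      ∀ φ : ℝ → EucSp n → ℝ, IsC12On φ (pdom T n) →
      IsLocalMaxOn (fun p : ℝ × EucSp n => Vseq m p.1 p.2 - φ p.1 p.2) (pdom T n) (t₀, x₀) →
      min (-(tderiv φ t₀ x₀) - Lop b σ φ t₀ x₀ - f t₀ x₀)
          (Vseq m t₀ x₀ - Mop K c (Vseq (m - 1)) t₀ x₀) ≤ 0)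
    -- the pointwise limit and its usc envelope
    (V : ℝ → EucSp n → ℝ) (hV : V = fun t x => ⨆ m, Vseq m t x)
    (Vstar : ℝ → EucSp n → ℝ)
    (hVstar : Vstar = fun t x =>
      limsup (fun p : ℝ × EucSp n => V p.1 p.2) (𝓝 (t, x))) :
    ∀ t x, (t, x) ∈ Set.Ioo (0:ℝ) T ×ˢ (Set.univ : Set (EucSp n)) →
      ∀ p : ℝ, ∀ q : EucSp n, ∀ X : Matrix (Fin n) (Fin n) ℝ,
      InSuperjet Vstar t x p q X →
      min (-p - ⟪b t x, q⟫ - (1/2) * (σ t x * (σ t x)ᵀ * X).trace - f t x)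
          (Vstar t x - Mop K c Vstar t x) ≤ 0 := by
  rintro t x ⟨⟨ht0, htT⟩, -⟩ p q X ⟨hX, hjet⟩
  dsimp only at ht0 htT
  by_contra hcon
  rw [not_le, lt_min_iff] at hcon
  obtain ⟨hA, hB⟩ := hcon
  obtain ⟨C, hC⟩ := hV_bdd
  -- basic facts on V and its envelope
  have hVseq_bdd : ∀ s y, BddAbove (Set.range fun m => Vseq m s y) := fun s y =>
    ⟨C, by rintro _ ⟨m, rfl⟩; exact (abs_le.1 (hC m s y)).2⟩
  have hVm_le : ∀ m s y, Vseq m s y ≤ V s y := fun m s y => by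
    rw [hV]; exact le_ciSup (hVseq_bdd s y) m
  have hV_le : ∀ s y, V s y ≤ C := fun s y => by
    rw [hV]; exact ciSup_le fun m => (abs_le.1 (hC m s y)).2
  have hV_ge : ∀ s y, -C ≤ V s y := fun s y =>
    (abs_le.1 (hC 0 s y)).1.trans (hVm_le 0 s y)
  have hbdd : ∀ F : Filter (ℝ × EucSp n),
      F.IsBoundedUnder (· ≤ ·) (fun z : ℝ × EucSp n => V z.1 z.2) := fun F =>
    isBoundedUnder_of ⟨C, fun z => hV_le _ _⟩
  have hbdd' : ∀ F : Filter (ℝ × EucSp n),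
      F.IsBoundedUnder (· ≥ ·) (fun z : ℝ × EucSp n => V z.1 z.2) := fun F =>
    isBoundedUnder_of ⟨-C, fun z => hV_ge _ _⟩
  have hVS : ∀ s y, Vstar s y = limsup (fun p : ℝ × EucSp n => V p.1 p.2) (𝓝 (s, y)) :=
    fun s y => by rw [hVstar]
  have husc0 : ∀ s y r, Vstar s y < r → ∀ᶠ z : ℝ × EucSp n in 𝓝 (s, y), V z.1 z.2 < r := by
    intro s y r hr
    rw [hVS] at hr
    exact eventually_lt_of_limsup_lt hr (hbdd _)
  have hVVs : ∀ s y, V s y ≤ Vstar s y := by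
    intro s y
    refine le_of_forall_gt fun r hr => ?_
    exact (husc0 s y r hr).self_of_nhds
  have hVs_le : ∀ s y r, (∀ᶠ z : ℝ × EucSp n in 𝓝 (s, y), V z.1 z.2 < r) → Vstar s y ≤ r := by
    intro s y r h
    rw [hVS]
    exact limsup_le_of_le (hbdd' _).isCoboundedUnder_le (h.mono fun z hz => hz.le)
  have husc : ∀ s y r, Vstar s y < r →
      ∀ᶠ z : ℝ × EucSp n in 𝓝 (s, y), Vstar z.1 z.2 < r := by
    intro s y r hr
    obtain ⟨r', h1, h2⟩ := exists_between hr
    filter_upwards [(husc0 s y r' h1).eventually_nhds] with z hz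
    exact (hVs_le z.1 z.2 r' hz).trans_lt h2
  have hVsC : ∀ s y, Vstar s y ≤ C + 1 := fun s y =>
    hVs_le s y _ (Eventually.of_forall fun z => (hV_le _ _).trans_lt (by linarith))
  have htI : Set.Icc (0:ℝ) T ∈ 𝓝 t := Icc_mem_nhds ht0 htT
  -- upper semicontinuity of the intervention operator
  obtain ⟨η, hη, hηB⟩ : ∃ η > 0, Mop K c Vstar t x + 2 * η = Vstar t x :=
    ⟨(Vstar t x - Mop K c Vstar t x) / 2, by linarith, by ring⟩
  set M := Mop K c Vstar t x with hM
  have hMξ : ∀ ξ ∈ K, Vstar t (x + ξ) - c t x ξ ≤ M := by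
    intro ξ hξ
    refine le_csSup ⟨C + 1 - k, ?_⟩ ⟨ξ, hξ, rfl⟩
    rintro _ ⟨ξ', hξ', rfl⟩
    have := hVsC t (x + ξ')
    have := hck t x ξ' hξ'
    dsimp only
    linarith
  have hMev : ∀ᶠ z : ℝ × EucSp n in 𝓝 (t, x), ∀ ξ ∈ K, ξ ∈ K →
      Vstar z.1 (z.2 + ξ) - c z.1 z.2 ξ < M + η := by
    apply hKcomp.eventually_forall_of_forall_eventually
    intro ξ hξ
    have hc1 := hc_uc.continuousOn (t, x, ξ)
      ⟨⟨ht0.le, htT.le⟩, Set.mem_univ _, hξ⟩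
    have hc2 : ∀ᶠ w : ℝ × EucSp n × EucSp n in 𝓝 (t, x, ξ),
        w ∈ (Set.Icc (0:ℝ) T ×ˢ (Set.univ : Set (EucSp n)) ×ˢ K) →
        c t x ξ - η / 2 < c w.1 w.2.1 w.2.2 := by
      rw [← eventually_nhdsWithin_iff]
      exact hc1.eventually (lt_mem_nhds (by dsimp only; linarith))
    have hm1 : Tendsto (fun w : (ℝ × EucSp n) × EucSp n => (w.1.1, w.1.2, w.2))
        (𝓝 ((t, x), ξ)) (𝓝 (t, x, ξ)) := by
      apply Continuous.tendsto' (by fun_prop); rfl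
    have hm2 : Tendsto (fun w : (ℝ × EucSp n) × EucSp n => (w.1.1, w.1.2 + w.2))
        (𝓝 ((t, x), ξ)) (𝓝 (t, x + ξ)) := by
      apply Continuous.tendsto' (by fun_prop); rfl
    have hm3 : Tendsto (fun w : (ℝ × EucSp n) × EucSp n => w.1.1)
        (𝓝 ((t, x), ξ)) (𝓝 t) := by
      apply Continuous.tendsto' (by fun_prop); rfl
    filter_upwards [hm1.eventually hc2, hm3.eventually htI,
      hm2.eventually (husc t (x + ξ) (Vstar t (x + ξ) + η / 2) (by linarith))] with w h1 h2 h3 h4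
    have h5 := h1 ⟨h2, Set.mem_univ _, h4⟩
    have h6 := hMξ ξ hξ
    linarith
  -- the differential part
  have hG : ∀ᶠ w : ℝ × (ℝ × EucSp n) in 𝓝 (0, (t, x)),
      0 < -p - w.1 - ⟪b w.2.1 w.2.2, q + (Matrix.toEuclideanCLM (𝕜 := ℝ) X (w.2.2 - x)
          + (2 * w.1) • (w.2.2 - x))⟫
        - (1/2) * (σ w.2.1 w.2.2 * (σ w.2.1 w.2.2)ᵀ
            * (X + (2 * w.1) • (1 : Matrix (Fin n) (Fin n) ℝ))).trace - f w.2.1 w.2.2 := by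
    have hf : ContinuousAt (fun z : ℝ × EucSp n => f z.1 z.2) (t, x) :=
      hf_uc.continuousOn.continuousAt (prod_mem_nhds htI univ_mem)
    have hf' : ContinuousAt (fun w : ℝ × (ℝ × EucSp n) => f w.2.1 w.2.2) (0, (t, x)) :=
      ContinuousAt.comp (f := fun w : ℝ × (ℝ × EucSp n) => w.2)
        (g := fun z : ℝ × EucSp n => f z.1 z.2) hf continuousAt_snd
    have hb' : Continuous (fun w : ℝ × (ℝ × EucSp n) => b w.2.1 w.2.2) :=
      hb_cont.comp continuous_snd
    have hσ' : Continuous (fun w : ℝ × (ℝ × EucSp n) => σ w.2.1 w.2.2) :=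
      hσ_cont.comp continuous_snd
    have h1 : Continuous (fun w : ℝ × (ℝ × EucSp n) =>
        -p - w.1 - ⟪b w.2.1 w.2.2, q + (Matrix.toEuclideanCLM (𝕜 := ℝ) X (w.2.2 - x)
          + (2 * w.1) • (w.2.2 - x))⟫
        - (1/2) * (σ w.2.1 w.2.2 * (σ w.2.1 w.2.2)ᵀ
            * (X + (2 * w.1) • (1 : Matrix (Fin n) (Fin n) ℝ))).trace) := by
      have h2 : Continuous (fun w : ℝ × (ℝ × EucSp n) =>
          (σ w.2.1 w.2.2 * (σ w.2.1 w.2.2)ᵀ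
            * (X + (2 * w.1) • (1 : Matrix (Fin n) (Fin n) ℝ))).trace) := by
        refine Continuous.matrix_trace (Continuous.matrix_mul
          (Continuous.matrix_mul hσ' hσ'.matrix_transpose) ?_)
        fun_prop
      fun_prop
    refine (h1.continuousAt.sub hf').eventually (lt_mem_nhds ?_)
    simpa using hA
  rw [nhds_prod_eq] at hG
  obtain ⟨Pa, hPa, Pz, hPz, hPP⟩ := eventually_prod_iff.1 hG
  obtain ⟨a, haP, ha⟩ : ∃ a, Pa a ∧ 0 < a :=
    ((hPa.filter_mono nhdsWithin_le_nhds).and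
      (self_mem_nhdsWithin : Set.Ioi (0:ℝ) ∈ 𝓝[>] 0)).exists
  set Y := X + (2 * a) • (1 : Matrix (Fin n) (Fin n) ℝ) with hYdef
  have hY : Y.IsSymm := by
    rw [hYdef]; exact hX.add (Matrix.isSymm_one.smul _)
  have hYin : ∀ v : EucSp n, ⟪Matrix.toEuclideanCLM (𝕜 := ℝ) Y v, v⟫
      = qform X v + 2 * a * ‖v‖ ^ 2 := by
    intro v
    rw [hYdef, toCLM_add_smul, inner_add_left, qform_eq_inner, real_inner_smul_left,
      real_inner_self_eq_norm_sq]
  -- the neighbourhood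
  have hψ0 : ∀ᶠ z : ℝ × EucSp n in 𝓝 (t, x), |testFn p q Y a 0 t x z.1 z.2| < η / 2 := by
    have h : Continuous fun z : ℝ × EucSp n => |testFn p q Y a 0 t x z.1 z.2| :=
      (testFn_continuous p q Y a 0 t x).abs
    refine h.continuousAt.eventually (gt_mem_nhds ?_)
    simp [testFn, hη]
  have htev : ∀ᶠ z : ℝ × EucSp n in 𝓝 (t, x), z.1 ∈ Set.Ioo 0 T :=
    continuousAt_fst.eventually (Ioo_mem_nhds ht0 htT)
  obtain ⟨r, hr, hrN⟩ := Metric.nhds_basis_closedBall.eventually_iff.1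
    (htev.and (hψ0.and (hMev.and (hPz.and (hjet (a / 2) (by linarith))))))
  -- small parameter
  obtain ⟨θ, hθ, hθη, hθr, hθr2⟩ : ∃ θ > 0, 4 * θ ≤ η / 2 ∧ 4 * θ < a / 2 * r
      ∧ 4 * θ < a / 2 * r ^ 2 := by
    have h1 : 0 < a / 2 * r := by positivity
    have h2 : 0 < a / 2 * r ^ 2 := by positivity
    refine ⟨min (η / 2) (min (a / 2 * r) (a / 2 * r ^ 2)) / 8, by positivity, ?_, ?_, ?_⟩
    · have := min_le_left (η / 2) (min (a / 2 * r) (a / 2 * r ^ 2))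
      linarith
    · have := (min_le_right (η / 2) (min (a / 2 * r) (a / 2 * r ^ 2))).trans (min_le_left _ _)
      linarith
    · have := (min_le_right (η / 2) (min (a / 2 * r) (a / 2 * r ^ 2))).trans (min_le_right _ _)
      linarith
  -- a good comparison point
  have hfreq : ∃ᶠ z : ℝ × EucSp n in 𝓝 (t, x), Vstar t x - θ < V z.1 z.2 := by
    refine frequently_lt_of_lt_limsup (hbdd' _).isCoboundedUnder_le ?_
    rw [← hVS]; linarith
  have hψθ : ∀ᶠ z : ℝ × EucSp n in 𝓝 (t, x), testFn p q Y a 0 t x z.1 z.2 < θ := by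
    refine (testFn_continuous p q Y a 0 t x).continuousAt.eventually (gt_mem_nhds ?_)
    simp [testFn, hθ]
  obtain ⟨z₁, hz₁V, hz₁ψ, hz₁N⟩ :=
    (hfreq.and_eventually (hψθ.and (Metric.closedBall_mem_nhds (t, x) hr))).exists
  obtain ⟨m₀, hm₀⟩ : ∃ m, Vstar t x - θ < Vseq m z₁.1 z₁.2 := by
    rw [hV] at hz₁V
    exact exists_lt_of_lt_ciSup hz₁V
  set m := m₀ + 1 with hmdef
  have hm : Vstar t x - θ < Vseq m z₁.1 z₁.2 := hm₀.trans_le (hV_mono _ _ _)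
  set δ := θ / a with hδdef
  have hδ : 0 < δ := by positivity
  have haδ : a * δ = θ := by rw [hδdef]; field_simp
  have hψle : ∀ s y, testFn p q Y a δ t x s y ≤ testFn p q Y a 0 t x s y + θ := by
    intro s y
    have : √((s - t) ^ 2 + δ ^ 2) ≤ √((s - t) ^ 2 + 0 ^ 2) + δ := by
      refine Real.sqrt_le_iff.2 ⟨by positivity, ?_⟩
      have := Real.sq_sqrt (show 0 ≤ (s - t) ^ 2 + 0 ^ 2 by positivity)
      nlinarith [Real.sqrt_nonneg ((s - t) ^ 2 + 0 ^ 2)]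
    have := mul_le_mul_of_nonneg_left this ha.le
    rw [mul_add, haδ] at this
    unfold testFn
    rw [add_assoc _ _ θ]
    exact add_le_add le_rfl this
  have hψge : ∀ s y, testFn p q Y a 0 t x s y ≤ testFn p q Y a δ t x s y := by
    intro s y
    have : √((s - t) ^ 2 + 0 ^ 2) ≤ √((s - t) ^ 2 + δ ^ 2) := by
      apply Real.sqrt_le_sqrt
      nlinarith
    have := mul_le_mul_of_nonneg_left this ha.le
    unfold testFn
    exact add_le_add le_rfl this
  -- the maximum point
  have hsub : Metric.closedBall (t, x) r ⊆ Set.Icc (0:ℝ) T ×ˢ (Set.univ : Set (EucSp n)) :=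
    fun z hz => ⟨Set.Ioo_subset_Icc_self (hrN hz).1, Set.mem_univ _⟩
  obtain ⟨z, hzN, hzmax⟩ := (isCompact_closedBall (t, x) r).exists_isMaxOn
    ⟨z₁, hz₁N⟩ (((hV_cont m).mono hsub).sub
      (testFn_continuous p q Y a δ t x).continuousOn)
  obtain ⟨hzT, hzψ, hzM, hzP, hzjet⟩ := hrN hzN
  have hcmp : Vseq m z₁.1 z₁.2 - testFn p q Y a δ t x z₁.1 z₁.2
      ≤ Vseq m z.1 z.2 - testFn p q Y a δ t x z.1 z.2 := hzmax hz₁N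
  have hVz : Vseq m z.1 z.2 ≤ Vstar z.1 z.2 := (hVm_le _ _ _).trans (hVVs _ _)
  have hval : testFn p q Y a 0 t x z.1 z.2 = p * (z.1 - t) + ⟪q, z.2 - x⟫
      + (1 / 2) * qform X (z.2 - x) + a * (|z.1 - t| + ‖z.2 - x‖ ^ 2) := by
    unfold testFn
    rw [hYin]
    simp only [ne_eq, OfNat.ofNat_ne_zero, not_false_eq_true, zero_pow, add_zero,
      Real.sqrt_sq_eq_abs]
    ring
  have h1 := hψle z₁.1 z₁.2
  have h2 := hψge z.1 z.2
  have hsmall : a / 2 * (|z.1 - t| + ‖z.2 - x‖ ^ 2) ≤ 3 * θ := by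
    linarith
  have hball : z ∈ Metric.ball (t, x) r := by
    have e1 : |z.1 - t| < r := by
      have : a / 2 * |z.1 - t| < a / 2 * r := by
        have : 0 ≤ a / 2 * ‖z.2 - x‖ ^ 2 := by positivity
        linarith
      exact lt_of_mul_lt_mul_left this (by positivity)
    have e2 : ‖z.2 - x‖ < r := by
      have : a / 2 * ‖z.2 - x‖ ^ 2 < a / 2 * r ^ 2 := by
        have : 0 ≤ a / 2 * |z.1 - t| := by positivity
        linarith
      exact lt_of_pow_lt_pow_left₀ 2 hr.le (lt_of_mul_lt_mul_left this (by positivity))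
    rw [Metric.mem_ball, Prod.dist_eq, max_lt_iff, Real.dist_eq, dist_eq_norm]
    exact ⟨e1, e2⟩
  have hlm : IsLocalMaxOn (fun w : ℝ × EucSp n => Vseq m w.1 w.2
      - testFn p q Y a δ t x w.1 w.2) (pdom T n) (z.1, z.2) := by
    refine IsLocalMax.on ?_ _
    exact hzmax.isLocalMax
      (mem_of_superset (Metric.isOpen_ball.mem_nhds hball) Metric.ball_subset_closedBall)
  have hfin := hV_sub m (by omega) z.1 z.2 ⟨⟨hzT.1.le, hzT.2⟩, Set.mem_univ _⟩
    (testFn p q Y a δ t x) (testFn_C12 p q Y hY a δ t hδ x _) hlm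
  refine absurd hfin (not_le.2 (lt_min ?_ ?_))
  · have hg := hPP haP hzP
    dsimp only at hg
    have hfrac : (z.1 - t) / √((z.1 - t) ^ 2 + δ ^ 2) ≤ 1 := by
      refine div_le_one_of_le₀ ?_ (Real.sqrt_nonneg _)
      refine Real.le_sqrt_of_sq_le ?_
      nlinarith
    have := mul_le_mul_of_nonneg_left hfrac ha.le
    unfold Lop
    rw [testFn_tderiv p q Y a δ t hδ, testFn_xgrad p q Y hY, testFn_xhess p q Y hY,
      hYdef, toCLM_add_smul]
    linarith
  · have hMle : Mop K c (Vseq (m - 1)) z.1 z.2 ≤ M + η := by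
      refine csSup_le (hK.image _) ?_
      rintro _ ⟨ξ, hξ, rfl⟩
      have := hzM ξ hξ hξ
      have := (hVm_le (m - 1) z.1 (z.2 + ξ)).trans (hVVs _ _)
      dsimp only
      linarith
    have := (abs_lt.1 hzψ).1
    linarith
end
end
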